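/- Let d ≥ 3 be odd and let P ⊆ ℝ^d be a d-dimensional simplicial reflexive polytope with exactly 3d−1 vertices. Then P splits into (d−3)/2 copies of V2 and one copy of one of the two 3-polytopes Q3, Q3'. -/

import Mathlib

noncomputable section

/-- The standard inner product on `ℝ^d`. -/
def dotp {d : ℕ} (x y : Fin d → ℝ) : ℝ := ∑ i, x i * y i

/-- `x` is a point of the lattice `ℤ^d`. -/
def IsLP {d : ℕ} (x : Fin d → ℝ) : Prop := ∀ i, ∃ n : ℤ, x i = (n : ℝ)

/-- A lattice polytope: convex hull of finitely many lattice points. -/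
def IsLatticePolytope {d : ℕ} (P : Set (Fin d → ℝ)) : Prop :=
  ∃ V : Finset (Fin d → ℝ), (∀ v ∈ V, IsLP v) ∧ P = convexHull ℝ (V : Set (Fin d → ℝ))

/-- The dual polytope `P* = {x | ⟨x,y⟩ ≤ 1 ∀ y ∈ P}`. -/
def dualPolytope {d : ℕ} (P : Set (Fin d → ℝ)) : Set (Fin d → ℝ) :=
  {x | ∀ y ∈ P, dotp x y ≤ 1}

/-- `P` is a reflexive polytope: a (`d`-dimensional) lattice polytope with `0` in its
interior whose dual is again a lattice polytope. -/
def IsReflexive {d : ℕ} (P : Set (Fin d → ℝ)) : Prop :=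
  IsLatticePolytope P ∧ (0 : Fin d → ℝ) ∈ interior P ∧ IsLatticePolytope (dualPolytope P)

/-- `F` is a facet of `P` with (uniquely determined) outer normal `u`, normalized by
`⟨u, F⟩ = 1` (possible since `0` is in the interior of `P`). -/
def IsFacetNormal {d : ℕ} (P F : Set (Fin d → ℝ)) (u : Fin d → ℝ) : Prop :=
  F.Nonempty ∧ (∀ y ∈ P, dotp u y ≤ 1) ∧ F = {y ∈ P | dotp u y = 1} ∧
    Module.finrank ℝ (vectorSpan ℝ F) = d - 1

/-- `F` is a facet of `P`. -/
def IsFacet {d : ℕ} (P F : Set (Fin d → ℝ)) : Prop := ∃ u, IsFacetNormal P F u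

/-- `P` is simplicial: every facet has exactly `d` vertices. -/
def IsSimplicial {d : ℕ} (P : Set (Fin d → ℝ)) : Prop :=
  ∀ F, IsFacet P F → (Set.extremePoints ℝ F).ncard = d

/-- Vertices of the hexagon `V₂`. -/
def V2v : Set (Fin 2 → ℤ) := {![1,0], ![0,1], ![1,1], ![-1,0], ![0,-1], ![-1,-1]}

/-- Vertices of the pentagon `Ṽ₂`. -/
def tV2v : Set (Fin 2 → ℤ) := {![1,0], ![0,1], ![1,1], ![-1,0], ![0,-1]}

/-- Vertices of the pentagon `E₁`. -/
def E1v : Set (Fin 2 → ℤ) := {![1,0], ![-1,2], ![-1,1], ![0,-1], ![1,-1]}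

/-- Vertices of the pentagon `E₂`. -/
def E2v : Set (Fin 2 → ℤ) := {![1,0], ![0,1], ![-1,1], ![-1,-1], ![1,-1]}

/-- Vertices of the 3-polytope `Q₃`. -/
def Q3v : Set (Fin 3 → ℤ) :=
  {![1,0,0], ![-1,0,0], ![0,1,0], ![0,-1,0], ![1,1,0], ![-1,-1,0], ![0,0,1], ![0,0,-1]}

/-- Vertices of the 3-polytope `Q₃'`. -/
def Q3'v : Set (Fin 3 → ℤ) :=
  {![1,0,0], ![-1,0,0], ![0,1,0], ![0,-1,0], ![1,1,0], ![-1,-1,0], ![0,0,1], ![1,0,-1]}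

/-- Embed `ℤ²` into coordinates `o, o+1` of `ℝ^d`. -/
def embed2 (d o : ℕ) (v : Fin 2 → ℤ) : Fin d → ℝ :=
  fun i => if (i : ℕ) = o then (v 0 : ℝ) else if (i : ℕ) = o + 1 then (v 1 : ℝ) else 0

/-- Embed `ℤ³` into coordinates `0, 1, 2` of `ℝ^d`. -/
def embed3 (d : ℕ) (v : Fin 3 → ℤ) : Fin d → ℝ :=
  fun i => if (i : ℕ) = 0 then (v 0 : ℝ) else if (i : ℕ) = 1 then (v 1 : ℝ)
    else if (i : ℕ) = 2 then (v 2 : ℝ) else 0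

/-- Standard model of a polytope in `ℝ^d` that splits into a polygon with vertex set `Q`
(in coordinates `0,1`) and `(d-2)/2` copies of `V₂` (in the remaining coordinate pairs). -/
def splitModel2 (d : ℕ) (Q : Set (Fin 2 → ℤ)) : Set (Fin d → ℝ) :=
  convexHull ℝ (embed2 d 0 '' Q ∪ ⋃ j ∈ Finset.range ((d - 2) / 2), embed2 d (2 * j + 2) '' V2v)

/-- Standard model of a polytope in `ℝ^d` that splits into a 3-polytope with vertex set `Q`
(in coordinates `0,1,2`) and `(d-3)/2` copies of `V₂` (in the remaining coordinate pairs). -/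
def splitModel3 (d : ℕ) (Q : Set (Fin 3 → ℤ)) : Set (Fin d → ℝ) :=
  convexHull ℝ (embed3 d '' Q ∪ ⋃ j ∈ Finset.range ((d - 3) / 2), embed2 d (2 * j + 3) '' V2v)

/-- Standard model of a polytope in `ℝ^d` that splits into `d/2` copies of `V₂`. -/
def splitModelV2 (d : ℕ) : Set (Fin d → ℝ) :=
  convexHull ℝ (⋃ j ∈ Finset.range (d / 2), embed2 d (2 * j) '' V2v)

/-- `φ` is a unimodular transformation: a linear automorphism of `ℝ^d` mapping the lattice
`ℤ^d` onto itself. `P` splits into given polytopes iff some unimodular transformation maps `P`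
onto the corresponding standard model. -/
def Unimodular {d : ℕ} (φ : (Fin d → ℝ) ≃ₗ[ℝ] (Fin d → ℝ)) : Prop :=
  ∀ x, IsLP x ↔ IsLP (φ x)

/-!
Fix a facet `F` and sort the vertices by their height over `F`, the value of its normal. The facet
itself is the level `1`, and every vertex of height `0` is opposite to some vertex `v` of `F`, that
is, it is the new vertex of the neighboring facet across the ridge that omits `v`; so level `0` has
at most `d` elements. With `3d - 1` vertices this bounds the height of the vertex sum from above.

If the vertex sum is not zero, take a *special* facet `F` (Øbro), one whose cone contains the vertex
sum. Then the bound forces the levels `1`, `0`, `-1` to have `d`, `d`, `d - 1` elements. Either the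
vertex sum is a vertex `a` of `F` and all opposite vertices have the form `σ v - v`, or it is the
midpoint of two vertices of `F`; in the second case the remaining vertices of `F` are paired up, so
`d` is even. In the first case `σ` is an involution except at one vertex, because `d` is odd.

If the vertex sum is zero, some unimodular facet has levels `1`, `0`, `-1` with `d`, `d - 1`, `d`
elements, and no two of its vertices have the same opposite vertex. Hence the opposite vertices are
again `σ v - v`, except for one vertex `c`. Either `opp c = -c` and `σ` is an involution of the
others, or `opp c = a - 2c`, and then pairing the vertices of the facet shows that `d` is even.

In both cases the vertices of a unimodular facet other than some `c` are paired by an involution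
`σ`, each pair `{t, σ t}` spans a hexagon `±t, ±σ t, ±(σ t - t)`, and the two vertices that remain
are `c` and `-c` or `c` and `a - c`. The lattice basis formed by `c` and by `t, σ t - t` for one `t`
of each pair splits the polytope.
-/

section

open scoped Classical

/-! ### Facets, heights and neighbors -/

section

/-- The integers as a subring of `ℝ`: integrality of a real number is expressed as membership, so
that its closure properties come from the `Subring` API. -/
abbrev realInt : Subring ℝ := (Int.castRingHom ℝ).range

namespace realInt

theorem add_one_le_of_lt {a b : ℝ} (ha : a ∈ realInt) (hb : b ∈ realInt) (h : a < b) :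
    a + 1 ≤ b := by
  obtain ⟨m, rfl⟩ := ha
  obtain ⟨n, rfl⟩ := hb
  simp only [eq_intCast] at h ⊢
  exact_mod_cast h

theorem one_le_of_pos {a : ℝ} (ha : a ∈ realInt) (h : 0 < a) : 1 ≤ a := by
  linarith [add_one_le_of_lt (zero_mem _) ha h]

theorem nonpos_of_lt_one {a : ℝ} (ha : a ∈ realInt) (h : a < 1) : a ≤ 0 := by
  linarith [add_one_le_of_lt ha (one_mem _) h]

theorem le_neg_one_of_neg {a : ℝ} (ha : a ∈ realInt) (h : a < 0) : a ≤ -1 := by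
  linarith [add_one_le_of_lt ha (zero_mem _) h]

theorem nonneg_of_neg_one_lt {a : ℝ} (ha : a ∈ realInt) (h : -1 < a) : 0 ≤ a := by
  linarith [add_one_le_of_lt (neg_mem (one_mem _)) ha h]

theorem two_le_of_one_lt {a : ℝ} (ha : a ∈ realInt) (h : 1 < a) : 2 ≤ a := by
  linarith [add_one_le_of_lt (one_mem _) ha h]

end realInt

section FiniteSums

variable {ι : Type*} {T : Finset ι} {f : ι → ℝ}

theorem exists_unique_one_of_sum_eq_one (h0 : ∀ v ∈ T, 0 ≤ f v) (hf : ∀ v ∈ T, f v ∈ realInt)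
    (hs : ∑ v ∈ T, f v = 1) : ∃ p ∈ T, f p = 1 ∧ ∀ q ∈ T, q ≠ p → f q = 0 := by
  obtain ⟨p, hp, hpos⟩ : ∃ p ∈ T, 0 < f p := by
    by_contra! h
    linarith [Finset.sum_nonpos h]
  have h0' : ∀ q ∈ T.erase p, 0 ≤ f q := fun q hq => h0 q (Finset.mem_of_mem_erase hq)
  have hsplit := Finset.add_sum_erase T f hp
  have hrest := Finset.sum_nonneg h0'
  have hp1 := realInt.one_le_of_pos (hf p hp) hpos
  refine ⟨p, hp, by linarith, fun q hq hqp => ?_⟩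
  have : ∑ q ∈ T.erase p, f q = 0 := by linarith
  exact (Finset.sum_eq_zero_iff_of_nonneg h0').1 this q (Finset.mem_erase.2 ⟨hqp, hq⟩)

theorem exists_add_of_sum_eq_two (h0 : ∀ v ∈ T, 0 ≤ f v) (hf : ∀ v ∈ T, f v ∈ realInt)
    (hs : ∑ v ∈ T, f v = 2) :
    ∃ p ∈ T, ∃ q ∈ T, ∀ r ∈ T, f r = (if r = p then 1 else 0) + (if r = q then 1 else 0) := by
  obtain ⟨p, hp, hpos⟩ : ∃ p ∈ T, 0 < f p := by
    by_contra! h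
    linarith [Finset.sum_nonpos h]
  have hp1 := realInt.one_le_of_pos (hf p hp) hpos
  obtain ⟨q, hq, hq1, hq0⟩ :=
    exists_unique_one_of_sum_eq_one (T := T) (f := fun r => f r - if r = p then 1 else 0)
      (fun v hv => by
        split_ifs with h
        · subst h; linarith
        · simpa using h0 v hv)
      (fun v hv => by
        refine sub_mem (hf v hv) ?_
        split_ifs
        exacts [one_mem _, zero_mem _])
      (by rw [Finset.sum_sub_distrib, hs, Finset.sum_ite_eq' T p, if_pos hp]; norm_num)
  refine ⟨p, hp, q, hq, fun r hr => ?_⟩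
  by_cases hrq : r = q
  · subst hrq; simp only [if_true]; linarith
  · have := hq0 r hr hrq
    simp only [hrq, if_false]; linarith

end FiniteSums

section Involutions

variable {α : Type*} {T : Finset α} {τ : α → α}

theorem exists_transversal_of_involution (hT : ∀ t ∈ T, τ t ∈ T) (hττ : ∀ t ∈ T, τ (τ t) = t)
    (hfix : ∀ t ∈ T, τ t ≠ t) :
    ∃ R ⊆ T, T.card = 2 * R.card ∧ ∀ t ∈ T, t ∈ R ∨ ∃ r ∈ R, t = τ r := by
  induction T using Finset.strongInduction with
  | H T ih =>
    rcases T.eq_empty_or_nonempty with rfl | ⟨t, ht⟩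
    · exact ⟨∅, by simp⟩
    set T' := (T.erase t).erase (τ t)
    have hmem : ∀ s, s ∈ T' ↔ s ≠ τ t ∧ s ≠ t ∧ s ∈ T := fun s => by
      simp only [T', Finset.mem_erase]
    have hstable : ∀ s ∈ T', τ s ∈ T' := by
      intro s hs
      obtain ⟨hs1, hs2, hsT⟩ := (hmem s).1 hs
      refine (hmem _).2 ⟨fun h => hs2 ?_, fun h => hs1 ?_, hT s hsT⟩
      · rw [← hττ s hsT, h, hττ t ht]
      · rw [← hττ s hsT, h]
    obtain ⟨R, hR, hcard, hcover⟩ := ih T'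
      ((Finset.erase_subset _ _).trans_ssubset (Finset.erase_ssubset ht)) hstable
      (fun s hs => hττ s ((hmem s).1 hs).2.2) (fun s hs => hfix s ((hmem s).1 hs).2.2)
    have htR : t ∉ R := fun h => ((hmem t).1 (hR h)).2.1 rfl
    refine ⟨insert t R, ?_, ?_, fun s hs => ?_⟩
    · exact Finset.insert_subset ht fun s hs => ((hmem s).1 (hR hs)).2.2
    · have hτt : τ t ∈ T.erase t := Finset.mem_erase.2 ⟨hfix t ht, hT t ht⟩
      have : T'.card + 1 = (T.erase t).card := Finset.card_erase_add_one hτt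
      have := Finset.card_erase_add_one ht
      rw [Finset.card_insert_of_notMem htR]
      omega
    · by_cases hst : s = t
      · exact Or.inl (hst ▸ Finset.mem_insert_self t R)
      by_cases hst' : s = τ t
      · exact Or.inr ⟨t, Finset.mem_insert_self t R, hst'⟩
      rcases hcover s ((hmem s).2 ⟨hst', hst, hs⟩) with h | ⟨r, hr, h⟩
      · exact Or.inl (Finset.mem_insert_of_mem h)
      · exact Or.inr ⟨r, Finset.mem_insert_of_mem hr, h⟩

theorem even_card_of_involution (hT : ∀ t ∈ T, τ t ∈ T) (hττ : ∀ t ∈ T, τ (τ t) = t)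
    (hfix : ∀ t ∈ T, τ t ≠ t) : Even T.card := by
  obtain ⟨R, -, hcard, -⟩ := exists_transversal_of_involution hT hττ hfix
  exact ⟨R.card, by omega⟩

end Involutions

/-- A simplicial facet of the polytope with vertex set `V`, recorded through its vertices and the
coordinates dual to them. The facet normal is the sum of the coordinates; it takes the value `1`
on the facet, is smaller on the other vertices, and is integral on the lattice `L`. -/
structure SimplicialFacet {E : Type*} [AddCommGroup E] [Module ℝ E] (V : Finset E)
    (L : AddSubgroup E) (d : ℕ) where
  verts : Finset E
  verts_subset : verts ⊆ V
  card_verts : verts.card = d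
  coord : E → E →ₗ[ℝ] ℝ
  coord_self : ∀ v ∈ verts, coord v v = 1
  coord_of_ne : ∀ v ∈ verts, ∀ w ∈ verts, v ≠ w → coord v w = 0
  sum_coord_smul : ∀ x, ∑ v ∈ verts, coord v x • v = x
  sum_coord_lt_one : ∀ x ∈ V, x ∉ verts → ∑ v ∈ verts, coord v x < 1
  sum_coord_mem : ∀ x ∈ L, ∑ v ∈ verts, coord v x ∈ realInt

variable {E : Type*} [AddCommGroup E] [Module ℝ E] {V : Finset E} {L : AddSubgroup E} {d : ℕ}

namespace SimplicialFacet

variable (F : SimplicialFacet V L d)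

/-- The normal of a facet, equal to `1` on it. Vertices are sorted by their height over `F`. -/
def height : E →ₗ[ℝ] ℝ := ∑ v ∈ F.verts, F.coord v

theorem height_apply (x : E) : F.height x = ∑ v ∈ F.verts, F.coord v x := by
  simp [height, LinearMap.sum_apply]

theorem coord_eq_ite {v w : E} (hv : v ∈ F.verts) (hw : w ∈ F.verts) :
    F.coord v w = if v = w then 1 else 0 := by
  split_ifs with h
  · exact h ▸ F.coord_self v hv
  · exact F.coord_of_ne v hv w hw h

theorem height_of_mem {v : E} (hv : v ∈ F.verts) : F.height v = 1 := by
  rw [height_apply, Finset.sum_congr rfl fun w hw => F.coord_eq_ite hw hv]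
  simp [hv]

theorem notMem_of_height_ne_one {x : E} (h : F.height x ≠ 1) : x ∉ F.verts :=
  fun hx => h (F.height_of_mem hx)

theorem height_mem {x : E} (hx : x ∈ L) : F.height x ∈ realInt := by
  rw [height_apply]; exact F.sum_coord_mem x hx

theorem ext_coord {x y : E} (h : ∀ v ∈ F.verts, F.coord v x = F.coord v y) : x = y := by
  rw [← F.sum_coord_smul x, ← F.sum_coord_smul y]
  exact Finset.sum_congr rfl fun v hv => by rw [h v hv]

theorem apply_eq_sum (f : E →ₗ[ℝ] ℝ) (x : E) : f x = ∑ v ∈ F.verts, F.coord v x * f v := by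
  conv_lhs => rw [← F.sum_coord_smul x]
  simp

theorem height_eq_add_sum_erase {v : E} (hv : v ∈ F.verts) (x : E) :
    F.height x = F.coord v x + ∑ w ∈ F.verts.erase v, F.coord w x := by
  rw [height_apply, Finset.add_sum_erase _ (fun w => F.coord w x) hv]

theorem height_lt_one {x : E} (hx : x ∈ V) (h : x ∉ F.verts) : F.height x < 1 := by
  rw [height_apply]; exact F.sum_coord_lt_one x hx h

theorem height_le_one {x : E} (hx : x ∈ V) : F.height x ≤ 1 := by
  by_cases h : x ∈ F.verts
  · rw [F.height_of_mem h]
  · exact (F.height_lt_one hx h).le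

theorem mem_of_height_eq_one {x : E} (hx : x ∈ V) (h : F.height x = 1) : x ∈ F.verts := by
  by_contra hxF
  exact (F.height_lt_one hx hxF).ne h

variable {F}

/-- `F'` is the neighbor of `F` across the ridge opposite to `v`, and `v'` is its new vertex. -/
def IsNeighbor (F : SimplicialFacet V L d) (v : E) (F' : SimplicialFacet V L d) (v' : E) : Prop :=
  v' ∉ F.verts ∧ ∀ x, x ∈ F'.verts ↔ x = v' ∨ (x ∈ F.verts ∧ x ≠ v)

namespace IsNeighbor

variable {F' F₁ F₂ : SimplicialFacet V L d} {v v' v₁ v₂ : E}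

theorem mem (h : F.IsNeighbor v F' v') : v' ∈ F'.verts := (h.2 v').2 (Or.inl rfl)

theorem notMem (hv : v ∈ F.verts) (h : F.IsNeighbor v F' v') : v ∉ F'.verts := fun hvF' =>
  ((h.2 v).1 hvF').elim (fun e => h.1 (e ▸ hv)) fun e => e.2 rfl

theorem symm (hv : v ∈ F.verts) (h : F.IsNeighbor v F' v') : F'.IsNeighbor v' F v := by
  refine ⟨h.notMem hv, fun x => ?_⟩
  have := h.1
  have := h.2 x
  by_cases hx : x = v <;> by_cases hx' : x = v' <;> simp_all

theorem height_eq (hv : v ∈ F.verts) (h : F.IsNeighbor v F' v') (x : E) :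
    F'.height x = F.height x - (1 - F'.height v) * F.coord v x := by
  have hrest : ∑ w ∈ F.verts.erase v, F.coord w x * F'.height w =
      ∑ w ∈ F.verts.erase v, F.coord w x := by
    refine Finset.sum_congr rfl fun w hw => ?_
    have hwF' : w ∈ F'.verts := (h.2 w).2 (Or.inr (Finset.mem_erase.1 hw).symm)
    rw [F'.height_of_mem hwF', mul_one]
  rw [F.apply_eq_sum F'.height x, F.height_eq_add_sum_erase hv, ← Finset.add_sum_erase _ _ hv,
    hrest]
  ring

theorem coord_neg (hv : v ∈ F.verts) (h : F.IsNeighbor v F' v') : F.coord v v' < 0 := by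
  have hheight := h.height_eq hv v'
  rw [F'.height_of_mem h.mem] at hheight
  have hlt := F.height_lt_one (F'.verts_subset h.mem) h.1
  have hjump := F'.height_lt_one (F.verts_subset hv) (h.notMem hv)
  by_contra! hnonneg
  linarith [mul_nonneg (sub_pos.2 hjump).le hnonneg]

/-- Both neighbors are tilted about the same ridge; the one tilted further would cut off the new
vertex of the other. -/
theorem unique (hv : v ∈ F.verts) (h₁ : F.IsNeighbor v F₁ v₁) (h₂ : F.IsNeighbor v F₂ v₂) :
    v₁ = v₂ := by
  have le_of : ∀ {G₁ G₂ : SimplicialFacet V L d} {w₁ w₂ : E}, F.IsNeighbor v G₁ w₁ →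
      F.IsNeighbor v G₂ w₂ → G₁.height v ≤ G₂.height v := by
    intro G₁ G₂ w₁ w₂ h₁ h₂
    have e₁ := h₁.height_eq hv w₁
    rw [G₁.height_of_mem h₁.mem] at e₁
    have e₂ := h₂.height_eq hv w₁
    have := G₂.height_le_one (G₁.verts_subset h₁.mem)
    nlinarith [h₁.coord_neg hv]
  have hv₁ : F₂.height v₁ = 1 := by
    rw [h₂.height_eq hv, ← le_antisymm (le_of h₁ h₂) (le_of h₂ h₁), ← h₁.height_eq hv,
      F₁.height_of_mem h₁.mem]
  exact ((h₂.2 v₁).1 (F₂.mem_of_height_eq_one (F₁.verts_subset h₁.mem) hv₁)).resolve_right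
    fun h => h₁.1 h.1

end IsNeighbor

variable (F)

/-- A choice of the neighbor of `F` across the ridge opposite to `v`, together with its new vertex
(junk if there is no neighbor). -/
def neighborPair (v : E) : SimplicialFacet V L d × E :=
  if h : ∃ p : SimplicialFacet V L d × E, F.IsNeighbor v p.1 p.2 then h.choose else (F, v)

/-- The neighboring facet of `F` across the ridge opposite to `v`. -/
def neighbor (v : E) : SimplicialFacet V L d := (F.neighborPair v).1

/-- The neighboring vertex: the new vertex of the facet `F.neighbor v`. -/
def opp (v : E) : E := (F.neighborPair v).2

/-- The amount by which the height of `v` drops when `F` is replaced by its neighbor at `v`; it is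
the factor in `(F.neighbor v).height = F.height - F.jump v • F.coord v`. -/
def jump (v : E) : ℝ := 1 - (F.neighbor v).height v

theorem neighbor_height_self (v : E) : (F.neighbor v).height v = 1 - F.jump v := by
  simp [jump]

/-- The vertices in `V` of height zero over `F`. -/
def zeroLevel : Finset E := {x ∈ V | F.height x = 0}

/-- The vertices in `V` of negative height over `F`. -/
def negLevel : Finset E := {x ∈ V | F.height x < 0}

theorem mem_zeroLevel {x : E} : x ∈ F.zeroLevel ↔ x ∈ V ∧ F.height x = 0 := by
  simp [zeroLevel]

theorem mem_negLevel {x : E} : x ∈ F.negLevel ↔ x ∈ V ∧ F.height x < 0 := by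
  simp [negLevel]

end SimplicialFacet

/-- The combinatorial input extracted from a simplicial reflexive polytope with `3d - 1` vertices:
its facets are simplicial facets in the above sense, they have neighbors, their cones cover the
space, and one of them has minimal volume among its neighbors (the absolute value of the coordinate
in `one_le_abs_coord` is the ratio of the two volumes). -/
structure FacetSystem (V : Finset E) (L : AddSubgroup E) (d : ℕ) : Prop where
  mem_lattice : ∀ v ∈ V, v ∈ L
  zero_notMem : (0 : E) ∉ V
  card_add_one : V.card + 1 = 3 * d
  exists_neighbor : ∀ F : SimplicialFacet V L d, ∀ v ∈ F.verts, ∃ F' v', F.IsNeighbor v F' v'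
  exists_coord_nonneg : ∀ x : E, ∃ F : SimplicialFacet V L d, ∀ v ∈ F.verts, 0 ≤ F.coord v x
  one_le_abs_coord : ∃ F : SimplicialFacet V L d, ∀ v ∈ F.verts, ∀ F' v',
    F.IsNeighbor v F' v' → 1 ≤ |F.coord v v'|

namespace FacetSystem

open SimplicialFacet

variable (hS : FacetSystem V L d) (F : SimplicialFacet V L d) {v w x : E}
include hS

theorem isNeighbor (hv : v ∈ F.verts) : F.IsNeighbor v (F.neighbor v) (F.opp v) := by
  have h : ∃ p : SimplicialFacet V L d × E, F.IsNeighbor v p.1 p.2 := by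
    obtain ⟨F', v', h⟩ := hS.exists_neighbor F v hv
    exact ⟨(F', v'), h⟩
  unfold neighbor opp neighborPair
  rw [dif_pos h]
  exact h.choose_spec

theorem opp_notMem (hv : v ∈ F.verts) : F.opp v ∉ F.verts := (hS.isNeighbor F hv).1

theorem opp_mem_neighbor (hv : v ∈ F.verts) : F.opp v ∈ (F.neighbor v).verts :=
  (hS.isNeighbor F hv).mem

theorem opp_mem (hv : v ∈ F.verts) : F.opp v ∈ V :=
  (F.neighbor v).verts_subset (hS.opp_mem_neighbor F hv)

theorem mem_neighbor_iff (hv : v ∈ F.verts) :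
    w ∈ (F.neighbor v).verts ↔ w = F.opp v ∨ (w ∈ F.verts ∧ w ≠ v) :=
  (hS.isNeighbor F hv).2 w

theorem mem_neighbor (hv : v ∈ F.verts) (hw : w ∈ F.verts) (h : w ≠ v) :
    w ∈ (F.neighbor v).verts :=
  (hS.mem_neighbor_iff F hv).2 (Or.inr ⟨hw, h⟩)

theorem self_notMem_neighbor (hv : v ∈ F.verts) : v ∉ (F.neighbor v).verts :=
  (hS.isNeighbor F hv).notMem hv

theorem ne_opp (hv : v ∈ F.verts) (hw : w ∈ F.verts) : w ≠ F.opp v :=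
  fun h => hS.opp_notMem F hv (h ▸ hw)

theorem sum_mem_lattice : ∑ x ∈ V, x ∈ L := sum_mem hS.mem_lattice

theorem height_mem (hx : x ∈ V) : F.height x ∈ realInt := F.height_mem (hS.mem_lattice x hx)

theorem height_nonpos (hx : x ∈ V) (h : x ∉ F.verts) : F.height x ≤ 0 :=
  realInt.nonpos_of_lt_one (hS.height_mem F hx) (F.height_lt_one hx h)

theorem neighbor_height (hv : v ∈ F.verts) (x : E) :
    (F.neighbor v).height x = F.height x - F.jump v * F.coord v x :=
  (hS.isNeighbor F hv).height_eq hv x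

theorem one_le_jump (hv : v ∈ F.verts) : 1 ≤ F.jump v := by
  have := hS.height_nonpos (F.neighbor v) (F.verts_subset hv) (hS.self_notMem_neighbor F hv)
  unfold jump; linarith

theorem jump_mem (hv : v ∈ F.verts) : F.jump v ∈ realInt :=
  sub_mem (one_mem _) (hS.height_mem _ (F.verts_subset hv))

theorem jump_mul_coord_opp (hv : v ∈ F.verts) :
    F.jump v * F.coord v (F.opp v) = F.height (F.opp v) - 1 := by
  have := hS.neighbor_height F hv (F.opp v)
  rw [(F.neighbor v).height_of_mem (hS.opp_mem_neighbor F hv)] at this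
  linarith

theorem coord_opp_neg (hv : v ∈ F.verts) : F.coord v (F.opp v) < 0 :=
  (hS.isNeighbor F hv).coord_neg hv

theorem jump_mul_coord_mem (hv : v ∈ F.verts) (hx : x ∈ L) :
    F.jump v * F.coord v x ∈ realInt := by
  have h : F.jump v * F.coord v x = F.height x - (F.neighbor v).height x := by
    linarith [hS.neighbor_height F hv x]
  rw [h]
  exact sub_mem (F.height_mem hx) ((F.neighbor v).height_mem hx)

theorem height_le_jump_mul_coord (hv : v ∈ F.verts) (hx : x ∈ V) (hxF : x ∉ F.verts)
    (hxv : x ≠ F.opp v) : F.height x ≤ F.jump v * F.coord v x := by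
  have hx' : x ∉ (F.neighbor v).verts := by
    rw [hS.mem_neighbor_iff F hv]; tauto
  have := hS.height_nonpos _ hx hx'
  rw [hS.neighbor_height F hv] at this
  linarith

theorem eq_opp_of_coord_neg (hv : v ∈ F.verts) (hx : x ∈ V) (h0 : F.height x = 0)
    (hc : F.coord v x < 0) : x = F.opp v := by
  by_contra h
  have := hS.height_le_jump_mul_coord F hv hx (F.notMem_of_height_ne_one (by simp [h0])) h
  nlinarith [hS.one_le_jump F hv]

theorem exists_coord_neg (hx : x ∈ V) (h : F.height x ≤ 0) : ∃ v ∈ F.verts, F.coord v x < 0 := by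
  by_contra! hnonneg
  have h0 : F.height x = 0 :=
    le_antisymm h (by rw [F.height_apply]; exact Finset.sum_nonneg hnonneg)
  rw [F.height_apply, Finset.sum_eq_zero_iff_of_nonneg hnonneg] at h0
  have : x = 0 := F.ext_coord fun v hv => by rw [h0 v hv, map_zero]
  exact hS.zero_notMem (this ▸ hx)

theorem exists_opp_eq_of_height_eq_zero (hx : x ∈ V) (h : F.height x = 0) :
    ∃ v ∈ F.verts, F.opp v = x := by
  obtain ⟨v, hv, hc⟩ := hS.exists_coord_neg F hx h.le
  exact ⟨v, hv, (hS.eq_opp_of_coord_neg F hv hx h hc).symm⟩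

theorem card_zeroLevel_le_of_cover (T : Finset E) (h : ∀ v ∈ F.verts, v ∉ T →
    F.height (F.opp v) = 0 → ∃ w ∈ T, F.opp w = F.opp v) : F.zeroLevel.card ≤ T.card := by
  have hsub : F.zeroLevel ⊆ T.image F.opp := fun x hx => by
    obtain ⟨hxV, h0⟩ := F.mem_zeroLevel.1 hx
    obtain ⟨v, hv, rfl⟩ := hS.exists_opp_eq_of_height_eq_zero F hxV h0
    by_cases hvT : v ∈ T
    · exact Finset.mem_image_of_mem _ hvT
    · exact Finset.mem_image.2 (h v hv hvT h0)
  exact (Finset.card_le_card hsub).trans Finset.card_image_le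

theorem card_zeroLevel_le : F.zeroLevel.card ≤ d :=
  (hS.card_zeroLevel_le_of_cover F F.verts fun _ hv hvF => absurd hv hvF).trans_eq F.card_verts

theorem card_zeroLevel_lt (hv : v ∈ F.verts)
    (h : F.height (F.opp v) = 0 → ∃ w ∈ F.verts, w ≠ v ∧ F.opp w = F.opp v) :
    F.zeroLevel.card < d := by
  have hle := hS.card_zeroLevel_le_of_cover F (F.verts.erase v) fun s hs hsT h0 => by
    obtain rfl : s = v := by_contra fun hsv => hsT (Finset.mem_erase.2 ⟨hsv, hs⟩)
    obtain ⟨w, hw, hws, e⟩ := h h0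
    exact ⟨w, Finset.mem_erase.2 ⟨hws, hw⟩, e⟩
  have hcard := Finset.card_erase_add_one hv
  rw [F.card_verts] at hcard
  omega

theorem card_zeroLevel_lt_of_height_opp_ne (hv : v ∈ F.verts) (h : F.height (F.opp v) ≠ 0) :
    F.zeroLevel.card < d :=
  hS.card_zeroLevel_lt F hv fun h0 => absurd h0 h

theorem card_zeroLevel_lt_of_opp_eq (hv : v ∈ F.verts) (hw : w ∈ F.verts) (hvw : v ≠ w)
    (h : F.opp v = F.opp w) : F.zeroLevel.card < d :=
  hS.card_zeroLevel_lt F hv fun _ => ⟨w, hw, hvw.symm, h.symm⟩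

theorem height_opp_eq_zero_of_card (h : F.zeroLevel.card = d) (hv : v ∈ F.verts) :
    F.height (F.opp v) = 0 := by
  by_contra h0
  exact (hS.card_zeroLevel_lt_of_height_opp_ne F hv h0).ne h

theorem opp_injOn_of_card (h : F.zeroLevel.card = d) : Set.InjOn F.opp F.verts := by
  intro v hv w hw e
  by_contra hvw
  exact (hS.card_zeroLevel_lt_of_opp_eq F hv hw hvw e).ne h

theorem sum_eq_sum_levels {M : Type*} [AddCommMonoid M] (f : E → M) :
    ∑ x ∈ V, f x = ∑ x ∈ F.verts, f x + ∑ x ∈ F.zeroLevel, f x + ∑ x ∈ F.negLevel, f x := by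
  have hV : V = (F.verts ∪ F.zeroLevel) ∪ F.negLevel := by
    ext x
    simp only [Finset.mem_union, mem_zeroLevel, mem_negLevel]
    refine ⟨fun hx => ?_, ?_⟩
    · by_cases h : x ∈ F.verts
      · exact Or.inl (Or.inl h)
      rcases (hS.height_nonpos F hx h).lt_or_eq with h | h
      · exact Or.inr ⟨hx, h⟩
      · exact Or.inl (Or.inr ⟨hx, h⟩)
    · rintro ((h | h) | h)
      exacts [F.verts_subset h, h.1, h.1]
  have hdisj : Disjoint F.verts F.zeroLevel := Finset.disjoint_left.2 fun x hx h0 => by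
    linarith [F.height_of_mem hx, (F.mem_zeroLevel.1 h0).2]
  have hdisj' : Disjoint (F.verts ∪ F.zeroLevel) F.negLevel :=
    Finset.disjoint_left.2 fun x hx hneg => by
      have := (F.mem_negLevel.1 hneg).2
      rcases Finset.mem_union.1 hx with h | h
      · linarith [F.height_of_mem h]
      · linarith [(F.mem_zeroLevel.1 h).2]
  conv_lhs => rw [hV]
  rw [Finset.sum_union hdisj', Finset.sum_union hdisj]

theorem card_levels : F.zeroLevel.card + F.negLevel.card + 1 = 2 * d := by
  have h := hS.sum_eq_sum_levels F (fun _ => 1)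
  simp only [Finset.sum_const, smul_eq_mul, mul_one] at h
  have := hS.card_add_one
  have := F.card_verts
  omega

theorem sum_negLevel :
    ∑ x ∈ F.negLevel, (-F.height x - 1) = F.zeroLevel.card - d + 1 - F.height (∑ x ∈ V, x) := by
  have h0 : ∑ x ∈ F.zeroLevel, F.height x = 0 :=
    Finset.sum_eq_zero fun x hx => (F.mem_zeroLevel.1 hx).2
  have hcard : (F.zeroLevel.card : ℝ) + F.negLevel.card + 1 = 2 * d := by
    exact_mod_cast hS.card_levels F
  have hd : (F.verts.card : ℝ) = d := by rw [F.card_verts]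
  rw [map_sum, hS.sum_eq_sum_levels F, Finset.sum_congr rfl fun x hx => F.height_of_mem hx,
    Finset.sum_sub_distrib, Finset.sum_neg_distrib, h0]
  simp only [Finset.sum_const, nsmul_eq_mul, mul_one, hd]
  linarith

theorem height_le_neg_one (hx : x ∈ F.negLevel) : F.height x ≤ -1 := by
  obtain ⟨hxV, hneg⟩ := F.mem_negLevel.1 hx
  exact realInt.le_neg_one_of_neg (hS.height_mem F hxV) hneg

theorem height_sum_le : F.height (∑ x ∈ V, x) ≤ F.zeroLevel.card - d + 1 := by
  have := hS.sum_negLevel F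
  have : 0 ≤ ∑ x ∈ F.negLevel, (-F.height x - 1) :=
    Finset.sum_nonneg fun x hx => by linarith [hS.height_le_neg_one F hx]
  linarith

theorem le_height (hx : x ∈ V) :
    F.height (∑ x ∈ V, x) - 2 + (d - F.zeroLevel.card) ≤ F.height x := by
  by_cases h : F.height x < 0
  · have hle : -F.height x - 1 ≤ ∑ x ∈ F.negLevel, (-F.height x - 1) :=
      Finset.single_le_sum (f := fun x => -F.height x - 1)
        (fun x hx => by linarith [hS.height_le_neg_one F hx]) (F.mem_negLevel.2 ⟨hx, h⟩)
    linarith [hS.sum_negLevel F]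
  · linarith [hS.height_sum_le F]

theorem neighbor_opp_opp (hv : v ∈ F.verts) : (F.neighbor v).opp (F.opp v) = v :=
  (hS.isNeighbor (F.neighbor v) (hS.opp_mem_neighbor F hv)).unique (hS.opp_mem_neighbor F hv)
    ((hS.isNeighbor F hv).symm hv)

theorem height_sum_add_jump_le (hv : v ∈ F.verts) (hjump : F.jump v ≠ 1) :
    F.height (∑ x ∈ V, x) + F.jump v - 2 ≤ F.jump v * F.coord v (∑ x ∈ V, x) := by
  have hself := F.neighbor_height_self v
  have hlt : (F.neighbor v).zeroLevel.card < d := by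
    refine hS.card_zeroLevel_lt_of_height_opp_ne _ (hS.opp_mem_neighbor F hv) fun h => hjump ?_
    rw [hS.neighbor_opp_opp F hv, hself] at h
    linarith
  have hge := hS.le_height (F.neighbor v) (F.verts_subset hv)
  have hlt' : ((F.neighbor v).zeroLevel.card : ℝ) + 1 ≤ d := by exact_mod_cast hlt
  rw [hself, hS.neighbor_height F hv] at hge
  linarith

theorem coord_eq_neighbor_coord_mul (hv : v ∈ F.verts) (x : E) :
    F.coord v x = (F.neighbor v).coord (F.opp v) x * F.coord v (F.opp v) := by
  rw [(F.neighbor v).apply_eq_sum (F.coord v) x]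
  refine Finset.sum_eq_single_of_mem _ (hS.opp_mem_neighbor F hv) fun w hw hne => ?_
  obtain ⟨hwF, hwv⟩ := ((hS.mem_neighbor_iff F hv).1 hw).resolve_left hne
  rw [F.coord_of_ne v hv w hwF hwv.symm, mul_zero]

theorem coord_eq_neighbor_coord_add (hv : v ∈ F.verts) (hw : w ∈ F.verts) (hwv : w ≠ v) (x : E) :
    F.coord w x =
      (F.neighbor v).coord w x + (F.neighbor v).coord (F.opp v) x * F.coord w (F.opp v) := by
  have hw' := hS.mem_neighbor F hv hw hwv
  rw [(F.neighbor v).apply_eq_sum (F.coord w) x,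
    ← Finset.add_sum_erase _ _ (hS.opp_mem_neighbor F hv), add_comm]
  congr 1
  rw [Finset.sum_eq_single_of_mem w (Finset.mem_erase.2 ⟨hS.ne_opp F hv hw, hw'⟩),
    F.coord_self w hw, mul_one]
  intro y hy hyw
  obtain ⟨hne, hyN⟩ := Finset.mem_erase.1 hy
  obtain ⟨hyF, -⟩ := ((hS.mem_neighbor_iff F hv).1 hyN).resolve_left hne
  rw [F.coord_of_ne w hw y hyF hyw.symm, mul_zero]

end FacetSystem

end

/-! ### Special facets -/

section

variable {E : Type*} [AddCommGroup E] [Module ℝ E] {V : Finset E} {L : AddSubgroup E} {d : ℕ}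

namespace SimplicialFacet

variable (F : SimplicialFacet V L d) {v x : E}

/-- A facet whose vertices generate the lattice, that is, whose coordinates are integral on it. -/
def IsUnimodular : Prop := ∀ x ∈ L, ∀ v ∈ F.verts, F.coord v x ∈ realInt

theorem eq_sub_of_height_eq_zero (hv : v ∈ F.verts) (hx : F.height x = 0) (hc : F.coord v x = -1)
    (h0 : ∀ w ∈ F.verts, w ≠ v → 0 ≤ F.coord w x) (hint : ∀ w ∈ F.verts, F.coord w x ∈ realInt) :
    ∃ s ∈ F.verts, s ≠ v ∧ x = s - v := by
  rw [F.height_eq_add_sum_erase hv, hc] at hx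
  obtain ⟨s, hs, hs1, hs0⟩ := exists_unique_one_of_sum_eq_one (T := F.verts.erase v)
    (f := fun s => F.coord s x)
    (fun s hs => h0 s (Finset.mem_of_mem_erase hs) (Finset.ne_of_mem_erase hs))
    (fun s hs => hint s (Finset.mem_of_mem_erase hs)) (by linarith)
  obtain ⟨hsv, hsF⟩ := Finset.mem_erase.1 hs
  refine ⟨s, hsF, hsv, F.ext_coord fun t ht => ?_⟩
  rw [map_sub, F.coord_eq_ite ht hsF, F.coord_eq_ite ht hv]
  by_cases htv : t = v
  · subst htv; simp [hsv.symm, hc]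
  by_cases hts : t = s
  · subst hts; simp [hsv, hs1]
  simpa [htv, hts] using hs0 t (Finset.mem_erase.2 ⟨htv, ht⟩) hts

theorem eq_neg_of_height_eq_neg_one (hx : F.height x = -1) (h0 : ∀ w ∈ F.verts, F.coord w x ≤ 0)
    (hint : ∀ w ∈ F.verts, F.coord w x ∈ realInt) : ∃ s ∈ F.verts, x = -s := by
  rw [F.height_apply] at hx
  obtain ⟨s, hs, hs1, hs0⟩ := exists_unique_one_of_sum_eq_one (T := F.verts)
    (f := fun s => -F.coord s x) (fun s hs => neg_nonneg.2 (h0 s hs))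
    (fun s hs => neg_mem (hint s hs)) (by rw [Finset.sum_neg_distrib]; linarith)
  refine ⟨s, hs, F.ext_coord fun t ht => ?_⟩
  rw [map_neg, F.coord_eq_ite ht hs]
  by_cases hts : t = s
  · subst hts; simp only [if_true]; linarith
  · simpa [hts] using hs0 t ht hts

theorem sum_coord_sub {T : Finset E} (hT : T ⊆ F.verts) {σ : E → E} (hσ : ∀ s ∈ T, σ s ∈ F.verts)
    (hv : v ∈ F.verts) :
    ∑ s ∈ T, F.coord v (σ s - s) = ({s ∈ T | σ s = v}.card : ℝ) - if v ∈ T then 1 else 0 := by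
  have hcoord : ∀ s ∈ T, F.coord v (σ s - s) =
      (if σ s = v then (1 : ℝ) else 0) - if v = s then 1 else 0 := fun s hs => by
    rw [map_sub, F.coord_eq_ite hv (hσ s hs), F.coord_eq_ite hv (hT hs)]
    simp only [eq_comm]
  rw [Finset.sum_congr rfl hcoord, Finset.sum_sub_distrib, Finset.sum_boole, Finset.sum_ite_eq]

theorem sum_coord_neg {T : Finset E} (hT : ∀ x ∈ T, ∃ s ∈ F.verts, x = -s) (hv : v ∈ F.verts) :
    ∑ x ∈ T, F.coord v x = -if -v ∈ T then 1 else 0 := by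
  have hcoord : ∀ x ∈ T, F.coord v x = -if -v = x then (1 : ℝ) else 0 := fun x hx => by
    obtain ⟨s, hs, rfl⟩ := hT x hx
    rw [map_neg, F.coord_eq_ite hv hs]
    simp only [neg_inj]
  rw [Finset.sum_congr rfl hcoord, Finset.sum_neg_distrib, Finset.sum_ite_eq]

/-- The combinatorial normal form of the classification, relative to a unimodular facet `F`: a
fixed-point-free involution `σ` of the vertices of `F` other than `c` pairs them into hexagons
`±t, ±(σ t), ±(σ t - t)`, and the two remaining vertices are `c` and `c'`. -/
structure IsNormalForm (σ : E → E) (c c' : E) : Prop where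
  isUnimodular : F.IsUnimodular
  mem : c ∈ F.verts
  map_mem : ∀ t ∈ F.verts, t ≠ c → σ t ∈ F.verts
  map_ne : ∀ t ∈ F.verts, t ≠ c → σ t ≠ c
  map_map : ∀ t ∈ F.verts, t ≠ c → σ (σ t) = t
  map_ne_self : ∀ t ∈ F.verts, t ≠ c → σ t ≠ t
  eq_or_eq_or_exists : ∀ x ∈ V,
    x = c ∨ x = c' ∨ ∃ t ∈ F.verts, t ≠ c ∧ (x = t ∨ x = -t ∨ x = σ t - t)

/-- A special facet in the sense of Øbro: its cone contains the sum of all vertices. This is only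
of interest when that sum does not vanish, which is made part of the definition. -/
structure IsSpecial : Prop where
  sum_ne_zero : ∑ x ∈ V, x ≠ 0
  coord_sum_nonneg : ∀ v ∈ F.verts, 0 ≤ F.coord v (∑ x ∈ V, x)

end SimplicialFacet

namespace FacetSystem

open SimplicialFacet

variable (hS : FacetSystem V L d) {F : SimplicialFacet V L d}
include hS

theorem sum_zeroLevel (h : F.zeroLevel.card = d) (f : E → ℝ) :
    ∑ x ∈ F.zeroLevel, f x = ∑ s ∈ F.verts, f (F.opp s) := by
  have himage : F.zeroLevel = F.verts.image F.opp := by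
    refine Finset.eq_of_subset_of_card_le (fun x hx => ?_)
      (Finset.card_image_le.trans (by rw [F.card_verts, h]))
    obtain ⟨hxV, h0⟩ := F.mem_zeroLevel.1 hx
    exact Finset.mem_image.2 (hS.exists_opp_eq_of_height_eq_zero F hxV h0)
  rw [himage, Finset.sum_image (hS.opp_injOn_of_card F h)]

section Special

variable {v w x : E} (hF : F.IsSpecial)
include hF

theorem height_sum_of_isSpecial : F.height (∑ x ∈ V, x) = 1 := by
  have hnonneg : 0 ≤ F.height (∑ x ∈ V, x) := by
    rw [F.height_apply]; exact Finset.sum_nonneg hF.coord_sum_nonneg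
  have hne : F.height (∑ x ∈ V, x) ≠ 0 := fun h0 => hF.sum_ne_zero <| by
    rw [F.height_apply, Finset.sum_eq_zero_iff_of_nonneg hF.coord_sum_nonneg] at h0
    exact F.ext_coord fun v hv => by rw [h0 v hv, map_zero]
  have hle : (F.zeroLevel.card : ℝ) ≤ d := by exact_mod_cast hS.card_zeroLevel_le F
  have hpos := realInt.one_le_of_pos (F.height_mem hS.sum_mem_lattice) (hnonneg.lt_of_ne' hne)
  linarith [hS.height_sum_le F]

theorem card_zeroLevel_of_isSpecial : F.zeroLevel.card = d := by
  have h := hS.height_sum_le F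
  rw [hS.height_sum_of_isSpecial hF] at h
  have : (d : ℝ) ≤ F.zeroLevel.card := by linarith
  exact le_antisymm (hS.card_zeroLevel_le F) (by exact_mod_cast this)

theorem card_negLevel_of_isSpecial : F.negLevel.card + 1 = d := by
  have := hS.card_levels F
  rw [hS.card_zeroLevel_of_isSpecial hF] at this
  omega

theorem neg_one_le_height_of_isSpecial (hx : x ∈ V) : -1 ≤ F.height x := by
  have := hS.le_height F hx
  rw [hS.height_sum_of_isSpecial hF, hS.card_zeroLevel_of_isSpecial hF] at this
  linarith

theorem height_eq_neg_one_of_isSpecial (hx : x ∈ F.negLevel) : F.height x = -1 :=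
  le_antisymm (hS.height_le_neg_one F hx)
    (hS.neg_one_le_height_of_isSpecial hF (F.mem_negLevel.1 hx).1)

theorem height_opp_of_isSpecial (hv : v ∈ F.verts) : F.height (F.opp v) = 0 :=
  hS.height_opp_eq_zero_of_card F (hS.card_zeroLevel_of_isSpecial hF) hv

theorem height_le_jump_mul_coord_of_mem_negLevel (hv : v ∈ F.verts) (hx : x ∈ F.negLevel) :
    -1 ≤ F.jump v * F.coord v x := by
  have hheight := hS.height_eq_neg_one_of_isSpecial hF hx
  rw [← hheight]
  refine hS.height_le_jump_mul_coord F hv (F.mem_negLevel.1 hx).1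
    (F.notMem_of_height_ne_one (by rw [hheight]; norm_num)) ?_
  rintro rfl
  linarith [hS.height_opp_of_isSpecial hF hv]

theorem jump_mul_coord_opp_of_isSpecial (hv : v ∈ F.verts) :
    F.jump v * F.coord v (F.opp v) = -1 := by
  rw [hS.jump_mul_coord_opp F hv, hS.height_opp_of_isSpecial hF hv]; norm_num

theorem coord_opp_nonneg_of_isSpecial (hv : v ∈ F.verts) (hw : w ∈ F.verts) (hwv : w ≠ v) :
    0 ≤ F.coord w (F.opp v) := by
  by_contra! h
  have := hS.eq_opp_of_coord_neg F hw (hS.opp_mem F hv) (hS.height_opp_of_isSpecial hF hv) h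
  exact hwv (hS.opp_injOn_of_card F (hS.card_zeroLevel_of_isSpecial hF) hv hw this).symm

theorem jump_eq_one_of_isSpecial (hv : v ∈ F.verts) (h0 : F.coord v (∑ x ∈ V, x) = 0) :
    F.jump v = 1 := by
  by_contra hne
  have := hS.height_sum_add_jump_le F hv hne
  rw [h0, hS.height_sum_of_isSpecial hF] at this
  exact hne (by linarith [hS.one_le_jump F hv])

omit hF in
theorem neighbor_coord_opp_sum (hv : v ∈ F.verts) (h0 : F.coord v (∑ x ∈ V, x) = 0) :
    (F.neighbor v).coord (F.opp v) (∑ x ∈ V, x) = 0 := by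
  have := hS.coord_eq_neighbor_coord_mul F hv (∑ x ∈ V, x)
  rw [h0] at this
  exact (mul_eq_zero.1 this.symm).resolve_right (hS.coord_opp_neg F hv).ne

omit hF in
theorem neighbor_coord_sum (hv : v ∈ F.verts) (h0 : F.coord v (∑ x ∈ V, x) = 0)
    (hw : w ∈ F.verts) (hwv : w ≠ v) :
    (F.neighbor v).coord w (∑ x ∈ V, x) = F.coord w (∑ x ∈ V, x) := by
  rw [hS.coord_eq_neighbor_coord_add F hv hw hwv, hS.neighbor_coord_opp_sum hv h0]
  ring

theorem isSpecial_neighbor (hv : v ∈ F.verts) (h0 : F.coord v (∑ x ∈ V, x) = 0) :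
    (F.neighbor v).IsSpecial where
  sum_ne_zero := hF.sum_ne_zero
  coord_sum_nonneg w hw := by
    rcases (hS.mem_neighbor_iff F hv).1 hw with rfl | ⟨hw, hwv⟩
    · exact (hS.neighbor_coord_opp_sum hv h0).ge
    · rw [hS.neighbor_coord_sum hv h0 hw hwv]
      exact hF.coord_sum_nonneg w hw

theorem coord_le_height_add_one (hv : v ∈ F.verts) (h0 : F.coord v (∑ x ∈ V, x) = 0)
    (hx : x ∈ V) : F.coord v x ≤ F.height x + 1 := by
  have := hS.neg_one_le_height_of_isSpecial (hS.isSpecial_neighbor hF hv h0) hx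
  rw [hS.neighbor_height F hv, hS.jump_eq_one_of_isSpecial hF hv h0] at this
  linarith

theorem coord_nonpos_of_mem_negLevel (hv : v ∈ F.verts) (h0 : F.coord v (∑ x ∈ V, x) = 0)
    (hx : x ∈ F.negLevel) : F.coord v x ≤ 0 := by
  have := hS.coord_le_height_add_one hF hv h0 (F.mem_negLevel.1 hx).1
  rw [hS.height_eq_neg_one_of_isSpecial hF hx] at this
  linarith

theorem eq_sub_of_coord_eq_one (hv : v ∈ F.verts) (hx : x ∈ V) (hheight : F.height x = 0)
    (hc : F.coord v x = 1) : ∃ y ∈ F.verts, y ≠ v ∧ x = v - y := by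
  obtain ⟨y, hy, rfl⟩ := hS.exists_opp_eq_of_height_eq_zero F hx hheight
  have hyv : v ≠ y := by
    rintro rfl
    linarith [hS.coord_opp_neg F hy]
  have hcy : -1 ≤ F.coord y (F.opp y) := by
    by_contra! h
    nlinarith [hS.jump_mul_coord_opp_of_isSpecial hF hy, hS.one_le_jump F hy]
  have hnonneg : ∀ w ∈ (F.verts.erase y).erase v, 0 ≤ F.coord w (F.opp y) := fun w hw => by
    simp only [Finset.mem_erase] at hw
    exact hS.coord_opp_nonneg_of_isSpecial hF hy hw.2.2 hw.2.1
  have hsum := F.height_eq_add_sum_erase hy (F.opp y)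
  rw [hheight, ← Finset.add_sum_erase _ _ (Finset.mem_erase.2 ⟨hyv, hv⟩), hc] at hsum
  have hrest : ∑ w ∈ (F.verts.erase y).erase v, F.coord w (F.opp y) = 0 :=
    le_antisymm (by linarith) (Finset.sum_nonneg hnonneg)
  rw [Finset.sum_eq_zero_iff_of_nonneg hnonneg] at hrest
  refine ⟨y, hy, hyv.symm, F.ext_coord fun w hw => ?_⟩
  rw [map_sub, F.coord_eq_ite hw hv, F.coord_eq_ite hw hy]
  by_cases hwv : w = v
  · subst hwv; simp [hyv, hc]
  by_cases hwy : w = y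
  · subst hwy
    simp only [hwv, if_false, if_true]
    linarith [Finset.sum_nonneg hnonneg]
  simpa [hwv, hwy] using hrest w (by simp [hw, hwv, hwy])

theorem eq_opp_sub_of_coord_neg (hv : v ∈ F.verts) (h0 : F.coord v (∑ x ∈ V, x) = 0)
    (hx : x ∈ F.negLevel) (hc : F.coord v x < 0) : ∃ y ∈ F.verts, y ≠ v ∧ x = F.opp v - y := by
  have hjump := hS.jump_eq_one_of_isSpecial hF hv h0
  have hxV := (F.mem_negLevel.1 hx).1
  have hopp := hS.jump_mul_coord_opp_of_isSpecial hF hv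
  have hint := hS.jump_mul_coord_mem F hv (hS.mem_lattice x hxV)
  have hge := hS.height_le_jump_mul_coord_of_mem_negLevel hF hv hx
  rw [hjump, one_mul] at hopp hint hge
  have hcv : F.coord v x = -1 := le_antisymm (realInt.le_neg_one_of_neg hint hc) hge
  have hcoord := hS.coord_eq_neighbor_coord_mul F hv x
  have hheight := hS.neighbor_height F hv x
  rw [hjump, hcv, hS.height_eq_neg_one_of_isSpecial hF hx] at hheight
  obtain ⟨y, hy, hyv, e⟩ := hS.eq_sub_of_coord_eq_one (hS.isSpecial_neighbor hF hv h0)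
    (hS.opp_mem_neighbor F hv) hxV (by rw [hheight]; norm_num)
    (by rw [hcv, hopp] at hcoord; linarith)
  obtain ⟨hyF, hne⟩ := ((hS.mem_neighbor_iff F hv).1 hy).resolve_left hyv
  exact ⟨y, hyF, hne, e⟩

/-- Otherwise `opp y = z - y = t - opp z - y` would have height `-1` and coordinate `1` at `t` over
the special facet `F.neighbor z`. -/
theorem eq_of_opp_eq_sub {y z t : E} (hy : y ∈ F.verts) (hz : z ∈ F.verts) (ht : t ∈ F.verts)
    (hyz : y ≠ z) (htz : t ≠ z) (hz0 : F.coord z (∑ x ∈ V, x) = 0)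
    (ht0 : F.coord t (∑ x ∈ V, x) = 0) (hoy : F.opp y = z - y) (hoz : F.opp z = t - z) :
    t = y := by
  by_contra hty
  have htN := hS.mem_neighbor F hz ht htz
  have hcoord : F.coord z (F.opp y) = 1 := by
    rw [hoy, map_sub, F.coord_self z hz, F.coord_of_ne z hz y hy hyz.symm, sub_zero]
  have hheight : (F.neighbor z).height (F.opp y) = -1 := by
    rw [hS.neighbor_height F hz, hS.height_opp_of_isSpecial hF hy,
      hS.jump_eq_one_of_isSpecial hF hz hz0, hcoord]
    norm_num
  have hle := hS.coord_le_height_add_one (hS.isSpecial_neighbor hF hz hz0) htN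
    (by rw [hS.neighbor_coord_sum hz hz0 ht htz, ht0]) (hS.opp_mem F hy)
  have e : F.opp y = t - F.opp z - y := by rw [hoy, hoz]; abel
  rw [hheight, e, map_sub, map_sub, coord_self _ t htN,
    coord_of_ne _ t htN _ (hS.opp_mem_neighbor F hz) (hS.ne_opp F hz ht),
    coord_of_ne _ t htN _ (hS.mem_neighbor F hz hy hyz) hty] at hle
  norm_num at hle

end Special

end FacetSystem

end

/-! ### The two shapes of a special facet -/

section

theorem sum_le_one_sub_card {ι : Type*} {T : Finset ι} {f : ι → ℝ} (a : ι)
    (h0 : ∀ x ∈ T, f x ≤ 0) (h1 : ∀ x ∈ T, x ≠ a → f x ≤ -1) :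
    ∑ x ∈ T, f x ≤ 1 - T.card := by
  have hle : ∑ x ∈ T, f x ≤ ∑ x ∈ T, ((if x = a then 1 else 0) - 1) := by
    refine Finset.sum_le_sum fun x hx => ?_
    split_ifs with h
    · simpa using h0 x hx
    · simpa using h1 x hx h
  have hone : ∑ x ∈ T, (if x = a then (1 : ℝ) else 0) ≤ 1 := by
    rw [Finset.sum_ite_eq']; split_ifs <;> norm_num
  rw [Finset.sum_sub_distrib, Finset.sum_const, nsmul_eq_mul, mul_one] at hle
  linarith

section Fibers

variable {α : Type*} {S : Finset α} {σ : α → α} {a : α}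

theorem card_filter_map_map_ne_le_two (hσ : ∀ t ∈ S, σ t ∈ S) (ha : a ∈ S) (hσσa : σ (σ a) = a)
    (hσσ : ∀ t ∈ S, σ t ≠ a → σ (σ t) = t ∨ σ (σ t) = a)
    (hfib : ∀ s ∈ S, {t ∈ S | σ t = s}.card ≤ 1 + if s = a then 1 else 0) :
    {t ∈ S | σ (σ t) ≠ t}.card ≤ 2 := by
  set D := {t ∈ S | σ (σ t) ≠ t}
  set A := {t ∈ D | σ t = a}
  set B := {t ∈ D | σ t ≠ a}
  have hcardA : A.card ≤ 1 := by
    have hnot : σ a ∉ A := fun h =>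
      (Finset.mem_filter.1 (Finset.mem_filter.1 h).1).2 (by rw [hσσa])
    have hsub : insert (σ a) A ⊆ {t ∈ S | σ t = a} := by
      refine Finset.insert_subset (Finset.mem_filter.2 ⟨hσ a ha, hσσa⟩) fun t ht => ?_
      obtain ⟨htD, hta⟩ := Finset.mem_filter.1 ht
      exact Finset.mem_filter.2 ⟨(Finset.mem_filter.1 htD).1, hta⟩
    have := (Finset.card_le_card hsub).trans (hfib a ha)
    rw [Finset.card_insert_of_notMem hnot, if_pos rfl] at this
    omega
  have hinj : ∀ s ∈ S, ∀ t ∈ S, σ s ≠ a → σ s = σ t → s = t := by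
    intro s hs t ht hsa e
    have h := hfib (σ s) (hσ s hs)
    rw [if_neg hsa, add_zero] at h
    exact Finset.card_le_one.1 h s (Finset.mem_filter.2 ⟨hs, rfl⟩) t
      (Finset.mem_filter.2 ⟨ht, e.symm⟩)
  have hcardB : B.card ≤ A.card := by
    refine Finset.card_le_card_of_injOn σ (fun t ht => ?_) fun s hs t ht e => ?_
    · obtain ⟨htD, hta⟩ := Finset.mem_filter.1 ht
      obtain ⟨htS, htt⟩ := Finset.mem_filter.1 htD
      have hσt : σ (σ t) = a := (hσσ t htS hta).resolve_left htt
      refine Finset.mem_filter.2 ⟨Finset.mem_filter.2 ⟨hσ t htS, fun h => ?_⟩, hσt⟩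
      rw [hσt] at h
      exact htt (by rw [hinj t htS a ha hta h.symm, hσσa])
    · obtain ⟨hsD, hsa⟩ := Finset.mem_filter.1 hs
      exact hinj s (Finset.mem_filter.1 hsD).1 t
        (Finset.mem_filter.1 (Finset.mem_filter.1 ht).1).1 hsa e
  have hcardD : A.card + B.card = D.card := Finset.card_filter_add_card_filter_not _
  omega

theorem exists_map_map_ne_of_odd_card (hodd : Odd S.card) (hσ : ∀ t ∈ S, σ t ∈ S)
    (hne : ∀ t ∈ S, σ t ≠ t) (ha : a ∈ S)
    (hσσ : ∀ t ∈ S, σ t ≠ a → σ (σ t) = t ∨ σ (σ t) = a)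
    (hfib : ∀ s ∈ S, {t ∈ S | σ t = s}.card ≤ 1 + if s = a then 1 else 0) :
    ∃ q ∈ S, σ (σ q) ≠ q ∧ ∀ t ∈ S, t ≠ q → σ (σ t) = t := by
  have hσσa : σ (σ a) = a := (hσσ a ha (hne a ha)).elim id id
  have hle := card_filter_map_map_ne_le_two hσ ha hσσa hσσ hfib
  have heven : Even {t ∈ S | σ (σ t) = t}.card := by
    refine even_card_of_involution (τ := σ) (fun t ht => ?_)
      (fun t ht => (Finset.mem_filter.1 ht).2) fun t ht => hne t (Finset.mem_filter.1 ht).1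
    obtain ⟨htS, htt⟩ := Finset.mem_filter.1 ht
    exact Finset.mem_filter.2 ⟨hσ t htS, by rw [htt]⟩
  have hcard : {t ∈ S | σ (σ t) = t}.card + {t ∈ S | σ (σ t) ≠ t}.card = S.card :=
    Finset.card_filter_add_card_filter_not _
  obtain ⟨q, hq⟩ : ∃ q, {t ∈ S | σ (σ t) ≠ t} = {q} := by
    rw [← Finset.card_eq_one]
    obtain ⟨m, hm⟩ := hodd
    obtain ⟨n, hn⟩ := heven
    omega
  obtain ⟨hqS, hqq⟩ := Finset.mem_filter.1 (hq ▸ Finset.mem_singleton_self q)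
  refine ⟨q, hqS, hqq, fun t ht htq => ?_⟩
  by_contra htt
  exact htq (Finset.mem_singleton.1 (hq ▸ Finset.mem_filter.2 ⟨ht, htt⟩))

end Fibers

theorem mem_erase_erase_iff {α : Type*} {S : Finset α} {v w z : α} :
    z ∈ (S.erase w).erase v ↔ z ∈ S ∧ z ≠ v ∧ z ≠ w := by
  simp only [Finset.mem_erase]; tauto

variable {E : Type*} [AddCommGroup E] [Module ℝ E] {V : Finset E} {L : AddSubgroup E} {d : ℕ}

namespace SimplicialFacet

variable (F : SimplicialFacet V L d)

/-- The first shape of a special facet: the sum of all vertices is the midpoint of `v` and `w`,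
both of which have jump `2`. -/
structure IsMidpoint (v w : E) : Prop where
  isSpecial : F.IsSpecial
  left_mem : v ∈ F.verts
  right_mem : w ∈ F.verts
  ne : v ≠ w
  jump_left : F.jump v = 2
  jump_right : F.jump w = 2
  coord_sum : ∀ z ∈ F.verts, z ≠ v → z ≠ w → F.coord z (∑ x ∈ V, x) = 0

/-- The second shape of a special facet: the sum of all vertices is the vertex `a`, and the
neighboring vertices have the form `σ v - v`. -/
structure IsPointed (σ : E → E) (a : E) : Prop where
  isSpecial : F.IsSpecial
  mem : a ∈ F.verts
  coord_sum_self : F.coord a (∑ x ∈ V, x) = 1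
  coord_sum : ∀ v ∈ F.verts, v ≠ a → F.coord v (∑ x ∈ V, x) = 0
  isUnimodular : F.IsUnimodular
  jump_eq_one : ∀ v ∈ F.verts, F.jump v = 1
  map_mem : ∀ v ∈ F.verts, σ v ∈ F.verts
  map_ne_self : ∀ v ∈ F.verts, σ v ≠ v
  opp_eq : ∀ v ∈ F.verts, F.opp v = σ v - v

variable {F} in
theorem IsMidpoint.height_eq_add {v w : E} (hF : F.IsMidpoint v w) (x : E) : F.height x =
    F.coord v x + F.coord w x + ∑ z ∈ (F.verts.erase w).erase v, F.coord z x := by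
  rw [F.height_eq_add_sum_erase hF.right_mem,
    ← Finset.add_sum_erase _ _ (Finset.mem_erase.2 ⟨hF.ne, hF.left_mem⟩)]
  ring

end SimplicialFacet

namespace FacetSystem

open SimplicialFacet

variable (hS : FacetSystem V L d) {F : SimplicialFacet V L d} {v w x : E}
include hS

theorem exists_jump_le_jump (hF : F.IsSpecial) (hw : w ∈ F.verts) :
    ∃ v ∈ F.verts, v ≠ w ∧ F.jump w ≤ F.jump v := by
  have hnonneg : ∀ v ∈ F.verts.erase w, 0 ≤ F.coord v (F.opp w) := fun v hv =>
    hS.coord_opp_nonneg_of_isSpecial hF hw (Finset.mem_of_mem_erase hv) (Finset.ne_of_mem_erase hv)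
  have hsum := F.height_eq_add_sum_erase hw (F.opp w)
  rw [hS.height_opp_of_isSpecial hF hw] at hsum
  obtain ⟨v, hv, hpos⟩ : ∃ v ∈ F.verts.erase w, 0 < F.coord v (F.opp w) := by
    by_contra! h
    linarith [hS.coord_opp_neg F hw, Finset.sum_nonpos h]
  have hle := Finset.single_le_sum hnonneg hv
  obtain ⟨hvw, hvF⟩ := Finset.mem_erase.1 hv
  refine ⟨v, hvF, hvw, ?_⟩
  have hjv := hS.one_le_jump F hvF
  have hjw := hS.one_le_jump F hw
  have h1 := realInt.one_le_of_pos
    (hS.jump_mul_coord_mem F hvF (hS.mem_lattice _ (hS.opp_mem F hw)))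
    (by positivity)
  have h2 : F.coord v (F.opp w) * F.jump w ≤ 1 := by
    nlinarith [hS.jump_mul_coord_opp_of_isSpecial hF hw]
  nlinarith

theorem exists_isMidpoint (hF : F.IsSpecial) (hw : w ∈ F.verts) (hjump : F.jump w ≠ 1) :
    ∃ v, F.IsMidpoint v w := by
  obtain ⟨v, hv, hvw, hle⟩ := hS.exists_jump_le_jump hF hw
  have hw2 := realInt.two_le_of_one_lt (hS.jump_mem F hw) ((hS.one_le_jump F hw).lt_of_ne' hjump)
  have hcw := hS.height_sum_add_jump_le F hw hjump
  have hcv := hS.height_sum_add_jump_le F hv (by linarith : 1 < F.jump v).ne'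
  have hnonneg : ∀ z ∈ (F.verts.erase w).erase v, 0 ≤ F.coord z (∑ x ∈ V, x) := fun z hz =>
    hF.coord_sum_nonneg z (Finset.mem_of_mem_erase (Finset.mem_of_mem_erase hz))
  have hsum := F.height_eq_add_sum_erase hw (∑ x ∈ V, x)
  rw [hS.height_sum_of_isSpecial hF] at hsum hcw hcv
  rw [← Finset.add_sum_erase _ _ (Finset.mem_erase.2 ⟨hvw, hv⟩)] at hsum
  have hrest := Finset.sum_nonneg hnonneg
  have hhalf_w : 1 / 2 ≤ F.coord w (∑ x ∈ V, x) := by nlinarith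
  have hhalf_v : 1 / 2 ≤ F.coord v (∑ x ∈ V, x) := by nlinarith
  have hzero : ∑ z ∈ (F.verts.erase w).erase v, F.coord z (∑ x ∈ V, x) = 0 := by linarith
  rw [Finset.sum_eq_zero_iff_of_nonneg hnonneg] at hzero
  exact ⟨v, hF, hv, hw, hvw, by nlinarith, by nlinarith, fun z hz hzv hzw =>
    hzero z (Finset.mem_erase.2 ⟨hzv, Finset.mem_erase.2 ⟨hzw, hz⟩⟩)⟩

section Midpoint

variable (hF : F.IsMidpoint v w)
include hF

theorem coord_mem_of_isMidpoint {z : E} (hz : z ∈ (F.verts.erase w).erase v) (hx : x ∈ V) :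
    F.coord z x ∈ realInt := by
  obtain ⟨hzF, hzv, hzw⟩ := mem_erase_erase_iff.1 hz
  have := hS.jump_mul_coord_mem F hzF (hS.mem_lattice x hx)
  rwa [hS.jump_eq_one_of_isSpecial hF.isSpecial hzF (hF.coord_sum z hzF hzv hzw), one_mul] at this

theorem sum_negLevel_le_of_isMidpoint :
    ∑ x ∈ F.negLevel, ∑ z ∈ (F.verts.erase w).erase v, F.coord z x ≤ 2 - d := by
  have hnonpos : ∀ x ∈ F.negLevel, ∀ z ∈ (F.verts.erase w).erase v, F.coord z x ≤ 0 :=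
    fun x hx z hz => by
      obtain ⟨hzF, hzv, hzw⟩ := mem_erase_erase_iff.1 hz
      exact hS.coord_nonpos_of_mem_negLevel hF.isSpecial hzF (hF.coord_sum z hzF hzv hzw) hx
  have hcard : (F.negLevel.card : ℝ) + 1 = d := by
    exact_mod_cast hS.card_negLevel_of_isSpecial hF.isSpecial
  refine (sum_le_one_sub_card (-(1 / 2 : ℝ) • (v + w))
    (fun x hx => Finset.sum_nonpos (hnonpos x hx))
    fun x hx hne => ?_).trans (by linarith)
  have hint := sum_mem fun z hz => hS.coord_mem_of_isMidpoint hF hz (F.mem_negLevel.1 hx).1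
  refine realInt.le_neg_one_of_neg hint
    ((Finset.sum_nonpos (hnonpos x hx)).lt_of_ne fun h0 => hne ?_)
  have hheight := hF.height_eq_add x
  rw [h0, hS.height_eq_neg_one_of_isSpecial hF.isSpecial hx] at hheight
  have hv := hS.height_le_jump_mul_coord_of_mem_negLevel hF.isSpecial hF.left_mem hx
  have hw := hS.height_le_jump_mul_coord_of_mem_negLevel hF.isSpecial hF.right_mem hx
  rw [hF.jump_left] at hv
  rw [hF.jump_right] at hw
  rw [Finset.sum_eq_zero_iff_of_nonpos (hnonpos x hx)] at h0
  refine F.ext_coord fun z hz => ?_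
  rw [map_smul, map_add, F.coord_eq_ite hz hF.left_mem, F.coord_eq_ite hz hF.right_mem, smul_eq_mul]
  by_cases hzv : z = v
  · subst hzv; simp only [hF.ne, if_true, if_false]; linarith
  by_cases hzw : z = w
  · subst hzw; simp only [hzv, if_true, if_false]; linarith
  simpa [hzv, hzw] using h0 z (mem_erase_erase_iff.2 ⟨hz, hzv, hzw⟩)

theorem sum_coord_opp_nonpos_of_isMidpoint {s : E} (hs : s ∈ F.verts) :
    ∑ z ∈ (F.verts.erase w).erase v, F.coord z (F.opp s) ≤ 0 := by
  refine realInt.nonpos_of_lt_one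
    (sum_mem fun z hz => hS.coord_mem_of_isMidpoint hF hz (hS.opp_mem F hs)) ?_
  have hheight := hF.height_eq_add (F.opp s)
  rw [hS.height_opp_of_isSpecial hF.isSpecial hs] at hheight
  have hge : ∀ u ∈ F.verts, F.jump u = 2 → -(if u = s then (1 / 2 : ℝ) else 0) ≤
      F.coord u (F.opp s) := fun u hu hjump => by
    split_ifs with h
    · subst h
      have := hS.jump_mul_coord_opp_of_isSpecial hF.isSpecial hu
      rw [hjump] at this
      linarith
    · rw [neg_zero]; exact hS.coord_opp_nonneg_of_isSpecial hF.isSpecial hs hu h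
  have hv := hge v hF.left_mem hF.jump_left
  have hw := hge w hF.right_mem hF.jump_right
  by_cases hvs : v = s
  · rw [if_pos hvs] at hv
    rw [if_neg fun h => hF.ne (hvs.trans h.symm)] at hw
    linarith
  · rw [if_neg hvs] at hv
    split_ifs at hw <;> linarith

theorem sum_coord_opp_eq_zero_of_isMidpoint {s : E} (hs : s ∈ F.verts) :
    ∑ z ∈ (F.verts.erase w).erase v, F.coord z (F.opp s) = 0 := by
  have hnu : ∑ z ∈ (F.verts.erase w).erase v, F.coord z (∑ x ∈ V, x) = 0 :=
    Finset.sum_eq_zero fun z hz => by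
      obtain ⟨hzF, hzv, hzw⟩ := mem_erase_erase_iff.1 hz
      exact hF.coord_sum z hzF hzv hzw
  have hverts : ∑ x ∈ F.verts, ∑ z ∈ (F.verts.erase w).erase v, F.coord z x = d - 2 := by
    rw [Finset.sum_comm]
    have hone : ∀ z ∈ (F.verts.erase w).erase v, ∑ x ∈ F.verts, F.coord z x = 1 := fun z hz => by
      have hzF := (mem_erase_erase_iff.1 hz).1
      rw [Finset.sum_congr rfl fun x hx => F.coord_eq_ite hzF hx]
      simp [hzF]
    have h1 := Finset.card_erase_add_one hF.right_mem
    have h2 := Finset.card_erase_add_one (Finset.mem_erase.2 ⟨hF.ne, hF.left_mem⟩)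
    rw [F.card_verts] at h1
    have h3 : (((F.verts.erase w).erase v).card : ℝ) + 2 = d := by exact_mod_cast (by omega)
    rw [Finset.sum_congr rfl hone, Finset.sum_const, nsmul_eq_mul, mul_one]
    linarith
  simp only [map_sum] at hnu
  rw [Finset.sum_comm, hS.sum_eq_sum_levels F, hverts,
    hS.sum_zeroLevel (hS.card_zeroLevel_of_isSpecial hF.isSpecial)] at hnu
  have hnonpos := fun s hs => hS.sum_coord_opp_nonpos_of_isMidpoint (s := s) hF hs
  have hneg := hS.sum_negLevel_le_of_isMidpoint hF
  have hle := Finset.sum_nonpos hnonpos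
  exact (Finset.sum_eq_zero_iff_of_nonpos hnonpos).1 (le_antisymm hle (by linarith)) s hs

theorem exists_opp_eq_sub_of_isMidpoint {z : E} (hz : z ∈ (F.verts.erase w).erase v) :
    ∃ s ∈ (F.verts.erase w).erase v, s ≠ z ∧ F.opp z = s - z := by
  obtain ⟨hzF, hzv, hzw⟩ := mem_erase_erase_iff.1 hz
  have hheight := hF.height_eq_add (F.opp z)
  have hopp := hS.height_opp_of_isSpecial hF.isSpecial hzF
  rw [hS.sum_coord_opp_eq_zero_of_isMidpoint hF hzF, hopp] at hheight
  have hv0 := hS.coord_opp_nonneg_of_isSpecial hF.isSpecial hzF hF.left_mem (Ne.symm hzv)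
  have hw0 := hS.coord_opp_nonneg_of_isSpecial hF.isSpecial hzF hF.right_mem (Ne.symm hzw)
  have hv : F.coord v (F.opp z) = 0 := by linarith
  have hw : F.coord w (F.opp z) = 0 := by linarith
  have hc := hS.jump_mul_coord_opp_of_isSpecial hF.isSpecial hzF
  rw [hS.jump_eq_one_of_isSpecial hF.isSpecial hzF (hF.coord_sum z hzF hzv hzw), one_mul] at hc
  obtain ⟨s, hs, hsz, e⟩ := F.eq_sub_of_height_eq_zero hzF hopp hc
    (fun u hu huz => hS.coord_opp_nonneg_of_isSpecial hF.isSpecial hzF hu huz) fun u hu => by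
      by_cases huv : u = v
      · rw [huv, hv]; exact zero_mem _
      by_cases huw : u = w
      · rw [huw, hw]; exact zero_mem _
      exact hS.coord_mem_of_isMidpoint hF (mem_erase_erase_iff.2 ⟨hu, huv, huw⟩) (hS.opp_mem F hzF)
  have hone : F.coord s (F.opp z) = 1 := by
    rw [e, map_sub, F.coord_self s hs, F.coord_of_ne s hs z hzF hsz, sub_zero]
  refine ⟨s, mem_erase_erase_iff.2 ⟨hs, ?_, ?_⟩, hsz, e⟩
  · rintro rfl; linarith
  · rintro rfl; linarith

theorem even_of_isMidpoint : Even d := by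
  have h : ∀ z, ∃ s, z ∈ (F.verts.erase w).erase v →
      s ∈ (F.verts.erase w).erase v ∧ s ≠ z ∧ F.opp z = s - z := fun z => by
    by_cases hz : z ∈ (F.verts.erase w).erase v
    · obtain ⟨s, hs⟩ := hS.exists_opp_eq_sub_of_isMidpoint hF hz
      exact ⟨s, fun _ => hs⟩
    · exact ⟨z, fun h => absurd h hz⟩
  choose σ hσ using h
  have hmem : ∀ z ∈ (F.verts.erase w).erase v, z ∈ F.verts ∧ F.coord z (∑ x ∈ V, x) = 0 :=
    fun z hz => by
      obtain ⟨hzF, hzv, hzw⟩ := mem_erase_erase_iff.1 hz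
      exact ⟨hzF, hF.coord_sum z hzF hzv hzw⟩
  have heven := even_card_of_involution (fun z hz => (hσ z hz).1)
    (fun z hz => by
      obtain ⟨hy, hyz, e⟩ := hσ z hz
      obtain ⟨ht, hty, e'⟩ := hσ (σ z) hy
      exact hS.eq_of_opp_eq_sub hF.isSpecial (hmem z hz).1 (hmem _ hy).1 (hmem _ ht).1 hyz.symm hty
        (hmem _ hy).2 (hmem _ ht).2 e e')
    (fun z hz => (hσ z hz).2.1)
  have h1 := Finset.card_erase_add_one hF.right_mem
  have h2 := Finset.card_erase_add_one (Finset.mem_erase.2 ⟨hF.ne, hF.left_mem⟩)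
  rw [F.card_verts] at h1
  obtain ⟨m, hm⟩ := heven
  exact ⟨m + 1, by omega⟩

end Midpoint

end FacetSystem

end

/-! ### Pointed special facets -/

section

variable {E : Type*} [AddCommGroup E] [Module ℝ E] {V : Finset E} {L : AddSubgroup E} {d : ℕ}

namespace FacetSystem

open SimplicialFacet

variable (hS : FacetSystem V L d) {F : SimplicialFacet V L d}
include hS

theorem coord_mem (hF : F.IsUnimodular) {v x : E} (hv : v ∈ F.verts) (hx : x ∈ V) :
    F.coord v x ∈ realInt := hF x (hS.mem_lattice x hx) v hv

theorem exists_isPointed (hF : F.IsSpecial) (hjump : ∀ v ∈ F.verts, F.jump v = 1) :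
    ∃ σ a, F.IsPointed σ a := by
  have hU : F.IsUnimodular := fun x hx v hv => by
    have := hS.jump_mul_coord_mem F hv hx
    rwa [hjump v hv, one_mul] at this
  obtain ⟨a, ha, ha1, ha0⟩ := exists_unique_one_of_sum_eq_one hF.coord_sum_nonneg
    (hU _ hS.sum_mem_lattice) (by rw [← F.height_apply, hS.height_sum_of_isSpecial hF])
  have hopp : ∀ v, ∃ s, v ∈ F.verts → s ∈ F.verts ∧ s ≠ v ∧ F.opp v = s - v := fun v => by
    by_cases hv : v ∈ F.verts
    · have hc := hS.jump_mul_coord_opp_of_isSpecial hF hv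
      rw [hjump v hv, one_mul] at hc
      obtain ⟨s, hs⟩ := F.eq_sub_of_height_eq_zero hv (hS.height_opp_of_isSpecial hF hv) hc
        (fun w hw hwv => hS.coord_opp_nonneg_of_isSpecial hF hv hw hwv)
        fun w hw => hS.coord_mem hU hw (hS.opp_mem F hv)
      exact ⟨s, fun _ => hs⟩
    · exact ⟨v, fun h => absurd h hv⟩
  choose σ hσ using hopp
  exact ⟨σ, a, hF, ha, ha1, ha0, hU, hjump, fun v hv => (hσ v hv).1, fun v hv => (hσ v hv).2.1,
    fun v hv => (hσ v hv).2.2⟩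

section Pointed

variable {σ : E → E} {a : E} (hF : F.IsPointed σ a)
include hF

theorem map_map_eq_or_of_isPointed {v : E} (hv : v ∈ F.verts) (ha : σ v ≠ a) :
    σ (σ v) = v ∨ σ (σ v) = a := by
  by_cases h : σ (σ v) = a
  · exact Or.inr h
  have hσv := hF.map_mem v hv
  have hσσv := hF.map_mem _ hσv
  exact Or.inl <| hS.eq_of_opp_eq_sub hF.isSpecial hv hσv hσσv (hF.map_ne_self v hv).symm
    (hF.map_ne_self _ hσv) (hF.coord_sum _ hσv ha) (hF.coord_sum _ hσσv h) (hF.opp_eq v hv)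
    (hF.opp_eq _ hσv)

theorem card_fiber_add_of_isPointed {s : E} (hs : s ∈ F.verts) :
    ({t ∈ F.verts | σ t = s}.card : ℝ) + ∑ x ∈ F.negLevel, F.coord s x =
      if s = a then 1 else 0 := by
  have hsum : F.coord s (∑ x ∈ V, x) = if s = a then 1 else 0 := by
    split_ifs with h
    · rw [h, hF.coord_sum_self]
    · exact hF.coord_sum s hs h
  rw [← hsum, map_sum, hS.sum_eq_sum_levels F,
    hS.sum_zeroLevel (hS.card_zeroLevel_of_isSpecial hF.isSpecial),
    Finset.sum_congr rfl fun t ht => congrArg (F.coord s) (hF.opp_eq t ht),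
    F.sum_coord_sub subset_rfl hF.map_mem hs, Finset.sum_congr rfl fun x hx => F.coord_eq_ite hs hx]
  simp [hs]

theorem coord_nonpos_of_isPointed {x v : E} (hx : x ∈ F.negLevel) (hv : v ∈ F.verts)
    (hva : v ≠ a) : F.coord v x ≤ 0 :=
  hS.coord_nonpos_of_mem_negLevel hF.isSpecial hv (hF.coord_sum v hv hva) hx

theorem eq_neg_of_isPointed {x : E} (hx : x ∈ F.negLevel) (ha : F.coord a x ≤ 0) :
    ∃ s ∈ F.verts, x = -s := by
  refine F.eq_neg_of_height_eq_neg_one (hS.height_eq_neg_one_of_isSpecial hF.isSpecial hx)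
    (fun v hv => ?_) fun v hv => hS.coord_mem hF.isUnimodular hv (F.mem_negLevel.1 hx).1
  by_cases hva : v = a
  · rwa [hva]
  · exact hS.coord_nonpos_of_isPointed hF hx hv hva

theorem ite_le_coord_of_isPointed {x : E} (hx : x ∈ F.negLevel) :
    -(if x = -a then 1 else 0) ≤ F.coord a x := by
  by_cases hneg : F.coord a x < 0
  · obtain ⟨s, hs, rfl⟩ := hS.eq_neg_of_isPointed hF hx hneg.le
    rw [map_neg, F.coord_eq_ite hF.mem hs]
    simp only [neg_inj, eq_comm, le_refl]
  · refine le_trans ?_ (not_lt.1 hneg)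
    split_ifs <;> norm_num

/-- The coordinate at `a` being positive, `a` must be the vertex `σ u` contributed by `F.opp u`. -/
theorem eq_sub_sub_of_isPointed {x u : E} (hx : x ∈ F.negLevel) (ha : 1 ≤ F.coord a x)
    (hu : u ∈ F.verts) (hua : u ≠ a) (hc : F.coord u x < 0) :
    σ u = a ∧ ∃ y ∈ F.verts, y ≠ u ∧ y ≠ a ∧ x = a - u - y := by
  obtain ⟨y, hy, hyu, e⟩ :=
    hS.eq_opp_sub_of_coord_neg hF.isSpecial hu (hF.coord_sum u hu hua) hx hc
  rw [hF.opp_eq u hu] at e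
  have hcoord : F.coord a x =
      (if a = σ u then 1 else 0) - (if a = u then 1 else 0) - if a = y then 1 else 0 := by
    rw [e, map_sub, map_sub, F.coord_eq_ite hF.mem (hF.map_mem u hu), F.coord_eq_ite hF.mem hu,
      F.coord_eq_ite hF.mem hy]
  rw [if_neg hua.symm] at hcoord
  have hσu : a = σ u := by
    by_contra h
    rw [if_neg h] at hcoord
    split_ifs at hcoord <;> linarith
  refine ⟨hσu.symm, y, hy, hyu, fun h => ?_, by rw [e, ← hσu]⟩
  rw [if_pos h.symm, if_pos hσu] at hcoord
  linarith

theorem coord_self_nonpos_of_isPointed {x : E} (hx : x ∈ F.negLevel) : F.coord a x ≤ 0 := by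
  by_contra! hpos
  have h1 := realInt.one_le_of_pos
    (hS.coord_mem hF.isUnimodular hF.mem (F.mem_negLevel.1 hx).1) hpos
  obtain ⟨u, hu, hua, hc⟩ : ∃ u ∈ F.verts, u ≠ a ∧ F.coord u x < 0 := by
    by_contra! h
    have hheight := hS.height_eq_neg_one_of_isSpecial hF.isSpecial hx
    rw [F.height_eq_add_sum_erase hF.mem] at hheight
    have := Finset.sum_nonneg fun u hu =>
      h u (Finset.mem_of_mem_erase hu) (Finset.ne_of_mem_erase hu)
    linarith
  obtain ⟨hσu, y, hy, hyu, hya, e⟩ := hS.eq_sub_sub_of_isPointed hF hx h1 hu hua hc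
  obtain ⟨hσy, -⟩ := hS.eq_sub_sub_of_isPointed hF hx h1 hy hya <| by
    rw [e, map_sub, map_sub, F.coord_of_ne y hy a hF.mem hya, F.coord_of_ne y hy u hu hyu,
      F.coord_self y hy]
    norm_num
  have hfiber : 2 ≤ {t ∈ F.verts | σ t = a}.card := by
    rw [← Finset.card_pair hyu]
    refine Finset.card_le_card fun t ht => ?_
    rcases Finset.mem_insert.1 ht with rfl | ht
    · exact Finset.mem_filter.2 ⟨hy, hσy⟩
    · rw [Finset.mem_singleton.1 ht]
      exact Finset.mem_filter.2 ⟨hu, hσu⟩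
  have hrest : -1 ≤ ∑ z ∈ F.negLevel.erase x, F.coord a z := by
    refine le_trans ?_ (Finset.sum_le_sum fun z hz =>
      hS.ite_le_coord_of_isPointed hF (Finset.mem_of_mem_erase hz))
    rw [Finset.sum_neg_distrib, Finset.sum_ite_eq']
    split_ifs <;> norm_num
  have hcount := hS.card_fiber_add_of_isPointed hF hF.mem
  rw [if_pos rfl, ← Finset.add_sum_erase _ _ hx] at hcount
  have : (2 : ℝ) ≤ {t ∈ F.verts | σ t = a}.card := by exact_mod_cast hfiber
  linarith

theorem eq_neg_of_mem_negLevel_of_isPointed : ∀ x ∈ F.negLevel, ∃ s ∈ F.verts, x = -s :=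
  fun _ hx => hS.eq_neg_of_isPointed hF hx (hS.coord_self_nonpos_of_isPointed hF hx)

theorem card_fiber_of_isPointed {s : E} (hs : s ∈ F.verts) : {t ∈ F.verts | σ t = s}.card =
    (if -s ∈ V then 1 else 0) + if s = a then 1 else 0 := by
  have hcount := hS.card_fiber_add_of_isPointed hF hs
  have hneg : -s ∈ F.negLevel ↔ -s ∈ V := by
    rw [F.mem_negLevel, map_neg, F.height_of_mem hs]; norm_num
  rw [F.sum_coord_neg (hS.eq_neg_of_mem_negLevel_of_isPointed hF) hs] at hcount
  simp only [hneg] at hcount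
  have : ({t ∈ F.verts | σ t = s}.card : ℝ) =
      ((if -s ∈ V then 1 else 0) + if s = a then 1 else 0 : ℕ) := by
    push_cast; linarith
  exact_mod_cast this

/-- The point `q` at which `σ` fails to be an involution is not a value of `σ`, so `-q` is not a
vertex and `q` has to play the role of the unpaired vertex. -/
theorem exists_isNormalForm_of_isPointed (hd : Odd d) :
    ∃ q, σ q ∈ F.verts ∧ σ q ≠ q ∧ F.IsNormalForm σ q (σ q - q) := by
  obtain ⟨q, hq, hqq, hσσ⟩ := exists_map_map_ne_of_odd_card (F.card_verts.symm ▸ hd) hF.map_mem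
    hF.map_ne_self hF.mem (fun t ht => hS.map_map_eq_or_of_isPointed hF ht) fun s hs => by
      rw [hS.card_fiber_of_isPointed hF hs]
      split_ifs <;> omega
  have hnotimage : ∀ t ∈ F.verts, σ t ≠ q := by
    intro t ht e
    by_cases htq : t = q
    · exact hF.map_ne_self q hq (by rw [← htq, e, htq])
    · exact hqq (by rw [← e, hσσ t ht htq])
  have hneg : -q ∉ V := fun h => by
    have hfiber := hS.card_fiber_of_isPointed hF hq
    rw [Finset.filter_eq_empty_iff.2 fun t ht => hnotimage t ht, if_pos h, Finset.card_empty]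
      at hfiber
    omega
  refine ⟨q, hF.map_mem q hq, hF.map_ne_self q hq, hF.isUnimodular, hq,
    fun t ht _ => hF.map_mem t ht, fun t ht _ => hnotimage t ht, hσσ,
    fun t ht _ => hF.map_ne_self t ht, fun x hx => ?_⟩
  by_cases hxF : x ∈ F.verts
  · by_cases hxq : x = q
    exacts [Or.inl hxq, Or.inr (Or.inr ⟨x, hxF, hxq, Or.inl rfl⟩)]
  rcases (hS.height_nonpos F hx hxF).lt_or_eq with h | h
  · obtain ⟨s, hs, rfl⟩ := hS.eq_neg_of_mem_negLevel_of_isPointed hF x (F.mem_negLevel.2 ⟨hx, h⟩)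
    exact Or.inr (Or.inr ⟨s, hs, fun e => hneg (e ▸ hx), Or.inr (Or.inl rfl)⟩)
  · obtain ⟨t, ht, rfl⟩ := hS.exists_opp_eq_of_height_eq_zero F hx h
    rw [hF.opp_eq t ht]
    by_cases htq : t = q
    · exact Or.inr (Or.inl (by rw [htq]))
    · exact Or.inr (Or.inr ⟨t, ht, htq, Or.inr (Or.inr rfl)⟩)

end Pointed

theorem exists_isNormalForm_of_sum_ne_zero (hd : Odd d) (hsum : ∑ x ∈ V, x ≠ 0) :
    ∃ (F : SimplicialFacet V L d) (σ : E → E) (c a : E),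
      a ∈ F.verts ∧ a ≠ c ∧ F.IsNormalForm σ c (a - c) := by
  obtain ⟨F, hnonneg⟩ := hS.exists_coord_nonneg (∑ x ∈ V, x)
  have hF : F.IsSpecial := ⟨hsum, hnonneg⟩
  obtain ⟨σ, a, hP⟩ := hS.exists_isPointed hF fun w hw => by
    by_contra hjump
    obtain ⟨v, hM⟩ := hS.exists_isMidpoint hF hw hjump
    exact Nat.not_even_iff_odd.2 hd (hS.even_of_isMidpoint hM)
  obtain ⟨q, hq⟩ := hS.exists_isNormalForm_of_isPointed hP hd
  exact ⟨F, σ, q, σ q, hq⟩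

end FacetSystem

end

/-! ### Vertex sum zero: collisions of opposite vertices -/

section

variable {E : Type*} [AddCommGroup E] [Module ℝ E] {V : Finset E} {L : AddSubgroup E} {d : ℕ}

namespace SimplicialFacet

variable (F : SimplicialFacet V L d)

/-- A facet over which every vertex has height at least `-1`. If the vertices sum to zero, every
other facet has exactly one vertex of height `-2`, and none of smaller height. -/
def IsShallow : Prop := ∀ x ∈ V, -1 ≤ F.height x

/-- Two vertices of a facet whose opposite ridges lead to the same neighboring vertex. -/
structure IsCollision (p q : E) : Prop where
  left_mem : p ∈ F.verts
  right_mem : q ∈ F.verts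
  ne : p ≠ q
  opp_eq : F.opp p = F.opp q

variable {F}

theorem IsCollision.symm {p q : E} (h : F.IsCollision p q) : F.IsCollision q p :=
  ⟨h.right_mem, h.left_mem, h.ne.symm, h.opp_eq.symm⟩

end SimplicialFacet

namespace FacetSystem

open SimplicialFacet

variable (hS : FacetSystem V L d) {F : SimplicialFacet V L d} {v w x y : E}
include hS

theorem exists_mem_verts (hx : x ∈ V) : ∃ F : SimplicialFacet V L d, x ∈ F.verts := by
  obtain ⟨F, hF⟩ := hS.exists_coord_nonneg x
  refine ⟨F, by_contra fun h => ?_⟩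
  obtain ⟨v, hv, hc⟩ := hS.exists_coord_neg F hx (hS.height_nonpos F hx h)
  linarith [hF v hv]

theorem neg_sub_self_notMem (hx : x ∈ V) : -x - x ∉ V := by
  intro h
  obtain ⟨F, hF⟩ := hS.exists_mem_verts h
  have hheight := F.height_of_mem hF
  rw [map_sub, map_neg] at hheight
  have := realInt.le_neg_one_of_neg (hS.height_mem F hx) (by linarith)
  linarith

theorem jump_eq_one_of_isUnimodular (hU : F.IsUnimodular) (hv : v ∈ F.verts)
    (h0 : F.height (F.opp v) = 0) : F.jump v = 1 := by
  have hmul := hS.jump_mul_coord_opp F hv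
  have hc := realInt.le_neg_one_of_neg (hS.coord_mem hU hv (hS.opp_mem F hv))
    (hS.coord_opp_neg F hv)
  have hjump := hS.one_le_jump F hv
  rw [h0] at hmul
  nlinarith

theorem coord_opp_of_isUnimodular (hU : F.IsUnimodular) (hv : v ∈ F.verts)
    (h0 : F.height (F.opp v) = 0) : F.coord v (F.opp v) = -1 := by
  have hmul := hS.jump_mul_coord_opp F hv
  rw [h0, hS.jump_eq_one_of_isUnimodular hU hv h0] at hmul
  linarith

theorem neighbor_coord_opp (hv : v ∈ F.verts) (hc : F.coord v (F.opp v) = -1) (x : E) :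
    (F.neighbor v).coord (F.opp v) x = -F.coord v x := by
  have := hS.coord_eq_neighbor_coord_mul F hv x
  rw [hc] at this
  linarith

theorem isUnimodular_neighbor (hU : F.IsUnimodular) (hv : v ∈ F.verts)
    (hc : F.coord v (F.opp v) = -1) : (F.neighbor v).IsUnimodular := by
  intro x hx w hw
  have hpivot : (F.neighbor v).coord (F.opp v) x ∈ realInt := by
    rw [hS.neighbor_coord_opp hv hc]; exact neg_mem (hU x hx v hv)
  rcases (hS.mem_neighbor_iff F hv).1 hw with rfl | ⟨hw, hwv⟩
  · exact hpivot
  · rw [eq_sub_of_add_eq (hS.coord_eq_neighbor_coord_add F hv hw hwv x).symm]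
    exact sub_mem (hU x hx w hw) (mul_mem hpivot (hS.coord_mem hU hw (hS.opp_mem F hv)))

section SumZero

variable (hsum : ∑ x ∈ V, x = 0)
include hsum

theorem neg_two_le_height (F : SimplicialFacet V L d) (hx : x ∈ V) : -2 ≤ F.height x := by
  have hle := hS.le_height F hx
  have hcard : (F.zeroLevel.card : ℝ) ≤ d := by exact_mod_cast hS.card_zeroLevel_le F
  rw [hsum, map_zero] at hle
  linarith

theorem le_card_zeroLevel_add_one (F : SimplicialFacet V L d) : d ≤ F.zeroLevel.card + 1 := by
  have hle := hS.height_sum_le F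
  rw [hsum, map_zero] at hle
  have : (d : ℝ) ≤ F.zeroLevel.card + 1 := by linarith
  exact_mod_cast this

theorem isShallow_of_card (h : F.zeroLevel.card < d) : F.IsShallow := by
  intro x hx
  have hle := hS.le_height F hx
  have hcard : (F.zeroLevel.card : ℝ) + 1 ≤ d := by exact_mod_cast h
  rw [hsum, map_zero] at hle
  linarith

omit hsum in
theorem height_eq_neg_one_of_isShallow (hF : F.IsShallow) (hx : x ∈ F.negLevel) :
    F.height x = -1 :=
  le_antisymm (hS.height_le_neg_one F hx) (hF x (F.mem_negLevel.1 hx).1)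

theorem card_zeroLevel_of_isShallow (hF : F.IsShallow) : F.zeroLevel.card + 1 = d := by
  have hneg := hS.sum_negLevel F
  rw [hsum, map_zero, Finset.sum_eq_zero fun x hx => by
    rw [hS.height_eq_neg_one_of_isShallow hF hx]; norm_num] at hneg
  have : (F.zeroLevel.card : ℝ) + 1 = d := by linarith
  exact_mod_cast this

theorem card_zeroLevel_of_not_isShallow (hF : ¬F.IsShallow) : F.zeroLevel.card = d :=
  le_antisymm (hS.card_zeroLevel_le F) (not_lt.1 fun h => hF (hS.isShallow_of_card hsum h))

theorem card_negLevel_of_isShallow (hF : F.IsShallow) : F.negLevel.card = d := by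
  have := hS.card_levels F
  have := hS.card_zeroLevel_of_isShallow hsum hF
  omega

theorem existsUnique_height_eq_neg_two (hF : ¬F.IsShallow) :
    ∃! x, x ∈ V ∧ F.height x = -2 := by
  have hneg := hS.sum_negLevel F
  rw [hsum, map_zero, hS.card_zeroLevel_of_not_isShallow hsum hF] at hneg
  obtain ⟨x, hx, hx1, hx0⟩ := exists_unique_one_of_sum_eq_one
    (fun x hx => by linarith [hS.height_le_neg_one F hx])
    (fun x hx => sub_mem (neg_mem (hS.height_mem F (F.mem_negLevel.1 hx).1)) (one_mem _))
    (hneg.trans (by ring))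
  refine ⟨x, ⟨(F.mem_negLevel.1 hx).1, by linarith⟩, fun y ⟨hy, hy2⟩ => by_contra fun hne => ?_⟩
  linarith [hx0 y (F.mem_negLevel.2 ⟨hy, by linarith⟩) hne]

omit hS hsum in
theorem not_isShallow_of_height_eq_neg_two (hx : x ∈ V) (h : F.height x = -2) :
    ¬F.IsShallow := fun hF => by linarith [hF x hx]

theorem jump_le_two (F : SimplicialFacet V L d) (hv : v ∈ F.verts) : F.jump v ≤ 2 := by
  by_cases h : F.jump v = 1
  · linarith
  · have := hS.height_sum_add_jump_le F hv h
    rw [hsum, map_zero, map_zero] at this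
    linarith

theorem height_opp_of_not_isShallow (hF : ¬F.IsShallow) (hv : v ∈ F.verts) :
    F.height (F.opp v) = 0 :=
  hS.height_opp_eq_zero_of_card F (hS.card_zeroLevel_of_not_isShallow hsum hF) hv

theorem jump_eq_one_of_not_isShallow_neighbor (hv : v ∈ F.verts)
    (h : ¬(F.neighbor v).IsShallow) : F.jump v = 1 := by
  have h0 := hS.height_opp_of_not_isShallow hsum h (hS.opp_mem_neighbor F hv)
  rw [hS.neighbor_opp_opp F hv, F.neighbor_height_self] at h0
  linarith

theorem eq_of_height_opp_ne_zero (F : SimplicialFacet V L d) (hv : v ∈ F.verts) (hw : w ∈ F.verts)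
    (hv0 : F.height (F.opp v) ≠ 0) (hw0 : F.height (F.opp w) ≠ 0) : v = w := by
  by_contra hvw
  have hle := hS.card_zeroLevel_le_of_cover F ((F.verts.erase w).erase v) fun s hs hsT h0 => by
    have hsv : s ≠ v := fun e => hv0 (e ▸ h0)
    have hsw : s ≠ w := fun e => hw0 (e ▸ h0)
    exact absurd (mem_erase_erase_iff.2 ⟨hs, hsv, hsw⟩) hsT
  have h1 := Finset.card_erase_add_one hw
  have h2 := Finset.card_erase_add_one (Finset.mem_erase.2 ⟨hvw, hv⟩)
  have h3 := hS.le_card_zeroLevel_add_one hsum F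
  rw [F.card_verts] at h1
  omega

theorem exists_isUnimodular : ∃ F : SimplicialFacet V L d, F.IsUnimodular := by
  obtain ⟨F, hF⟩ := hS.one_le_abs_coord
  have hjump : ∀ v ∈ F.verts, F.height (F.opp v) = 0 → F.jump v = 1 := fun v hv h0 => by
    have hc := hF v hv _ _ (hS.isNeighbor F hv)
    have hmul := hS.jump_mul_coord_opp F hv
    rw [abs_of_neg (hS.coord_opp_neg F hv)] at hc
    rw [h0] at hmul
    nlinarith [hS.one_le_jump F hv]
  have hint : ∀ v ∈ F.verts, F.height (F.opp v) = 0 → ∀ x ∈ L, F.coord v x ∈ realInt :=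
    fun v hv h0 x hx => by
      have := hS.jump_mul_coord_mem F hv hx
      rwa [hjump v hv h0, one_mul] at this
  refine ⟨F, fun x hx v hv => ?_⟩
  by_cases h0 : F.height (F.opp v) = 0
  · exact hint v hv h0 x hx
  · rw [eq_sub_of_add_eq (F.height_eq_add_sum_erase hv x).symm]
    refine sub_mem (F.height_mem hx) (sum_mem fun w hw => ?_)
    obtain ⟨hwv, hw⟩ := Finset.mem_erase.1 hw
    exact hint w hw (by_contra fun h => hwv (hS.eq_of_height_opp_ne_zero hsum F hw hv h h0)) x hx

theorem coord_nonpos_of_height_eq_neg_two (hU : F.IsUnimodular) (hx : x ∈ V)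
    (h : F.height x = -2) (hw : w ∈ F.verts) : F.coord w x ≤ 0 := by
  have hle := hS.neg_two_le_height hsum (F.neighbor w) hx
  rw [hS.neighbor_height F hw, h, hS.jump_eq_one_of_isUnimodular hU hw
    (hS.height_opp_of_not_isShallow hsum (not_isShallow_of_height_eq_neg_two hx h) hw)] at hle
  linarith

section Collision

variable {p q r : E} (h : F.IsCollision p q)
include h

theorem false_of_isCollision_of_cover (hr : r ∈ F.verts) (hrp : r ≠ p) (hrq : r ≠ q)
    (hcover : F.height (F.opp r) = 0 → ∃ t ∈ F.verts, t ≠ r ∧ t ≠ q ∧ F.opp t = F.opp r) :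
    False := by
  have hle := hS.card_zeroLevel_le_of_cover F ((F.verts.erase q).erase r) fun s hs hsT h0 => by
    by_cases hsq : s = q
    · exact ⟨p, mem_erase_erase_iff.2 ⟨h.left_mem, hrp.symm, h.ne⟩, by rw [hsq, h.opp_eq]⟩
    obtain rfl : s = r := by_contra fun hsr => hsT (mem_erase_erase_iff.2 ⟨hs, hsr, hsq⟩)
    obtain ⟨t, ht, hts, htq, e⟩ := hcover h0
    exact ⟨t, mem_erase_erase_iff.2 ⟨ht, hts, htq⟩, e⟩
  have h1 := Finset.card_erase_add_one h.right_mem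
  have h2 := Finset.card_erase_add_one (Finset.mem_erase.2 ⟨hrq, hr⟩)
  have h3 := hS.le_card_zeroLevel_add_one hsum F
  rw [F.card_verts] at h1
  omega

theorem isShallow_of_isCollision : F.IsShallow :=
  hS.isShallow_of_card hsum (hS.card_zeroLevel_lt_of_opp_eq F h.left_mem h.right_mem h.ne h.opp_eq)

theorem height_opp_of_isCollision (hr : r ∈ F.verts) : F.height (F.opp r) = 0 := by
  by_contra hne
  have hp : F.height (F.opp p) = 0 := by
    by_contra hp
    exact h.ne (hS.eq_of_height_opp_ne_zero hsum F h.left_mem h.right_mem hp (h.opp_eq ▸ hp))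
  have hrp : r ≠ p := fun e => hne (e ▸ hp)
  have hrq : r ≠ q := fun e => hne (e ▸ h.opp_eq ▸ hp)
  exact hS.false_of_isCollision_of_cover hsum h hr hrp hrq fun h0 => absurd h0 hne

theorem eq_of_isCollision_of_opp_eq {t : E} (hr : r ∈ F.verts) (ht : t ∈ F.verts) (hrp : r ≠ p)
    (hrq : r ≠ q) (e : F.opp t = F.opp r) : t = r := by
  by_contra htr
  refine hS.false_of_isCollision_of_cover hsum h hr hrp hrq fun _ => ?_
  by_cases htq : t = q
  · exact ⟨p, h.left_mem, hrp.symm, h.ne, by rw [h.opp_eq, ← htq, e]⟩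
  · exact ⟨t, ht, htr, htq, e⟩

variable (hU : F.IsUnimodular)
include hU

theorem exists_opp_eq_sub_of_isCollision (hr : r ∈ F.verts) (hrp : r ≠ p) (hrq : r ≠ q) :
    ∃ s ∈ F.verts, s ≠ r ∧ F.opp r = s - r := by
  have h0 := hS.height_opp_of_isCollision hsum h hr
  refine F.eq_sub_of_height_eq_zero hr h0 (hS.coord_opp_of_isUnimodular hU hr h0)
    (fun w hw hwr => ?_) fun w hw => hS.coord_mem hU hw (hS.opp_mem F hr)
  by_contra! hneg
  exact hwr (hS.eq_of_isCollision_of_opp_eq hsum h hr hw hrp hrq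
    (hS.eq_opp_of_coord_neg F hw (hS.opp_mem F hr) h0 hneg).symm)

theorem exists_eq_sub_of_isCollision (hy : y ∈ V) (h0 : F.height y = 0) (hyp : y ≠ F.opp p) :
    ∃ r ∈ F.verts, ∃ s ∈ F.verts, r ≠ p ∧ r ≠ q ∧ s ≠ r ∧ y = s - r := by
  obtain ⟨r, hr, rfl⟩ := hS.exists_opp_eq_of_height_eq_zero F hy h0
  have hrp : r ≠ p := fun e => hyp (e ▸ rfl)
  have hrq : r ≠ q := fun e => hyp (e ▸ h.opp_eq.symm)
  obtain ⟨s, hs, hsr, e⟩ := hS.exists_opp_eq_sub_of_isCollision hsum h hU hr hrp hrq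
  exact ⟨r, hr, s, hs, hrp, hrq, hsr, e⟩

theorem exists_opp_eq_add_sub_sub_of_isCollision : ∃ t ∈ F.verts, ∃ s ∈ F.verts,
    t ≠ p ∧ t ≠ q ∧ s ≠ p ∧ s ≠ q ∧ F.opp p = t + s - p - q := by
  have h0 := hS.height_opp_of_isCollision hsum h h.left_mem
  have hx := hS.opp_mem F h.left_mem
  have hp := hS.coord_opp_of_isUnimodular hU h.left_mem h0
  have hq := hS.coord_opp_of_isUnimodular hU h.right_mem
    (hS.height_opp_of_isCollision hsum h h.right_mem)
  rw [← h.opp_eq] at hq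
  have hrest := h0
  rw [F.height_eq_add_sum_erase h.right_mem,
    ← Finset.add_sum_erase _ _ (Finset.mem_erase.2 ⟨h.ne, h.left_mem⟩), hp, hq] at hrest
  obtain ⟨t, ht, s, hs, hts⟩ := exists_add_of_sum_eq_two (T := (F.verts.erase q).erase p)
    (f := fun w => F.coord w (F.opp p))
    (fun w hw => by
      obtain ⟨hwF, hwp, hwq⟩ := mem_erase_erase_iff.1 hw
      by_contra! hneg
      exact hwp (hS.eq_of_isCollision_of_opp_eq hsum h hwF h.left_mem hwp hwq
        (hS.eq_opp_of_coord_neg F hwF hx h0 hneg)).symm)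
    (fun w hw => hS.coord_mem hU (mem_erase_erase_iff.1 hw).1 hx) (by linarith)
  obtain ⟨htF, htp, htq⟩ := mem_erase_erase_iff.1 ht
  obtain ⟨hsF, hsp, hsq⟩ := mem_erase_erase_iff.1 hs
  refine ⟨t, htF, s, hsF, htp, htq, hsp, hsq, F.ext_coord fun w hw => ?_⟩
  rw [map_sub, map_sub, map_add, F.coord_eq_ite hw htF, F.coord_eq_ite hw hsF,
    F.coord_eq_ite hw h.left_mem, F.coord_eq_ite hw h.right_mem]
  by_cases hwp : w = p
  · subst hwp; simp [hp, htp.symm, hsp.symm, h.ne]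
  by_cases hwq : w = q
  · subst hwq; simp [hq, htq.symm, hsq.symm, hwp]
  rw [if_neg hwp, if_neg hwq, hts w (mem_erase_erase_iff.2 ⟨hw, hwp, hwq⟩)]
  ring

theorem isUnimodular_neighbor_of_isCollision (hr : r ∈ F.verts) :
    (F.neighbor r).IsUnimodular :=
  hS.isUnimodular_neighbor hU hr
    (hS.coord_opp_of_isUnimodular hU hr (hS.height_opp_of_isCollision hsum h hr))

theorem isCollision_neighbor_self : (F.neighbor p).IsCollision (F.opp p) q := by
  have hq := hS.mem_neighbor F h.left_mem h.right_mem h.ne.symm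
  have hopp := hS.opp_mem_neighbor F h.left_mem
  refine ⟨hopp, hq, (hS.ne_opp F h.left_mem h.right_mem).symm, ?_⟩
  rw [hS.neighbor_opp_opp F h.left_mem]
  obtain ⟨t, ht, s, hs, htp, htq, hsp, hsq, e⟩ :=
    hS.exists_opp_eq_add_sub_sub_of_isCollision hsum h hU
  refine hS.eq_opp_of_coord_neg _ hq (F.verts_subset h.left_mem) ?_ ?_
  · rw [F.neighbor_height_self, hS.jump_eq_one_of_isUnimodular hU h.left_mem
      (hS.height_opp_of_isCollision hsum h h.left_mem), sub_self]
  · have hp : p = t + s - F.opp p - q := by rw [e]; abel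
    rw [show (F.neighbor p).coord q p = (F.neighbor p).coord q (t + s - F.opp p - q) by rw [← hp],
      map_sub, map_sub, map_add, coord_self _ q hq,
      coord_of_ne _ q hq t (hS.mem_neighbor F h.left_mem ht htp) htq.symm,
      coord_of_ne _ q hq s (hS.mem_neighbor F h.left_mem hs hsp) hsq.symm,
      coord_of_ne _ q hq _ hopp (hS.ne_opp F h.left_mem h.right_mem)]
    norm_num

theorem neighbor_opp_eq_of_isCollision (hr : r ∈ F.verts) (hrp : r ≠ p)
    (h0 : F.coord r (F.opp p) = 0) : (F.neighbor r).opp p = F.opp p := by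
  have hheight := hS.height_opp_of_isCollision hsum h h.left_mem
  have hpivot := hS.neighbor_coord_opp hr
    (hS.coord_opp_of_isUnimodular hU hr (hS.height_opp_of_isCollision hsum h hr)) (F.opp p)
  have hcoord := hS.coord_eq_neighbor_coord_add F hr h.left_mem hrp.symm (F.opp p)
  rw [hpivot, h0, neg_zero, zero_mul, add_zero] at hcoord
  refine (hS.eq_opp_of_coord_neg _ (hS.mem_neighbor F hr h.left_mem hrp.symm)
    (hS.opp_mem F h.left_mem) ?_ ?_).symm
  · rw [hS.neighbor_height F hr, hheight, h0, mul_zero, sub_zero]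
  · rw [← hcoord]; exact hS.coord_opp_neg F h.left_mem

theorem isCollision_neighbor (hr : r ∈ F.verts) (hrp : r ≠ p) (hrq : r ≠ q)
    (h0 : F.coord r (F.opp p) = 0) : (F.neighbor r).IsCollision p q where
  left_mem := hS.mem_neighbor F hr h.left_mem hrp.symm
  right_mem := hS.mem_neighbor F hr h.right_mem hrq.symm
  ne := h.ne
  opp_eq := by
    rw [hS.neighbor_opp_eq_of_isCollision hsum h hU hr hrp h0, h.opp_eq,
      hS.neighbor_opp_eq_of_isCollision hsum h.symm hU hr hrq (h.opp_eq ▸ h0)]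

/-- If `opp p = 2t - p - q`, its height over the neighbor at `t` is `-2`, but its coordinate at the
vertex `s` with `opp t = s - t` is positive there. -/
theorem opp_ne_of_isCollision {t : E} (ht : t ∈ F.verts) (htp : t ≠ p) (htq : t ≠ q) :
    F.opp p ≠ t + t - p - q := by
  intro e
  have ht0 := hS.height_opp_of_isCollision hsum h ht
  have hx := hS.opp_mem F h.left_mem
  have hcoord : F.coord t (F.opp p) = 2 := by
    rw [e, map_sub, map_sub, map_add, F.coord_self t ht, F.coord_of_ne t ht p h.left_mem htp,
      F.coord_of_ne t ht q h.right_mem htq]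
    norm_num
  have hheight : (F.neighbor t).height (F.opp p) = -2 := by
    rw [hS.neighbor_height F ht, hS.height_opp_of_isCollision hsum h h.left_mem,
      hS.jump_eq_one_of_isUnimodular hU ht ht0, hcoord]
    norm_num
  obtain ⟨s, hs, hst, hopp⟩ := hS.exists_opp_eq_sub_of_isCollision hsum h hU ht htp htq
  have hsN := hS.mem_neighbor F ht hs hst
  have hle := hS.coord_nonpos_of_height_eq_neg_two hsum
    (hS.isUnimodular_neighbor_of_isCollision hsum h hU ht) hx hheight hsN
  have e' : F.opp p = (s - F.opp t) + (s - F.opp t) - p - q := by rw [hopp, e]; abel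
  rw [e', map_sub, map_sub, map_add, map_sub, coord_self _ s hsN,
    coord_of_ne _ s hsN _ (hS.opp_mem_neighbor F ht) (hS.ne_opp F ht hs),
    coord_eq_ite _ hsN (hS.mem_neighbor F ht h.left_mem htp.symm),
    coord_eq_ite _ hsN (hS.mem_neighbor F ht h.right_mem htq.symm)] at hle
  have hpq := h.ne
  split_ifs at hle with hsp hsq
  · exact hpq (hsp.symm.trans hsq)
  all_goals norm_num at hle

end Collision

end SumZero

end FacetSystem

end

/-! ### Expanded collisions -/

section

variable {E : Type*} [AddCommGroup E] [Module ℝ E] {V : Finset E} {L : AddSubgroup E} {d : ℕ}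

namespace SimplicialFacet

variable (F : SimplicialFacet V L d)

/-- A collision at `p` and `q` whose common opposite vertex is `t + s - p - q`, with `t`, `s`, `p`,
`q` distinct vertices of the facet. Every collision of a unimodular facet is of this form. -/
structure IsExpandedCollision (p q t s : E) : Prop extends F.IsCollision p q where
  fst_mem : t ∈ F.verts
  snd_mem : s ∈ F.verts
  fst_ne_snd : t ≠ s
  fst_ne_left : t ≠ p
  fst_ne_right : t ≠ q
  snd_ne_left : s ≠ p
  snd_ne_right : s ≠ q
  opp_left : F.opp p = t + s - p - q

/-- The sum of the coordinates at the vertices of the facet other than `t` and `s`. -/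
def coheight (t s : E) : E →ₗ[ℝ] ℝ := F.height - F.coord t - F.coord s

variable {F}

theorem coheight_apply (t s x : E) :
    F.coheight t s x = F.height x - F.coord t x - F.coord s x := rfl

namespace IsExpandedCollision

variable {p q t s w : E} (h : F.IsExpandedCollision p q t s)
include h

protected theorem symm : F.IsExpandedCollision q p t s where
  toIsCollision := h.toIsCollision.symm
  fst_mem := h.fst_mem
  snd_mem := h.snd_mem
  fst_ne_snd := h.fst_ne_snd
  fst_ne_left := h.fst_ne_right
  fst_ne_right := h.fst_ne_left
  snd_ne_left := h.snd_ne_right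
  snd_ne_right := h.snd_ne_left
  opp_left := by rw [← h.opp_eq, h.opp_left]; abel

theorem coheight_eq_sum (x : E) :
    F.coheight t s x = ∑ w ∈ (F.verts.erase s).erase t, F.coord w x := by
  rw [coheight_apply, F.height_eq_add_sum_erase h.snd_mem,
    ← Finset.add_sum_erase _ _ (Finset.mem_erase.2 ⟨h.fst_ne_snd, h.fst_mem⟩)]
  ring

theorem coheight_of_mem (hw : w ∈ F.verts) :
    F.coheight t s w = 1 - (if t = w then 1 else 0) - (if s = w then 1 else 0) := by
  rw [coheight_apply, F.height_of_mem hw, F.coord_eq_ite h.fst_mem hw, F.coord_eq_ite h.snd_mem hw]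

theorem coheight_of_ne (hw : w ∈ F.verts) (hwt : w ≠ t) (hws : w ≠ s) :
    F.coheight t s w = 1 := by
  rw [h.coheight_of_mem hw, if_neg hwt.symm, if_neg hws.symm]
  norm_num

theorem coheight_le_one (hw : w ∈ F.verts) : F.coheight t s w ≤ 1 := by
  rw [h.coheight_of_mem hw]
  split_ifs <;> norm_num

theorem ne_of_coheight_eq_one (hw : w ∈ F.verts) (h1 : F.coheight t s w = 1) : w ≠ t ∧ w ≠ s := by
  rw [h.coheight_of_mem hw] at h1
  constructor
  · rintro rfl; rw [if_pos rfl, if_neg h.fst_ne_snd.symm] at h1; norm_num at h1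
  · rintro rfl; rw [if_pos rfl, if_neg h.fst_ne_snd] at h1; norm_num at h1

theorem coheight_fst : F.coheight t s t = 0 := by
  rw [h.coheight_of_mem h.fst_mem, if_pos rfl, if_neg h.fst_ne_snd.symm]
  norm_num

theorem coheight_snd : F.coheight t s s = 0 := by
  rw [h.coheight_of_mem h.snd_mem, if_neg h.fst_ne_snd, if_pos rfl]
  norm_num

theorem coheight_opp_left : F.coheight t s (F.opp p) = -2 := by
  rw [h.opp_left, map_sub, map_sub, map_add, h.coheight_fst, h.coheight_snd,
    h.coheight_of_ne h.left_mem h.fst_ne_left.symm h.snd_ne_left.symm,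
    h.coheight_of_ne h.right_mem h.fst_ne_right.symm h.snd_ne_right.symm]
  norm_num

theorem coord_opp_left (hw : w ∈ F.verts) (hwt : w ≠ t) (hws : w ≠ s) (hwp : w ≠ p)
    (hwq : w ≠ q) : F.coord w (F.opp p) = 0 := by
  rw [h.opp_left, map_sub, map_sub, map_add, F.coord_of_ne w hw t h.fst_mem hwt,
    F.coord_of_ne w hw s h.snd_mem hws, F.coord_of_ne w hw p h.left_mem hwp,
    F.coord_of_ne w hw q h.right_mem hwq]
  norm_num

theorem sum_verts_coheight : ∑ w ∈ F.verts, F.coheight t s w = d - 2 := by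
  rw [Finset.sum_congr rfl fun w hw => h.coheight_of_mem hw]
  simp only [Finset.sum_sub_distrib, Finset.sum_const, Finset.sum_ite_eq, h.fst_mem, h.snd_mem,
    F.card_verts, if_true, nsmul_eq_mul, mul_one]
  ring

end IsExpandedCollision

end SimplicialFacet

namespace FacetSystem

open SimplicialFacet

variable (hS : FacetSystem V L d) {F : SimplicialFacet V L d} {v w x y : E}
include hS

theorem neg_one_le_coord (hU : F.IsUnimodular) (hv : v ∈ F.verts) (h0 : F.height (F.opp v) = 0)
    (hy : y ∈ V) (hh : F.height y = -1) : -1 ≤ F.coord v y := by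
  have hle := hS.height_le_jump_mul_coord F hv hy (F.notMem_of_height_ne_one (by rw [hh]; norm_num))
    (by rintro rfl; rw [h0] at hh; norm_num at hh)
  rwa [hS.jump_eq_one_of_isUnimodular hU hv h0, hh, one_mul] at hle

variable (hsum : ∑ x ∈ V, x = 0) (hU : F.IsUnimodular)
include hsum hU

omit hsum in
theorem coord_nonpos_of_isShallow_neighbor (hv : v ∈ F.verts) (h0 : F.height (F.opp v) = 0)
    (hN : (F.neighbor v).IsShallow) (hy : y ∈ V) (hh : F.height y = -1) : F.coord v y ≤ 0 := by
  have hle := hN y hy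
  rw [hS.neighbor_height F hv, hS.jump_eq_one_of_isUnimodular hU hv h0, hh] at hle
  linarith

theorem exists_isExpandedCollision {p q : E} (h : F.IsCollision p q) :
    ∃ t s, F.IsExpandedCollision p q t s := by
  obtain ⟨t, ht, s, hs, htp, htq, hsp, hsq, e⟩ :=
    hS.exists_opp_eq_add_sub_sub_of_isCollision hsum h hU
  refine ⟨t, s, h, ht, hs, ?_, htp, htq, hsp, hsq, e⟩
  rintro rfl
  exact hS.opp_ne_of_isCollision hsum h hU ht htp htq e

omit hU in
theorem sum_zeroLevel_of_isCollision {p q : E} (h : F.IsCollision p q) (f : E → ℝ) :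
    ∑ x ∈ F.zeroLevel, f x = ∑ r ∈ F.verts.erase q, f (F.opp r) := by
  have himage : F.zeroLevel = (F.verts.erase q).image F.opp := by
    ext x
    simp only [mem_zeroLevel, Finset.mem_image, Finset.mem_erase]
    constructor
    · rintro ⟨hx, h0⟩
      obtain ⟨r, hr, rfl⟩ := hS.exists_opp_eq_of_height_eq_zero F hx h0
      by_cases hrq : r = q
      · exact ⟨p, ⟨h.ne, h.left_mem⟩, by rw [hrq, h.opp_eq]⟩
      · exact ⟨r, ⟨hrq, hr⟩, rfl⟩
    · rintro ⟨r, ⟨-, hr⟩, rfl⟩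
      exact ⟨hS.opp_mem F hr, hS.height_opp_of_isCollision hsum h hr⟩
  rw [himage, Finset.sum_image]
  intro r hr r' hr' e
  obtain ⟨hrq, hr⟩ := Finset.mem_erase.1 hr
  obtain ⟨hrq', hr'⟩ := Finset.mem_erase.1 hr'
  by_cases hrp : r = p
  · by_cases hrp' : r' = p
    · rw [hrp, hrp']
    · exact hS.eq_of_isCollision_of_opp_eq hsum h hr' hr hrp' hrq' e
  · exact (hS.eq_of_isCollision_of_opp_eq hsum h hr hr' hrp hrq e.symm).symm

section Expanded

variable {p q t s : E} (h : F.IsExpandedCollision p q t s)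
include h

theorem isShallow_neighbor_of_isExpandedCollision (hw : w ∈ F.verts) (hwt : w ≠ t) (hws : w ≠ s) :
    (F.neighbor w).IsShallow := by
  by_cases hwp : w = p
  · exact hwp ▸ hS.isShallow_of_isCollision hsum
      (hS.isCollision_neighbor_self hsum h.toIsCollision hU)
  by_cases hwq : w = q
  · exact hwq ▸ hS.isShallow_of_isCollision hsum
      (hS.isCollision_neighbor_self hsum h.symm.toIsCollision hU)
  exact hS.isShallow_of_isCollision hsum (hS.isCollision_neighbor hsum h.toIsCollision hU hw hwp hwq
    (h.coord_opp_left hw hwt hws hwp hwq))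

omit hU in
theorem height_eq_neg_one_of_isExpandedCollision (hy : y ∈ F.negLevel) : F.height y = -1 :=
  hS.height_eq_neg_one_of_isShallow (hS.isShallow_of_isCollision hsum h.toIsCollision) hy

theorem coord_nonpos_of_isExpandedCollision (hw : w ∈ F.verts) (hwt : w ≠ t) (hws : w ≠ s)
    (hy : y ∈ F.negLevel) : F.coord w y ≤ 0 :=
  hS.coord_nonpos_of_isShallow_neighbor hU hw
    (hS.height_opp_of_isCollision hsum h.toIsCollision hw)
    (hS.isShallow_neighbor_of_isExpandedCollision hsum hU h hw hwt hws) (F.mem_negLevel.1 hy).1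
    (hS.height_eq_neg_one_of_isExpandedCollision hsum h hy)

theorem neg_one_le_coord_of_isExpandedCollision (hw : w ∈ F.verts) (hy : y ∈ F.negLevel) :
    -1 ≤ F.coord w y :=
  hS.neg_one_le_coord hU hw (hS.height_opp_of_isCollision hsum h.toIsCollision hw)
    (F.mem_negLevel.1 hy).1 (hS.height_eq_neg_one_of_isExpandedCollision hsum h hy)

theorem coheight_nonpos (hy : y ∈ F.negLevel) : F.coheight t s y ≤ 0 := by
  rw [h.coheight_eq_sum]
  refine Finset.sum_nonpos fun w hw => ?_
  obtain ⟨hw, hwt, hws⟩ := mem_erase_erase_iff.1 hw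
  exact hS.coord_nonpos_of_isExpandedCollision hsum hU h hw hwt hws hy

theorem eq_neg_of_coheight_eq_zero (hy : y ∈ F.negLevel) (h0 : F.coheight t s y = 0) :
    y = -t ∨ y = -s := by
  have hzero : ∀ w ∈ F.verts, w ≠ t → w ≠ s → F.coord w y = 0 := by
    intro w hw hwt hws
    rw [h.coheight_eq_sum] at h0
    refine (Finset.sum_eq_zero_iff_of_nonpos fun w hw => ?_).1 h0 w
      (mem_erase_erase_iff.2 ⟨hw, hwt, hws⟩)
    obtain ⟨hw, hwt, hws⟩ := mem_erase_erase_iff.1 hw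
    exact hS.coord_nonpos_of_isExpandedCollision hsum hU h hw hwt hws hy
  have hts : F.coord t y + F.coord s y = -1 := by
    rw [coheight_apply, hS.height_eq_neg_one_of_isExpandedCollision hsum h hy] at h0
    linarith
  have hneg : ∀ a ∈ F.verts, ∀ b, F.coord a y = -1 → F.coord b y = 0 →
      (∀ w ∈ F.verts, w ≠ a → w ≠ b → F.coord w y = 0) → y = -a := by
    intro a ha b ha1 hb0 hrest
    refine F.ext_coord fun w hw => ?_
    rw [map_neg, F.coord_eq_ite hw ha]
    split_ifs with hwa
    · rw [hwa, ha1]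
    · by_cases hwb : w = b
      · rw [hwb, hb0, neg_zero]
      · rw [hrest w hw hwa hwb, neg_zero]
  have ht := hS.neg_one_le_coord_of_isExpandedCollision hsum hU h h.fst_mem hy
  have hs := hS.neg_one_le_coord_of_isExpandedCollision hsum hU h h.snd_mem hy
  by_cases ht1 : F.coord t y = -1
  · exact Or.inl (hneg t h.fst_mem s ht1 (by linarith) hzero)
  · have ht0 := realInt.nonneg_of_neg_one_lt (hS.coord_mem hU h.fst_mem (F.mem_negLevel.1 hy).1)
      (lt_of_le_of_ne ht (Ne.symm ht1))
    exact Or.inr (hneg s h.snd_mem t (by linarith) (by linarith) fun w hw hws hwt =>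
      hzero w hw hwt hws)

theorem coheight_negLevel_le (hy : y ∈ F.negLevel) :
    F.coheight t s y ≤ -1 + (if -t = y then 1 else 0) + (if -s = y then 1 else 0) := by
  have hle := hS.coheight_nonpos hsum hU h hy
  by_cases hyt : -t = y
  · rw [if_pos hyt]; split_ifs <;> linarith
  by_cases hys : -s = y
  · rw [if_neg hyt, if_pos hys]; linarith
  rw [if_neg hyt, if_neg hys, add_zero, add_zero]
  refine realInt.le_neg_one_of_neg ?_ (lt_of_le_of_ne hle fun h0 => ?_)
  · rw [h.coheight_eq_sum]
    exact sum_mem fun w hw =>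
      hS.coord_mem hU (mem_erase_erase_iff.1 hw).1 (F.mem_negLevel.1 hy).1
  · rcases hS.eq_neg_of_coheight_eq_zero hsum hU h hy h0 with e | e
    · exact hyt e.symm
    · exact hys e.symm

theorem coheight_opp_le {r : E} (hr : r ∈ F.verts.erase q) : F.coheight t s (F.opp r) ≤
    (if t = r then 1 else 0) + (if s = r then 1 else 0) - (if p = r then 2 else 0) := by
  obtain ⟨hrq, hr⟩ := Finset.mem_erase.1 hr
  by_cases hrp : p = r
  · subst hrp
    rw [h.coheight_opp_left, if_pos rfl, if_neg h.fst_ne_left, if_neg h.snd_ne_left]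
    norm_num
  obtain ⟨u, hu, -, e⟩ :=
    hS.exists_opp_eq_sub_of_isCollision hsum h.toIsCollision hU hr (Ne.symm hrp) hrq
  rw [e, map_sub, h.coheight_of_mem hr, if_neg hrp]
  linarith [h.coheight_le_one hu]

/-- Adding up `coheight_opp_le` and `coheight_negLevel_le` over all vertices gives `0 ≤ 0`, hence
equality everywhere. -/
theorem coheight_eq_of_isExpandedCollision :
    (∀ r ∈ F.verts.erase q, F.coheight t s (F.opp r) =
      (if t = r then 1 else 0) + (if s = r then 1 else 0) - (if p = r then 2 else 0)) ∧
    ∀ y ∈ F.negLevel,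
      F.coheight t s y = -1 + (if -t = y then 1 else 0) + (if -s = y then 1 else 0) := by
  have hopp := fun r hr => hS.coheight_opp_le hsum hU h (r := r) hr
  have hneg := fun y hy => hS.coheight_negLevel_le hsum hU h (y := y) hy
  have hopp_le := Finset.sum_le_sum hopp
  have hneg_le := Finset.sum_le_sum hneg
  have htotal : (d - 2 : ℝ) + ∑ r ∈ F.verts.erase q, F.coheight t s (F.opp r) +
      ∑ y ∈ F.negLevel, F.coheight t s y = 0 := by
    rw [← h.sum_verts_coheight, ← hS.sum_zeroLevel_of_isCollision hsum h.toIsCollision,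
      ← hS.sum_eq_sum_levels F, ← map_sum, hsum, map_zero]
  have hopp_sum : ∑ r ∈ F.verts.erase q, ((if t = r then (1 : ℝ) else 0) +
      (if s = r then 1 else 0) - (if p = r then 2 else 0)) = 0 := by
    simp only [Finset.sum_sub_distrib, Finset.sum_add_distrib, Finset.sum_ite_eq, Finset.mem_erase,
      ne_eq, h.fst_ne_right, h.snd_ne_right, h.ne, not_false_eq_true, h.fst_mem, h.snd_mem,
      h.left_mem, and_self, if_true]
    norm_num
  have hneg_sum : ∑ y ∈ F.negLevel, (-1 + (if -t = y then (1 : ℝ) else 0) +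
      (if -s = y then 1 else 0)) ≤ 2 - d := by
    simp only [Finset.sum_add_distrib, Finset.sum_ite_eq, Finset.sum_const, nsmul_eq_mul,
      hS.card_negLevel_of_isShallow hsum (hS.isShallow_of_isCollision hsum h.toIsCollision)]
    split_ifs <;> linarith
  exact ⟨(Finset.sum_eq_sum_iff_of_le hopp).1 (by linarith),
    (Finset.sum_eq_sum_iff_of_le hneg).1 (by linarith)⟩

theorem neg_one_le_coheight (hy : y ∈ F.negLevel) : -1 ≤ F.coheight t s y := by
  rw [(hS.coheight_eq_of_isExpandedCollision hsum hU h).2 y hy]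
  split_ifs <;> norm_num

theorem exists_opp_eq_sub_of_isExpandedCollision {r : E} (hr : r ∈ F.verts) (hrt : r ≠ t)
    (hrs : r ≠ s) (hrp : r ≠ p) (hrq : r ≠ q) :
    ∃ u ∈ F.verts, u ≠ r ∧ u ≠ t ∧ u ≠ s ∧ F.opp r = u - r := by
  obtain ⟨u, hu, hur, e⟩ :=
    hS.exists_opp_eq_sub_of_isCollision hsum h.toIsCollision hU hr hrp hrq
  have heq := (hS.coheight_eq_of_isExpandedCollision hsum hU h).1 r (Finset.mem_erase.2 ⟨hrq, hr⟩)
  rw [e, map_sub, h.coheight_of_ne hr hrt hrs, if_neg hrt.symm, if_neg hrs.symm,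
    if_neg hrp.symm] at heq
  obtain ⟨hut, hus⟩ := h.ne_of_coheight_eq_one hu (by linarith)
  exact ⟨u, hu, hur, hut, hus, e⟩

theorem coord_eq_neg_one_of_neg (hw : w ∈ F.verts) (hy : y ∈ F.negLevel) (hc : F.coord w y < 0) :
    F.coord w y = -1 :=
  le_antisymm (realInt.le_neg_one_of_neg (hS.coord_mem hU hw (F.mem_negLevel.1 hy).1) hc)
    (hS.neg_one_le_coord_of_isExpandedCollision hsum hU h hw hy)

theorem neighbor_height_eq_zero (hw : w ∈ F.verts) (hy : y ∈ F.negLevel) (hc : F.coord w y < 0) :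
    (F.neighbor w).height y = 0 := by
  rw [hS.neighbor_height F hw, hS.coord_eq_neg_one_of_neg hsum hU h hw hy hc,
    hS.height_eq_neg_one_of_isExpandedCollision hsum h hy, hS.jump_eq_one_of_isUnimodular hU hw
      (hS.height_opp_of_isCollision hsum h.toIsCollision hw)]
  norm_num

theorem coord_left_nonneg (hy : y ∈ F.negLevel) : 0 ≤ F.coord p y := by
  by_contra! hc
  have hp := hS.coord_eq_neg_one_of_neg hsum hU h h.left_mem hy hc
  obtain ⟨r, hr, u, hu, hrx, hrq, hur, e⟩ := hS.exists_eq_sub_of_isCollision hsum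
    (hS.isCollision_neighbor_self hsum h.toIsCollision hU)
    (hS.isUnimodular_neighbor_of_isCollision hsum h.toIsCollision hU h.left_mem)
    (F.mem_negLevel.1 hy).1 (hS.neighbor_height_eq_zero hsum hU h h.left_mem hy hc)
    (by rw [hS.neighbor_opp_opp F h.left_mem]; rintro rfl; linarith [F.coord_self _ h.left_mem])
  obtain ⟨hr, hrp⟩ := ((hS.mem_neighbor_iff F h.left_mem).1 hr).resolve_left hrx
  rcases (hS.mem_neighbor_iff F h.left_mem).1 hu with rfl | ⟨hu, hup⟩
  · have hq : F.coord q y = -1 := by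
      rw [e, map_sub, F.coord_of_ne q h.right_mem r hr hrq.symm, h.opp_eq,
        hS.coord_opp_of_isUnimodular hU h.right_mem
          (hS.height_opp_of_isCollision hsum h.toIsCollision h.right_mem), sub_zero]
    have hle : F.coheight t s y ≤ F.coord p y + F.coord q y := by
      rw [h.coheight_eq_sum, ← Finset.add_sum_erase _ _ (mem_erase_erase_iff.2
          ⟨h.left_mem, h.fst_ne_left.symm, h.snd_ne_left.symm⟩),
        ← Finset.add_sum_erase _ _ (Finset.mem_erase.2 ⟨h.ne.symm, mem_erase_erase_iff.2
          ⟨h.right_mem, h.fst_ne_right.symm, h.snd_ne_right.symm⟩⟩), ← add_assoc]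
      refine add_le_of_nonpos_right (Finset.sum_nonpos fun w hw => ?_)
      obtain ⟨hw, hwt, hws⟩ :=
        mem_erase_erase_iff.1 (Finset.mem_of_mem_erase (Finset.mem_of_mem_erase hw))
      exact hS.coord_nonpos_of_isExpandedCollision hsum hU h hw hwt hws hy
    linarith [hS.neg_one_le_coheight hsum hU h hy]
  · rw [e, map_sub, F.coord_of_ne p h.left_mem u hu hup.symm,
      F.coord_of_ne p h.left_mem r hr hrp.symm] at hp
    norm_num at hp

theorem eq_neg_of_coord_neg (hw : w ∈ F.verts) (hwt : w ≠ t) (hws : w ≠ s) (hwp : w ≠ p)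
    (hwq : w ≠ q) (hy : y ∈ F.negLevel) (hc : F.coord w y < 0) : y = -w := by
  have hy1 := hS.coord_eq_neg_one_of_neg hsum hU h hw hy hc
  have hx0 := h.coord_opp_left hw hwt hws hwp hwq
  obtain ⟨r, hr, u, hu, -, -, hur, e⟩ := hS.exists_eq_sub_of_isCollision hsum
    (hS.isCollision_neighbor hsum h.toIsCollision hU hw hwp hwq hx0)
    (hS.isUnimodular_neighbor_of_isCollision hsum h.toIsCollision hU hw)
    (F.mem_negLevel.1 hy).1 (hS.neighbor_height_eq_zero hsum hU h hw hy hc)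
    (by rw [hS.neighbor_opp_eq_of_isCollision hsum h.toIsCollision hU hw hwp hx0]
        rintro rfl; linarith)
  obtain ⟨m, hm, hmw, hmt, hms, hopp⟩ :=
    hS.exists_opp_eq_sub_of_isExpandedCollision hsum hU h hw hwt hws hwp hwq
  have hopp1 := hS.coord_opp_of_isUnimodular hU hw
    (hS.height_opp_of_isCollision hsum h.toIsCollision hw)
  have hcoord := hy1
  rw [e, map_sub] at hcoord
  rcases (hS.mem_neighbor_iff F hw).1 hu with rfl | ⟨hu, huw⟩
  · obtain ⟨hr, -⟩ := ((hS.mem_neighbor_iff F hw).1 hr).resolve_left hur.symm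
    by_cases hrm : r = m
    · rw [e, hopp, hrm]; abel
    · have hle := hS.coord_nonpos_of_isExpandedCollision hsum hU h hm hmt hms hy
      rw [e, hopp, map_sub, map_sub, F.coord_self m hm, F.coord_of_ne m hm w hw hmw,
        F.coord_of_ne m hm r hr (Ne.symm hrm)] at hle
      norm_num at hle
  · rw [F.coord_of_ne w hw u hu huw.symm] at hcoord
    rcases (hS.mem_neighbor_iff F hw).1 hr with rfl | ⟨hr, hrw⟩
    · rw [hopp1] at hcoord; norm_num at hcoord
    · rw [F.coord_of_ne w hw r hr hrw.symm] at hcoord; norm_num at hcoord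

theorem exists_eq_neg_of_isExpandedCollision (hy : y ∈ F.negLevel) :
    ∃ w ∈ (F.verts.erase q).erase p, y = -w := by
  by_cases hneg : ∃ w ∈ F.verts, w ≠ t ∧ w ≠ s ∧ F.coord w y < 0
  · obtain ⟨w, hw, hwt, hws, hc⟩ := hneg
    have hwp : w ≠ p := by
      rintro rfl; exact (hS.coord_left_nonneg hsum hU h hy).not_gt hc
    have hwq : w ≠ q := by
      rintro rfl; exact (hS.coord_left_nonneg hsum hU h.symm hy).not_gt hc
    exact ⟨w, mem_erase_erase_iff.2 ⟨hw, hwp, hwq⟩,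
      hS.eq_neg_of_coord_neg hsum hU h hw hwt hws hwp hwq hy hc⟩
  · push Not at hneg
    have h0 : F.coheight t s y = 0 := by
      refine le_antisymm (hS.coheight_nonpos hsum hU h hy) ?_
      rw [h.coheight_eq_sum]
      refine Finset.sum_nonneg fun w hw => ?_
      obtain ⟨hw, hwt, hws⟩ := mem_erase_erase_iff.1 hw
      exact hneg w hw hwt hws
    rcases hS.eq_neg_of_coheight_eq_zero hsum hU h hy h0 with e | e
    · exact ⟨t, mem_erase_erase_iff.2 ⟨h.fst_mem, h.fst_ne_left, h.fst_ne_right⟩, e⟩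
    · exact ⟨s, mem_erase_erase_iff.2 ⟨h.snd_mem, h.snd_ne_left, h.snd_ne_right⟩, e⟩

end Expanded

theorem not_isCollision {p q : E} : ¬F.IsCollision p q := by
  intro h
  obtain ⟨t, s, hts⟩ := hS.exists_isExpandedCollision hsum hU h
  have hsub : F.negLevel ⊆ ((F.verts.erase q).erase p).image (-·) := fun y hy => by
    obtain ⟨w, hw, e⟩ := hS.exists_eq_neg_of_isExpandedCollision hsum hU hts hy
    exact Finset.mem_image.2 ⟨w, hw, e.symm⟩
  have hle := (Finset.card_le_card hsub).trans Finset.card_image_le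
  rw [hS.card_negLevel_of_isShallow hsum (hS.isShallow_of_isCollision hsum h)] at hle
  have hq := Finset.card_erase_add_one h.right_mem
  have hp := Finset.card_erase_add_one (Finset.mem_erase.2 ⟨h.ne, h.left_mem⟩)
  rw [F.card_verts] at hq
  omega

theorem eq_of_opp_eq (hv : v ∈ F.verts) (hw : w ∈ F.verts) (e : F.opp v = F.opp w) : v = w :=
  by_contra fun hne => hS.not_isCollision hsum hU ⟨hv, hw, hne, e⟩

end FacetSystem

end

/-! ### Apex facets -/

section

variable {E : Type*} [AddCommGroup E] [Module ℝ E] {V : Finset E} {L : AddSubgroup E} {d : ℕ}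

namespace SimplicialFacet

variable (F : SimplicialFacet V L d)

theorem exists_eq_neg_sub_of_height_eq_neg_two {x : E} (hx : F.height x = -2)
    (h0 : ∀ w ∈ F.verts, F.coord w x ≤ 0) (hint : ∀ w ∈ F.verts, F.coord w x ∈ realInt) :
    ∃ p ∈ F.verts, ∃ q ∈ F.verts, x = -p - q := by
  rw [F.height_apply] at hx
  obtain ⟨p, hp, q, hq, hpq⟩ := exists_add_of_sum_eq_two (T := F.verts)
    (f := fun w => -F.coord w x) (fun w hw => neg_nonneg.2 (h0 w hw))
    (fun w hw => neg_mem (hint w hw)) (by rw [Finset.sum_neg_distrib, hx]; norm_num)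
  refine ⟨p, hp, q, hq, F.ext_coord fun w hw => ?_⟩
  rw [map_sub, map_neg, F.coord_eq_ite hw hp, F.coord_eq_ite hw hq]
  linarith [hpq w hw]

/-- The partner of a vertex `v` of a facet: it is `s` when the vertex opposite to `v` is `s - v`. -/
def partner (v : E) : E := F.opp v + v

/-- A shallow unimodular facet all of whose opposite vertices have height `0`, except the one
opposite to `c`, which has height `-1`. -/
structure IsApex (c : E) : Prop where
  isUnimodular : F.IsUnimodular
  isShallow : F.IsShallow
  mem : c ∈ F.verts
  height_opp : F.height (F.opp c) = -1
  height_opp_of_ne : ∀ v ∈ F.verts, v ≠ c → F.height (F.opp v) = 0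

variable {F}

theorem opp_eq_partner_sub (v : E) : F.opp v = F.partner v - v :=
  (add_sub_cancel_right _ _).symm

end SimplicialFacet

namespace FacetSystem

open SimplicialFacet

variable (hS : FacetSystem V L d) (hsum : ∑ x ∈ V, x = 0) {F : SimplicialFacet V L d}
  {n p q s v w y : E}
include hS

theorem isUnimodular_neighbor_of_height_opp (hU : F.IsUnimodular) (hv : v ∈ F.verts)
    (h0 : F.height (F.opp v) = 0) : (F.neighbor v).IsUnimodular :=
  hS.isUnimodular_neighbor hU hv (hS.coord_opp_of_isUnimodular hU hv h0)

include hsum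

theorem eq_of_height_eq_neg_two (hv : v ∈ V) (hw : w ∈ V) (hhv : F.height v = -2)
    (hhw : F.height w = -2) : v = w :=
  (hS.existsUnique_height_eq_neg_two hsum (not_isShallow_of_height_eq_neg_two hv hhv)).unique
    ⟨hv, hhv⟩ ⟨hw, hhw⟩

theorem exists_opp_eq_sub (hU : F.IsUnimodular) (hv : v ∈ F.verts) (h0 : F.height (F.opp v) = 0) :
    ∃ s ∈ F.verts, s ≠ v ∧ F.opp v = s - v := by
  refine F.eq_sub_of_height_eq_zero hv h0 (hS.coord_opp_of_isUnimodular hU hv h0) ?_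
    fun w hw => hS.coord_mem hU hw (hS.opp_mem F hv)
  intro w hw hwv
  by_contra! hc
  exact hwv (hS.eq_of_opp_eq hsum hU hw hv
    (hS.eq_opp_of_coord_neg F hw (hS.opp_mem F hv) h0 hc).symm)

theorem exists_opp_eq_and_eq_sub (hU : F.IsUnimodular) (hy : y ∈ V) (h0 : F.height y = 0) :
    ∃ q ∈ F.verts, ∃ p ∈ F.verts, p ≠ q ∧ F.opp q = y ∧ y = p - q := by
  obtain ⟨q, hq, rfl⟩ := hS.exists_opp_eq_of_height_eq_zero F hy h0
  obtain ⟨p, hp, hpq, e⟩ := hS.exists_opp_eq_sub hsum hU hq h0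
  exact ⟨q, hq, p, hp, hpq, rfl, e⟩

theorem exists_eq_opp_sub (hU : F.IsUnimodular) (hv : v ∈ F.verts) (h0 : F.height (F.opp v) = 0)
    (hy : y ∈ V) (hh : F.height y = -1) (hc : F.coord v y < 0) :
    ∃ r ∈ F.verts, r ≠ v ∧ y = F.opp v - r := by
  have hc1 : F.coord v y = -1 := le_antisymm (realInt.le_neg_one_of_neg (hS.coord_mem hU hv hy) hc)
    (hS.neg_one_le_coord hU hv h0 hy hh)
  have hcoord {r : E} (hr : r ∈ F.verts ∧ r ≠ v) : F.coord v r = 0 :=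
    F.coord_of_ne v hv r hr.1 hr.2.symm
  have hcv := hS.coord_opp_of_isUnimodular hU hv h0
  obtain ⟨r, hr, p, hp, hpr, -, e⟩ := hS.exists_opp_eq_and_eq_sub hsum
    (hS.isUnimodular_neighbor_of_height_opp hU hv h0) hy (by
      rw [hS.neighbor_height F hv, hS.jump_eq_one_of_isUnimodular hU hv h0, hh, hc1]; norm_num)
  rw [e, map_sub] at hc1
  rcases (hS.mem_neighbor_iff F hv).1 hp with rfl | hp
  · rcases (hS.mem_neighbor_iff F hv).1 hr with hr | hr
    · exact absurd hr.symm hpr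
    · exact ⟨r, hr.1, hr.2, e⟩
  · rcases (hS.mem_neighbor_iff F hv).1 hr with rfl | hr
    · rw [hcoord hp, hcv] at hc1; norm_num at hc1
    · rw [hcoord hp, hcoord hr] at hc1; norm_num at hc1

theorem opp_eq_sub_of_sub_sub_mem (hU : F.IsUnimodular) (hn : n ∈ F.verts) (hs : s ∈ F.verts)
    (hw : w ∈ F.verts) (hns : n ≠ s) (hnw : n ≠ w) (h0 : F.height (F.opp w) = 0)
    (hm : n - s - w ∈ V) : s ≠ w ∧ F.opp w = n - w := by
  have hh : F.height (n - s - w) = -1 := by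
    rw [map_sub, map_sub, F.height_of_mem hn, F.height_of_mem hs, F.height_of_mem hw]
    norm_num
  have hc : F.coord w (n - s - w) = -(if w = s then 1 else 0) - 1 := by
    rw [map_sub, map_sub, F.coord_of_ne w hw n hn hnw.symm, F.coord_eq_ite hw hs,
      F.coord_self w hw, zero_sub]
  have hsw : s ≠ w := by
    rintro rfl
    have := hS.neg_one_le_coord hU hw h0 hm hh
    rw [hc, if_pos rfl] at this
    norm_num at this
  rw [if_neg hsw.symm] at hc
  obtain ⟨r, hr, -, er⟩ := hS.exists_eq_opp_sub hsum hU hw h0 hm hh (by rw [hc]; norm_num)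
  obtain ⟨g, hg, -, eg⟩ := hS.exists_opp_eq_sub hsum hU hw h0
  have hcoord : F.coord n (n - s - w) = F.coord n (g - w - r) := by rw [er, eg]
  rw [map_sub, map_sub, map_sub, map_sub, F.coord_self n hn, F.coord_of_ne n hn s hs hns,
    F.coord_eq_ite hn hg, F.coord_eq_ite hn hr] at hcoord
  refine ⟨hsw, ?_⟩
  by_cases hng : n = g
  · rw [eg, hng]
  · rw [if_neg hng] at hcoord
    split_ifs at hcoord <;> linarith

theorem sub_sub_notMem_of_neg_sub_mem (hU : F.IsUnimodular) (hp : p ∈ F.verts) (hq : q ∈ F.verts)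
    (hs : s ∈ F.verts) (h0 : F.height (F.opp s) = 0) (hsp : s ≠ p) (hsq : s ≠ q)
    (hm : -p - q ∈ V) : s - p - q ∉ V := by
  intro hm'
  have hheight : ∀ x, F.coord s x - F.height x = 2 → (F.neighbor s).height x = -2 := fun x hx => by
    rw [hS.neighbor_height F hs, hS.jump_eq_one_of_isUnimodular hU hs h0]; linarith
  have h1 : (F.neighbor s).height (-p - q) = -2 := hheight _ (by
    rw [map_sub, map_neg, map_sub, map_neg, F.height_of_mem hp, F.height_of_mem hq,
      F.coord_of_ne s hs p hp hsp, F.coord_of_ne s hs q hq hsq]; norm_num)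
  have h2 : (F.neighbor s).height (s - p - q) = -2 := hheight _ (by
    rw [map_sub, map_sub, map_sub, map_sub, F.height_of_mem hp, F.height_of_mem hq,
      F.height_of_mem hs, F.coord_of_ne s hs p hp hsp, F.coord_of_ne s hs q hq hsq,
      F.coord_self s hs]; norm_num)
  have e := hS.eq_of_height_eq_neg_two hsum hm hm' h1 h2
  have hs0 : s = 0 := by
    rw [show s = (s - p - q) - (-p - q) by abel, ← e, sub_self]
  exact hS.zero_notMem (hs0 ▸ F.verts_subset hs)

theorem exists_neg_sub_mem (hU : F.IsUnimodular) (hF : ¬F.IsShallow) :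
    ∃ p ∈ F.verts, ∃ q ∈ F.verts, p ≠ q ∧ -p - q ∈ V := by
  obtain ⟨x, ⟨hx, hh⟩, -⟩ := hS.existsUnique_height_eq_neg_two hsum hF
  obtain ⟨p, hp, q, hq, rfl⟩ := F.exists_eq_neg_sub_of_height_eq_neg_two hh
    (fun w hw => hS.coord_nonpos_of_height_eq_neg_two hsum hU hx hh hw)
    (fun w hw => hS.coord_mem hU hw hx)
  refine ⟨p, hp, q, hq, ?_, hx⟩
  rintro rfl
  exact hS.neg_sub_self_notMem (F.verts_subset hp) hx

theorem exists_isUnimodular_isShallow :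
    ∃ F : SimplicialFacet V L d, F.IsUnimodular ∧ F.IsShallow := by
  by_contra! hdeep
  have hopp {F : SimplicialFacet V L d} (hU : F.IsUnimodular) {v : E} (hv : v ∈ F.verts) :
      F.height (F.opp v) = 0 := hS.height_opp_of_not_isShallow hsum (hdeep F hU) hv
  obtain ⟨F, hU⟩ := hS.exists_isUnimodular hsum
  obtain ⟨v, hv, w, hw, hvw, hm⟩ := hS.exists_neg_sub_mem hsum hU (hdeep F hU)
  obtain ⟨s, hs, hsv, e⟩ := hS.exists_opp_eq_sub hsum hU hv (hopp hU hv)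
  have hGU := hS.isUnimodular_neighbor_of_height_opp hU hv (hopp hU hv)
  have hwG := hS.mem_neighbor F hv hw hvw.symm
  -- Across `v` the vertex `-v - w` becomes `F.opp v - s - w`.
  obtain ⟨hsw, eG⟩ := hS.opp_eq_sub_of_sub_sub_mem hsum hGU (hS.opp_mem_neighbor F hv)
    (hS.mem_neighbor F hv hs hsv) hwG (hS.ne_opp F hv hs).symm (hS.ne_opp F hv hw).symm
    (hopp hGU hwG) (by rwa [e, show s - v - s - w = -v - w by abel])
  have hmG := hS.opp_mem _ hwG
  rw [eG, e] at hmG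
  exact hS.sub_sub_notMem_of_neg_sub_mem hsum hU hv hw hs (hopp hU hs) hsv hsw hm hmG

theorem isApex_of_height_opp_ne_zero {c : E} (hU : F.IsUnimodular) (hF : F.IsShallow)
    (hc : c ∈ F.verts) (h0 : F.height (F.opp c) ≠ 0) : F.IsApex c where
  isUnimodular := hU
  isShallow := hF
  mem := hc
  height_opp := hS.height_eq_neg_one_of_isShallow hF (F.mem_negLevel.2 ⟨hS.opp_mem F hc,
    lt_of_le_of_ne (hS.height_nonpos F (hS.opp_mem F hc) (hS.opp_notMem F hc)) h0⟩)
  height_opp_of_ne v hv hvc := by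
    by_contra hv0
    exact hvc (hS.eq_of_height_opp_ne_zero hsum F hv hc hv0 h0)

theorem exists_isApex : ∃ (F : SimplicialFacet V L d) (c : E), F.IsApex c := by
  obtain ⟨F, hU, hF⟩ := hS.exists_isUnimodular_isShallow hsum
  obtain ⟨c, hc, h0⟩ : ∃ c ∈ F.verts, F.height (F.opp c) ≠ 0 := by
    by_contra! h0
    have hle : F.verts.card ≤ F.zeroLevel.card := Finset.card_le_card_of_injOn F.opp
      (fun v hv => F.mem_zeroLevel.2 ⟨hS.opp_mem F hv, h0 v hv⟩)
      fun v hv w hw => hS.eq_of_opp_eq hsum hU hv hw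
    have := hS.card_zeroLevel_of_isShallow hsum hF
    rw [F.card_verts] at hle
    omega
  exact ⟨F, c, hS.isApex_of_height_opp_ne_zero hsum hU hF hc h0⟩

variable {c : E} (h : F.IsApex c)
include h

theorem partner_mem (hv : v ∈ F.verts) (hvc : v ≠ c) : F.partner v ∈ F.verts := by
  obtain ⟨s, hs, -, e⟩ := hS.exists_opp_eq_sub hsum h.isUnimodular hv (h.height_opp_of_ne v hv hvc)
  rwa [partner, e, sub_add_cancel]

theorem partner_ne_self (hv : v ∈ F.verts) (hvc : v ≠ c) : F.partner v ≠ v := by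
  obtain ⟨s, -, hsv, e⟩ := hS.exists_opp_eq_sub hsum h.isUnimodular hv (h.height_opp_of_ne v hv hvc)
  rwa [partner, e, sub_add_cancel]

theorem jump_coord_opp_apex : (F.jump c = 2 ∧ F.coord c (F.opp c) = -1) ∨
    (F.jump c = 1 ∧ F.coord c (F.opp c) = -2) := by
  have hmul := hS.jump_mul_coord_opp F h.mem
  rw [h.height_opp] at hmul
  rcases (hS.one_le_jump F h.mem).eq_or_lt with hj | hj
  · rw [← hj] at hmul
    exact Or.inr ⟨hj.symm, by linarith⟩
  · have hj2 : F.jump c = 2 := le_antisymm (hS.jump_le_two hsum F h.mem)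
      (realInt.two_le_of_one_lt (hS.jump_mem F h.mem) hj)
    rw [hj2] at hmul
    exact Or.inl ⟨hj2, by linarith⟩

theorem card_partner_eq_add_sum (hv : v ∈ F.verts) :
    ({s ∈ F.verts.erase c | F.partner s = v}.card : ℝ) + (if v = c then 1 else 0)
      + ∑ y ∈ F.negLevel, F.coord v y = 0 := by
  have hinj : Set.InjOn F.opp (F.verts.erase c : Finset E) := fun s hs t ht =>
    hS.eq_of_opp_eq hsum h.isUnimodular (Finset.mem_of_mem_erase hs) (Finset.mem_of_mem_erase ht)
  have hzero : F.zeroLevel = (F.verts.erase c).image F.opp := by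
    ext y
    simp only [mem_zeroLevel, Finset.mem_image, Finset.mem_erase]
    constructor
    · rintro ⟨hy, h0⟩
      obtain ⟨s, hs, rfl⟩ := hS.exists_opp_eq_of_height_eq_zero F hy h0
      refine ⟨s, ⟨?_, hs⟩, rfl⟩
      rintro rfl
      rw [h.height_opp] at h0; norm_num at h0
    · rintro ⟨s, ⟨hsc, hs⟩, rfl⟩
      exact ⟨hS.opp_mem F hs, h.height_opp_of_ne s hs hsc⟩
  have hverts : ∑ x ∈ F.verts, F.coord v x = 1 := by
    rw [Finset.sum_congr rfl fun w hw => F.coord_eq_ite hv hw, Finset.sum_ite_eq, if_pos hv]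
  have htotal : ∑ x ∈ V, F.coord v x = 0 := by rw [← map_sum, hsum, map_zero]
  rw [hS.sum_eq_sum_levels F, hverts, hzero, Finset.sum_image hinj,
    Finset.sum_congr rfl fun s _ => by rw [opp_eq_partner_sub],
    F.sum_coord_sub (Finset.erase_subset _ _) (fun s hs => hS.partner_mem hsum h
      (Finset.mem_of_mem_erase hs) (Finset.ne_of_mem_erase hs)) hv] at htotal
  by_cases hvc : v = c
  · simp only [hvc, Finset.mem_erase, ne_eq, not_true, false_and, if_true, if_false] at htotal ⊢
    linarith
  · simp only [hvc, hv, Finset.mem_erase, ne_eq, not_false_eq_true, true_and, if_true, if_false]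
      at htotal ⊢
    linarith

theorem exists_sub_partner_sub_mem (hv : v ∈ F.verts) (hvc : v ≠ c)
    (hN : ¬(F.neighbor v).IsShallow) : ∃ q ∈ F.verts, q ≠ v ∧ v - F.partner v - q ∈ V := by
  obtain ⟨a, ha, b, hb, hab, hm⟩ := hS.exists_neg_sub_mem hsum
    (hS.isUnimodular_neighbor_of_height_opp h.isUnimodular hv (h.height_opp_of_ne v hv hvc)) hN
  have hpivot : -F.opp v = v - F.partner v := by rw [opp_eq_partner_sub, neg_sub]
  rcases (hS.mem_neighbor_iff F hv).1 ha with rfl | ⟨ha, hav⟩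
  · rcases (hS.mem_neighbor_iff F hv).1 hb with rfl | ⟨hb, hbv⟩
    · exact absurd rfl hab
    · exact ⟨b, hb, hbv, hpivot ▸ hm⟩
  rcases (hS.mem_neighbor_iff F hv).1 hb with rfl | ⟨hb, -⟩
  · exact ⟨a, ha, hav, by rwa [← hpivot, show -F.opp v - a = -a - F.opp v by abel]⟩
  have := h.isShallow _ hm
  rw [map_sub, map_neg, F.height_of_mem ha, F.height_of_mem hb] at this
  norm_num at this

omit hsum in
theorem sub_apex_notMem (hs : s ∈ F.verts) (hsc : s ≠ c) : s - c ∉ V := by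
  intro hm
  have hh : F.height (s - c) = 0 := by
    rw [map_sub, F.height_of_mem hs, F.height_of_mem h.mem, sub_self]
  have e := hS.eq_opp_of_coord_neg F h.mem hm hh (by
    rw [map_sub, F.coord_self c h.mem, F.coord_of_ne c h.mem s hs hsc.symm]; norm_num)
  have := h.height_opp
  rw [← e, hh] at this
  norm_num at this

theorem neighbor_opp_apex (hv : v ∈ F.verts) (hvc : v ≠ c)
    (h0 : (F.neighbor v).height ((F.neighbor v).opp c) = 0) :
    (F.neighbor v).opp c = F.opp v - c := by
  have hcN := hS.mem_neighbor F hv h.mem hvc.symm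
  obtain ⟨g, hg, hgc, e⟩ := hS.exists_opp_eq_sub hsum
    (hS.isUnimodular_neighbor_of_height_opp h.isUnimodular hv (h.height_opp_of_ne v hv hvc)) hcN h0
  rcases (hS.mem_neighbor_iff F hv).1 hg with rfl | ⟨hg, -⟩
  · exact e
  · exact absurd (e ▸ hS.opp_mem _ hcN) (hS.sub_apex_notMem h hg hgc)

/- Write `z` and `t` for the first and second partner of `v`. Then `F.opp v = t - F.opp z - v` has
height `-1` over the neighbor across `z`, so its `t`-coordinate is nonpositive, forcing `t = v`. -/
theorem partner_partner_of_isShallow (hv : v ∈ F.verts) (hvc : v ≠ c) (hpc : F.partner v ≠ c)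
    (hppc : F.partner (F.partner v) ≠ c) (hN : (F.neighbor (F.partner v)).IsApex c)
    (hNN : ((F.neighbor (F.partner v)).neighbor (F.partner (F.partner v))).IsShallow) :
    F.partner (F.partner v) = v := by
  by_contra hne
  have hz := hS.partner_mem hsum h hv hvc
  have ht := hS.partner_mem hsum h hz hpc
  have hzv := hS.partner_ne_self hsum h hv hvc
  have htz := hS.partner_ne_self hsum h hz hpc
  have ev : F.opp v = F.partner (F.partner v) - F.opp (F.partner v) - v := by
    rw [opp_eq_partner_sub v, opp_eq_partner_sub (F.partner v)]; abel
  have hm := hS.opp_mem F hv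
  generalize F.partner v = z at *
  generalize F.partner z = t at *
  have htN := hS.mem_neighbor F hz ht htz
  have hvN := hS.mem_neighbor F hz hv hzv.symm
  have hzN := hS.opp_mem_neighbor F hz
  rw [ev] at hm
  have hle := hS.coord_nonpos_of_isShallow_neighbor hN.isUnimodular htN
    (hN.height_opp_of_ne t htN hppc) hNN hm (by
      rw [map_sub, map_sub, height_of_mem _ htN, height_of_mem _ hzN, height_of_mem _ hvN]
      norm_num)
  rw [map_sub, map_sub, coord_self _ _ htN, coord_of_ne _ _ htN _ hzN (hS.ne_opp F hz ht),
    coord_of_ne _ _ htN _ hvN hne] at hle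
  norm_num at hle

end FacetSystem

end

/-! ### Apex facets of jump two -/

section

variable {E : Type*} [AddCommGroup E] [Module ℝ E] {V : Finset E} {L : AddSubgroup E} {d : ℕ}

namespace FacetSystem

open SimplicialFacet

variable (hS : FacetSystem V L d) (hsum : ∑ x ∈ V, x = 0) {F : SimplicialFacet V L d}
  {c s v y : E} (h : F.IsApex c) (hc : F.coord c (F.opp c) = -1)
include hS hsum h hc

theorem jump_apex_eq_two : F.jump c = 2 := by
  rcases hS.jump_coord_opp_apex hsum h with hj | hj
  · exact hj.1
  · rw [hc] at hj; norm_num at hj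

theorem coord_apex_nonpos (hy : y ∈ V) (hh : F.height y ≤ 0) : F.coord c y ≤ 0 := by
  have hj := hS.jump_apex_eq_two hsum h hc
  have hN : (F.neighbor c).IsShallow := by
    by_contra hN
    have := hS.jump_eq_one_of_not_isShallow_neighbor hsum h.mem hN
    linarith
  have hle := hN y hy
  rw [hS.neighbor_height F h.mem, hj] at hle
  exact realInt.nonpos_of_lt_one (hS.coord_mem h.isUnimodular h.mem hy) (by linarith)

theorem neg_one_le_coord_apex (hy : y ∈ V) : -1 ≤ F.coord c y := by
  by_cases hyF : y ∈ F.verts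
  · rw [F.coord_eq_ite h.mem hyF]; split_ifs <;> norm_num
  by_cases hyc : y = F.opp c
  · rw [hyc, hc]
  have hle := hS.height_le_jump_mul_coord F h.mem hy hyF hyc
  rw [hS.jump_apex_eq_two hsum h hc] at hle
  linarith [h.isShallow y hy]

theorem coord_apex_eq_zero (hy : y ∈ V) (hh : F.height y = -1) (hyc : y ≠ F.opp c) :
    F.coord c y = 0 := by
  have hle := hS.height_le_jump_mul_coord F h.mem hy
    (F.notMem_of_height_ne_one (by rw [hh]; norm_num)) hyc
  rw [hS.jump_apex_eq_two hsum h hc, hh] at hle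
  exact le_antisymm (hS.coord_apex_nonpos hsum h hc hy (by rw [hh]; norm_num))
    (realInt.nonneg_of_neg_one_lt (hS.coord_mem h.isUnimodular h.mem hy) (by linarith))

theorem partner_ne_apex (hv : v ∈ F.verts) (hvc : v ≠ c) : F.partner v ≠ c := by
  intro e
  have hle := hS.coord_apex_nonpos hsum h hc (hS.opp_mem F hv) (h.height_opp_of_ne v hv hvc).le
  rw [opp_eq_partner_sub, e, map_sub, F.coord_self c h.mem, F.coord_of_ne c h.mem v hv hvc.symm]
    at hle
  norm_num at hle

theorem eq_opp_apex_of_sub_sub_mem {p : E} (hp : p ∈ F.verts) (hs : s ∈ F.verts) (hpc : p ≠ c)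
    (hsc : s ≠ c) (hm : p - s - c ∈ V) : p - s - c = F.opp c := by
  by_contra hne
  have h0 := hS.coord_apex_eq_zero hsum h hc hm (by
    rw [map_sub, map_sub, F.height_of_mem hp, F.height_of_mem hs, F.height_of_mem h.mem]
    norm_num) hne
  rw [map_sub, map_sub, F.coord_of_ne c h.mem p hp hpc.symm, F.coord_of_ne c h.mem s hs hsc.symm,
    F.coord_self c h.mem] at h0
  norm_num at h0

theorem isShallow_neighbor (hv : v ∈ F.verts) (hvc : v ≠ c) : (F.neighbor v).IsShallow := by
  by_contra hN
  have hp := hS.partner_mem hsum h hv hvc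
  have hpv := hS.partner_ne_self hsum h hv hvc
  have hpc := hS.partner_ne_apex hsum h hc hv hvc
  have hU := hS.isUnimodular_neighbor_of_height_opp h.isUnimodular hv (h.height_opp_of_ne v hv hvc)
  have h0 {w : E} (hw : w ∈ (F.neighbor v).verts) := hS.height_opp_of_not_isShallow hsum hN hw
  have e := opp_eq_partner_sub (F := F) v
  obtain ⟨q, hq, hqv, hm⟩ := hS.exists_sub_partner_sub_mem hsum h hv hvc hN
  have hqN := hS.mem_neighbor F hv hq hqv
  generalize F.partner v = s at *
  by_cases hqc : q = c
  · subst hqc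
    have hm' := hS.opp_mem _ hqN
    rw [hS.neighbor_opp_apex hsum h hv hvc (h0 hqN), e] at hm'
    have heq : F.coord s (s - v - q) = F.coord s (v - s - q) := by
      rw [hS.eq_opp_apex_of_sub_sub_mem hsum h hc hp hv hpc hvc hm',
        hS.eq_opp_apex_of_sub_sub_mem hsum h hc hv hp hvc hpc hm]
    rw [map_sub, map_sub, map_sub, map_sub, F.coord_self s hp, F.coord_of_ne s hp v hv hpv] at heq
    linarith
  · obtain ⟨hsq, eq⟩ := hS.opp_eq_sub_of_sub_sub_mem hsum h.isUnimodular hv hp hq hpv.symm hqv.symm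
      (h.height_opp_of_ne q hq hqc) hm
    have hm' := hS.opp_mem F hq
    have hsN := hS.mem_neighbor F hv hp hpv
    refine hS.sub_sub_notMem_of_neg_sub_mem hsum hU (hS.opp_mem_neighbor F hv) hqN hsN (h0 hsN)
      (hS.ne_opp F hv hp) hsq ?_ ?_
    · rwa [e, neg_sub]
    · rwa [e, sub_sub_cancel, ← eq]

theorem exists_eq_neg_of_height_eq_neg_one (hy : y ∈ V) (hh : F.height y = -1) :
    ∃ s ∈ F.verts, y = -s := by
  refine F.eq_neg_of_height_eq_neg_one hh (fun w hw => ?_)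
    fun w hw => hS.coord_mem h.isUnimodular hw hy
  by_cases hwc : w = c
  · exact hwc ▸ hS.coord_apex_nonpos hsum h hc hy (by rw [hh]; norm_num)
  · exact hS.coord_nonpos_of_isShallow_neighbor h.isUnimodular hw (h.height_opp_of_ne w hw hwc)
      (hS.isShallow_neighbor hsum h hc hw hwc) hy hh

theorem neg_apex_mem : -c ∈ V := by
  have hsub : F.negLevel ⊆ F.verts.image (-·) := fun y hy => by
    obtain ⟨s, hs, e⟩ := hS.exists_eq_neg_of_height_eq_neg_one hsum h hc (F.mem_negLevel.1 hy).1
      (hS.height_eq_neg_one_of_isShallow h.isShallow hy)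
    exact Finset.mem_image.2 ⟨s, hs, e.symm⟩
  have heq := Finset.eq_of_subset_of_card_le hsub (by
    rw [hS.card_negLevel_of_isShallow hsum h.isShallow]
    exact Finset.card_image_le.trans F.card_verts.le)
  exact (F.mem_negLevel.1 (heq ▸ Finset.mem_image_of_mem _ h.mem)).1

theorem opp_apex : F.opp c = -c := by
  obtain ⟨s, hs, e⟩ :=
    hS.exists_eq_neg_of_height_eq_neg_one hsum h hc (hS.opp_mem F h.mem) h.height_opp
  rw [e, map_neg, F.coord_eq_ite h.mem hs] at hc
  by_cases hcs : c = s
  · rw [e, hcs]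
  · rw [if_neg hcs] at hc; norm_num at hc

theorem neighbor_opp_apex_eq_neg (hv : v ∈ F.verts) (hvc : v ≠ c) :
    (F.neighbor v).opp c = -c := by
  have hp := hS.partner_mem hsum h hv hvc
  have hpv := hS.partner_ne_self hsum h hv hvc
  have hpc := hS.partner_ne_apex hsum h hc hv hvc
  have e := opp_eq_partner_sub (F := F) v
  generalize F.partner v = p at *
  have hcN := hS.mem_neighbor F hv h.mem hvc.symm
  have hm := hS.opp_mem _ hcN
  have hneg : (F.neighbor v).height (-c) = -1 := by rw [map_neg, height_of_mem _ hcN]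
  by_contra hne
  have hjump : (F.neighbor v).jump c = 1 := by
    have hle := hS.height_le_jump_mul_coord _ hcN (hS.neg_apex_mem hsum h hc)
      (notMem_of_height_ne_one _ (by rw [hneg]; norm_num)) (Ne.symm hne)
    rw [hneg, map_neg, coord_self _ _ hcN] at hle
    linarith [hS.one_le_jump _ hcN]
  by_cases h0 : (F.neighbor v).height ((F.neighbor v).opp c) = 0
  · rw [hS.neighbor_opp_apex hsum h hv hvc h0, e] at hm
    have heq := hS.eq_opp_apex_of_sub_sub_mem hsum h hc hp hv hpc hvc hm
    rw [hS.opp_apex hsum h hc] at heq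
    exact hpv (sub_eq_zero.1 (by rw [← sub_left_inj (a := c), heq, zero_sub]))
  · have hN := hS.isApex_of_height_opp_ne_zero hsum (hS.isUnimodular_neighbor_of_height_opp
      h.isUnimodular hv (h.height_opp_of_ne v hv hvc)) (hS.isShallow_neighbor hsum h hc hv hvc)
      hcN h0
    have hcN2 : (F.neighbor v).coord c ((F.neighbor v).opp c) = -2 := by
      have hmul := hS.jump_mul_coord_opp _ hcN
      rw [hjump, hN.height_opp] at hmul
      linarith
    have hcoord := hS.coord_eq_neighbor_coord_add F hv h.mem hvc.symm ((F.neighbor v).opp c)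
    rw [hcN2, e, map_sub, F.coord_of_ne c h.mem p hp hpc.symm,
      F.coord_of_ne c h.mem v hv hvc.symm] at hcoord
    linarith [hS.neg_one_le_coord_apex hsum h hc hm]

theorem partner_partner (hv : v ∈ F.verts) (hvc : v ≠ c) : F.partner (F.partner v) = v := by
  have hp := hS.partner_mem hsum h hv hvc
  have hpc := hS.partner_ne_apex hsum h hc hv hvc
  have hcN := hS.mem_neighbor F hp h.mem hpc.symm
  have hopp := hS.neighbor_opp_apex_eq_neg hsum h hc hp hpc
  have hN : (F.neighbor (F.partner v)).IsApex c :=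
    hS.isApex_of_height_opp_ne_zero hsum
      (hS.isUnimodular_neighbor_of_height_opp h.isUnimodular hp (h.height_opp_of_ne _ hp hpc))
      (hS.isShallow_neighbor hsum h hc hp hpc) hcN
      (by rw [hopp, map_neg, height_of_mem _ hcN]; norm_num)
  have hppc := hS.partner_ne_apex hsum h hc hp hpc
  exact hS.partner_partner_of_isShallow hsum h hv hvc hpc hppc hN
    (hS.isShallow_neighbor hsum hN (by rw [hopp, map_neg, coord_self _ _ hcN])
      (hS.mem_neighbor F hp (hS.partner_mem hsum h hp hpc) (hS.partner_ne_self hsum h hp hpc)) hppc)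

theorem isNormalForm_of_isApex : F.IsNormalForm F.partner c (-c) where
  isUnimodular := h.isUnimodular
  mem := h.mem
  map_mem _ := hS.partner_mem hsum h
  map_ne _ := hS.partner_ne_apex hsum h hc
  map_map _ := hS.partner_partner hsum h hc
  map_ne_self _ := hS.partner_ne_self hsum h
  eq_or_eq_or_exists x hx := by
    have of_mem {s : E} (hs : s ∈ F.verts) (e : x = s ∨ x = -s) :
        x = c ∨ x = -c ∨ ∃ t ∈ F.verts, t ≠ c ∧ (x = t ∨ x = -t ∨ x = F.partner t - t) := by
      by_cases hsc : s = c
      · subst hsc; tauto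
      · exact Or.inr (Or.inr ⟨s, hs, hsc, by tauto⟩)
    by_cases hxF : x ∈ F.verts
    · exact of_mem hxF (Or.inl rfl)
    rcases (hS.height_nonpos F hx hxF).eq_or_lt with h0 | hneg
    · obtain ⟨t, ht, rfl⟩ := hS.exists_opp_eq_of_height_eq_zero F hx h0
      refine Or.inr (Or.inr ⟨t, ht, ?_, Or.inr (Or.inr (opp_eq_partner_sub t))⟩)
      rintro rfl
      linarith [h.height_opp]
    · obtain ⟨s, hs, e⟩ := hS.exists_eq_neg_of_height_eq_neg_one hsum h hc hx
        (hS.height_eq_neg_one_of_isShallow h.isShallow (F.mem_negLevel.2 ⟨hx, hneg⟩))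
      exact of_mem hs (Or.inr e)

end FacetSystem

end

/-! ### Doubled apexes -/

section

variable {E : Type*} [AddCommGroup E] [Module ℝ E] {V : Finset E} {L : AddSubgroup E} {d : ℕ}

/-- An apex facet whose vertex opposite to `c` is `a - 2c`, where the vertex `a`, its summit, has
partner `c`. This is the configuration that the parity of `d` has to exclude when the vertices sum
to zero. -/
structure SimplicialFacet.IsDoubledApex (F : SimplicialFacet V L d) (c a : E) : Prop
    extends F.IsApex c where
  summit_mem : a ∈ F.verts
  summit_ne : a ≠ c
  opp_apex : F.opp c = a - c - c
  partner_summit : F.partner a = c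

namespace SimplicialFacet.IsDoubledApex

variable {F : SimplicialFacet V L d} {a c : E} (h : F.IsDoubledApex c a)
include h

theorem coord_apex_opp : F.coord c (F.opp c) = -2 := by
  rw [h.opp_apex, map_sub, map_sub, F.coord_self c h.mem,
    F.coord_of_ne c h.mem a h.summit_mem h.summit_ne.symm]
  norm_num

theorem coord_summit_opp : F.coord a (F.opp c) = 1 := by
  rw [h.opp_apex, map_sub, map_sub, F.coord_self a h.summit_mem,
    F.coord_of_ne a h.summit_mem c h.mem h.summit_ne]
  norm_num

end SimplicialFacet.IsDoubledApex

namespace FacetSystem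

open SimplicialFacet

section

variable (hS : FacetSystem V L d) (hsum : ∑ x ∈ V, x = 0) {F : SimplicialFacet V L d}
  {c v : E} (h : F.IsApex c) (hc : F.coord c (F.opp c) = -2)
include hS hsum h hc

theorem one_le_coord_opp_apex (hv : v ∈ F.verts) (hvc : v ≠ c) (hN : ¬(F.neighbor v).IsShallow) :
    1 ≤ F.coord v (F.opp c) := by
  have h0 := h.height_opp_of_ne v hv hvc
  have hU := hS.isUnimodular_neighbor_of_height_opp h.isUnimodular hv h0
  have hcN := hS.mem_neighbor F hv h.mem hvc.symm
  have hc0 := hS.height_opp_of_not_isShallow hsum hN hcN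
  have hp := hS.partner_mem hsum h hv hvc
  have hcv : F.coord c (F.opp v) = if c = F.partner v then 1 else 0 := by
    rw [opp_eq_partner_sub, map_sub, F.coord_eq_ite h.mem hp, F.coord_of_ne c h.mem v hv hvc.symm,
      sub_zero]
  have hne : F.opp c ≠ (F.neighbor v).opp c := by
    intro e
    rw [e, hS.neighbor_opp_apex hsum h hv hvc hc0, map_sub, hcv, F.coord_self c h.mem] at hc
    split_ifs at hc <;> norm_num at hc
  have hnotMem : F.opp c ∉ (F.neighbor v).verts := by
    intro hm
    rcases (hS.mem_neighbor_iff F hv).1 hm with e | ⟨hm, -⟩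
    · have := h.height_opp
      rw [e, h0] at this
      norm_num at this
    · exact hS.opp_notMem F h.mem hm
  have hle := hS.height_le_jump_mul_coord _ hcN (hS.opp_mem F h.mem) hnotMem hne
  rw [hS.jump_eq_one_of_isUnimodular hU hcN hc0, hS.neighbor_height F hv, h.height_opp,
    hS.jump_eq_one_of_isUnimodular h.isUnimodular hv h0] at hle
  have hcoord := hS.coord_eq_neighbor_coord_add F hv h.mem hvc.symm (F.opp c)
  rw [hc, hcv, hS.neighbor_coord_opp hv (hS.coord_opp_of_isUnimodular h.isUnimodular hv h0)]
    at hcoord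
  refine realInt.one_le_of_pos (hS.coord_mem h.isUnimodular hv (hS.opp_mem F h.mem)) ?_
  split_ifs at hcoord <;> linarith

theorem opp_apex_eq_and_partner_eq (hv : v ∈ F.verts) (hvc : v ≠ c)
    (hN : ¬(F.neighbor v).IsShallow) : F.opp c = v - c - c ∧ F.partner v = c := by
  have h0 := h.height_opp_of_ne v hv hvc
  have hj := hS.jump_eq_one_of_isUnimodular h.isUnimodular hv h0
  have hp := hS.partner_mem hsum h hv hvc
  have hpv := hS.partner_ne_self hsum h hv hvc
  obtain ⟨q, hq, hqv, hm⟩ := hS.exists_sub_partner_sub_mem hsum h hv hvc hN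
  generalize F.partner v = s at *
  have hm2 : (F.neighbor v).height (v - s - q) = -2 := by
    rw [hS.neighbor_height F hv, hj, map_sub, map_sub, map_sub, map_sub, F.height_of_mem hv,
      F.height_of_mem hp, F.height_of_mem hq, F.coord_self v hv, F.coord_of_ne v hv s hp hpv.symm,
      F.coord_of_ne v hv q hq hqv.symm]
    norm_num
  have hopp2 : (F.neighbor v).height (F.opp c) = -2 := by
    have hle := hS.one_le_coord_opp_apex hsum h hc hv hvc hN
    have hge := hS.neg_two_le_height hsum (F.neighbor v) (hS.opp_mem F h.mem)
    rw [hS.neighbor_height F hv, hj, h.height_opp] at hge ⊢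
    linarith
  have e := hS.eq_of_height_eq_neg_two hsum (hS.opp_mem F h.mem) hm hopp2 hm2
  rw [e, map_sub, map_sub, F.coord_of_ne c h.mem v hv hvc.symm, F.coord_eq_ite h.mem hp,
    F.coord_eq_ite h.mem hq] at hc
  obtain ⟨hcs, hcq⟩ : c = s ∧ c = q := by
    split_ifs at hc with hcs hcq
    · exact ⟨hcs, hcq⟩
    all_goals norm_num at hc
  rw [e, ← hcs, ← hcq]
  exact ⟨rfl, rfl⟩

theorem exists_isDoubledApex : ∃ a, F.IsDoubledApex c a := by
  obtain ⟨a, ha, hac, hN⟩ : ∃ a ∈ F.verts, a ≠ c ∧ ¬(F.neighbor a).IsShallow := by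
    by_contra! hN
    have e := F.height_eq_add_sum_erase h.mem (F.opp c)
    rw [h.height_opp, hc] at e
    have : ∑ w ∈ F.verts.erase c, F.coord w (F.opp c) ≤ 0 := Finset.sum_nonpos fun w hw => by
      obtain ⟨hwc, hw⟩ := Finset.mem_erase.1 hw
      exact hS.coord_nonpos_of_isShallow_neighbor h.isUnimodular hw (h.height_opp_of_ne w hw hwc)
        (hN w hw hwc) (hS.opp_mem F h.mem) h.height_opp
    linarith
  obtain ⟨eopp, ep⟩ := hS.opp_apex_eq_and_partner_eq hsum h hc ha hac hN
  exact ⟨a, h, ha, hac, eopp, ep⟩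

end

section

variable (hS : FacetSystem V L d) (hsum : ∑ x ∈ V, x = 0) {F : SimplicialFacet V L d}
  {a c v w y : E} (h : F.IsDoubledApex c a)
include hS hsum h

theorem jump_apex_eq_one : F.jump c = 1 := by
  rcases hS.jump_coord_opp_apex hsum h.toIsApex with hj | hj
  · have := h.coord_apex_opp
    linarith
  · exact hj.1

theorem isShallow_neighbor_of_ne (hw : w ∈ F.verts) (hwc : w ≠ c) (hwa : w ≠ a) :
    (F.neighbor w).IsShallow := by
  by_contra hN
  obtain ⟨e, -⟩ := hS.opp_apex_eq_and_partner_eq hsum h.toIsApex h.coord_apex_opp hw hwc hN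
  rw [h.opp_apex, sub_left_inj, sub_left_inj] at e
  exact hwa e.symm

variable (hy : y ∈ F.negLevel)
include hy

theorem coord_nonpos_of_isDoubledApex (hyc : y ≠ F.opp c) (hw : w ∈ F.verts) (hwc : w ≠ c) :
    F.coord w y ≤ 0 := by
  have hyV := (F.mem_negLevel.1 hy).1
  have hh := hS.height_eq_neg_one_of_isShallow h.isShallow hy
  have h0 := h.height_opp_of_ne w hw hwc
  by_cases hwa : w = a
  · subst hwa
    by_contra! hpos
    have hj := hS.jump_eq_one_of_isUnimodular h.isUnimodular hw h0
    have hge := hS.neg_two_le_height hsum (F.neighbor w) hyV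
    have hone := realInt.one_le_of_pos (hS.coord_mem h.isUnimodular hw hyV) hpos
    rw [hS.neighbor_height F hw, hj, hh] at hge
    refine hyc (hS.eq_of_height_eq_neg_two hsum hyV (hS.opp_mem F h.mem) (F := F.neighbor w) ?_ ?_)
    · rw [hS.neighbor_height F hw, hj, hh]; linarith
    · rw [hS.neighbor_height F hw, hj, h.height_opp, h.coord_summit_opp]; norm_num
  · exact hS.coord_nonpos_of_isShallow_neighbor h.isUnimodular hw h0
      (hS.isShallow_neighbor_of_ne hsum h hw hwc hwa) hyV hh

theorem exists_eq_neg_of_coord_apex_nonpos (hyc : y ≠ F.opp c) (h0 : F.coord c y ≤ 0) :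
    ∃ s ∈ F.verts, y = -s := by
  refine F.eq_neg_of_height_eq_neg_one (hS.height_eq_neg_one_of_isShallow h.isShallow hy)
    (fun w hw => ?_) fun w hw => hS.coord_mem h.isUnimodular hw (F.mem_negLevel.1 hy).1
  by_cases hwc : w = c
  · exact hwc ▸ h0
  · exact hS.coord_nonpos_of_isDoubledApex hsum h hy hyc hw hwc

theorem coord_apex_eq_one_and_neighbor_height (hpos : 0 < F.coord c y) :
    F.coord c y = 1 ∧ (F.neighbor c).height y = -2 := by
  have hyV := (F.mem_negLevel.1 hy).1
  have hge := hS.neg_two_le_height hsum (F.neighbor c) hyV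
  have hone := realInt.one_le_of_pos (hS.coord_mem h.isUnimodular h.mem hyV) hpos
  rw [hS.neighbor_height F h.mem, hS.jump_apex_eq_one hsum h,
    hS.height_eq_neg_one_of_isShallow h.isShallow hy] at hge ⊢
  constructor <;> linarith

theorem partner_eq_apex_of_coord_neg (hpos : 0 < F.coord c y) (hw : w ∈ F.verts.erase c)
    (hneg : F.coord w y < 0) : F.partner w = c := by
  obtain ⟨hwc, hwF⟩ := Finset.mem_erase.1 hw
  have hc1 := (hS.coord_apex_eq_one_and_neighbor_height hsum h hy hpos).1
  obtain ⟨r, hr, -, e⟩ := hS.exists_eq_opp_sub hsum h.isUnimodular hwF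
    (h.height_opp_of_ne w hwF hwc) (F.mem_negLevel.1 hy).1
    (hS.height_eq_neg_one_of_isShallow h.isShallow hy) hneg
  rw [e, opp_eq_partner_sub, map_sub, map_sub,
    F.coord_eq_ite h.mem (hS.partner_mem hsum h.toIsApex hwF hwc),
    F.coord_of_ne c h.mem w hwF hwc.symm, F.coord_eq_ite h.mem hr] at hc1
  by_contra hpc
  rw [if_neg (Ne.symm hpc)] at hc1
  split_ifs at hc1 <;> norm_num at hc1

theorem two_le_card_partner_eq_apex (hpos : 0 < F.coord c y) :
    2 ≤ {s ∈ F.verts.erase c | F.partner s = c}.card := by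
  have hyV := (F.mem_negLevel.1 hy).1
  have hh := hS.height_eq_neg_one_of_isShallow h.isShallow hy
  obtain ⟨hc1, -⟩ := hS.coord_apex_eq_one_and_neighbor_height hsum h hy hpos
  have hyc : y ≠ F.opp c := by
    rintro rfl
    have := h.coord_apex_opp
    linarith
  have e := F.height_eq_add_sum_erase h.mem y
  rw [hh, hc1] at e
  obtain ⟨p, hp, q, hq, hpq⟩ := exists_add_of_sum_eq_two (T := F.verts.erase c)
    (f := fun w => -F.coord w y)
    (fun w hw => neg_nonneg.2 (hS.coord_nonpos_of_isDoubledApex hsum h hy hyc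
      (Finset.mem_of_mem_erase hw) (Finset.ne_of_mem_erase hw)))
    (fun w hw => neg_mem (hS.coord_mem h.isUnimodular (Finset.mem_of_mem_erase hw) hyV))
    (by rw [Finset.sum_neg_distrib]; linarith)
  have hne : p ≠ q := by
    rintro rfl
    obtain ⟨hpc, hpF⟩ := Finset.mem_erase.1 hp
    have hge := hS.neg_one_le_coord h.isUnimodular hpF (h.height_opp_of_ne p hpF hpc) hyV hh
    have := hpq p hp
    rw [if_pos rfl] at this
    linarith
  have hp' := hpq p hp
  have hq' := hpq q hq
  rw [if_pos rfl, if_neg hne] at hp'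
  rw [if_pos rfl, if_neg hne.symm] at hq'
  rw [← Finset.card_pair hne]
  refine Finset.card_le_card fun x hx => ?_
  rcases Finset.mem_insert.1 hx with rfl | hx
  · exact Finset.mem_filter.2 ⟨hp, hS.partner_eq_apex_of_coord_neg hsum h hy hpos hp (by linarith)⟩
  · rw [Finset.mem_singleton.1 hx]
    exact Finset.mem_filter.2 ⟨hq, hS.partner_eq_apex_of_coord_neg hsum h hy hpos hq (by linarith)⟩

theorem coord_apex_nonpos_of_isDoubledApex : F.coord c y ≤ 0 := by
  by_contra! hpos
  obtain ⟨hc1, hh⟩ := hS.coord_apex_eq_one_and_neighbor_height hsum h hy hpos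
  have hcard := hS.two_le_card_partner_eq_apex hsum h hy hpos
  have hsum_coord := hS.card_partner_eq_add_sum hsum h.toIsApex h.mem
  have hopp : F.opp c ∈ F.negLevel :=
    F.mem_negLevel.2 ⟨hS.opp_mem F h.mem, by rw [h.height_opp]; norm_num⟩
  have hyc : y ≠ F.opp c := by
    rintro rfl
    have := h.coord_apex_opp
    linarith
  have hneg : ∀ z ∈ (F.negLevel.erase (F.opp c)).erase y, ∃ s ∈ F.verts, z = -s := by
    intro z hz
    obtain ⟨hzy, hz⟩ := Finset.mem_erase.1 hz
    obtain ⟨hzc, hz⟩ := Finset.mem_erase.1 hz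
    refine hS.exists_eq_neg_of_coord_apex_nonpos hsum h hz hzc ?_
    by_contra! hzpos
    exact hzy (hS.eq_of_height_eq_neg_two hsum (F.mem_negLevel.1 hz).1 (F.mem_negLevel.1 hy).1
      (hS.coord_apex_eq_one_and_neighbor_height hsum h hz hzpos).2 hh)
  rw [← Finset.add_sum_erase _ _ hopp, ← Finset.add_sum_erase _ _ (Finset.mem_erase.2 ⟨hyc, hy⟩),
    h.coord_apex_opp, hc1, F.sum_coord_neg hneg h.mem, if_pos rfl] at hsum_coord
  have : (2 : ℝ) ≤ {s ∈ F.verts.erase c | F.partner s = c}.card := by exact_mod_cast hcard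
  split_ifs at hsum_coord <;> linarith

omit hy

theorem card_partner_eq_of_isDoubledApex (hv : v ∈ F.verts) :
    ({s ∈ F.verts.erase c | F.partner s = v}.card : ℝ) + (if v = c then 1 else 0) +
      F.coord v (F.opp c) = if -v ∈ F.negLevel.erase (F.opp c) then 1 else 0 := by
  have hopp : F.opp c ∈ F.negLevel :=
    F.mem_negLevel.2 ⟨hS.opp_mem F h.mem, by rw [h.height_opp]; norm_num⟩
  have hneg : ∀ y ∈ F.negLevel.erase (F.opp c), ∃ s ∈ F.verts, y = -s := fun y hy => by
    obtain ⟨hyc, hy⟩ := Finset.mem_erase.1 hy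
    exact hS.exists_eq_neg_of_coord_apex_nonpos hsum h hy hyc
      (hS.coord_apex_nonpos_of_isDoubledApex hsum h hy)
  have hsum_coord := hS.card_partner_eq_add_sum hsum h.toIsApex hv
  rw [← Finset.add_sum_erase _ _ hopp, F.sum_coord_neg hneg hv] at hsum_coord
  linarith

theorem neg_mem_and_partner_ne :
    -a ∈ V ∧ ∀ s ∈ F.verts, s ≠ c → F.partner s ≠ a := by
  have hcard := hS.card_partner_eq_of_isDoubledApex hsum h h.summit_mem
  rw [if_neg h.summit_ne, h.coord_summit_opp] at hcard
  have hmem : -a ∈ F.negLevel.erase (F.opp c) := by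
    by_contra hn
    rw [if_neg hn] at hcard
    linarith [Nat.cast_nonneg (α := ℝ) {s ∈ F.verts.erase c | F.partner s = a}.card]
  rw [if_pos hmem] at hcard
  have hempty : {s ∈ F.verts.erase c | F.partner s = a} = ∅ :=
    Finset.card_eq_zero.1 (Nat.cast_injective (R := ℝ) (by rw [Nat.cast_zero]; linarith))
  refine ⟨(F.mem_negLevel.1 (Finset.mem_of_mem_erase hmem)).1, fun s hs hsc hsa => ?_⟩
  exact Finset.notMem_empty s
    (hempty ▸ Finset.mem_filter.2 ⟨Finset.mem_erase.2 ⟨hsc, hs⟩, hsa⟩)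

/- The midpoint of `a - 2c` and `-a` is `-c`, which therefore is not a vertex. -/
theorem neg_apex_notMem : -c ∉ V := by
  intro hm
  obtain ⟨G, hG⟩ := hS.exists_mem_verts hm
  have hopp := hS.opp_mem F h.mem
  have hna := (hS.neg_mem_and_partner_ne hsum h).1
  rw [h.opp_apex] at hopp
  have e : -c + -c = (a - c - c) + -a := by abel
  have hheight : G.height (-c) + G.height (-c) = G.height (a - c - c) + G.height (-a) := by
    rw [← map_add, e, map_add]
  have hcoord : G.coord (-c) (-c) + G.coord (-c) (-c)
      = G.coord (-c) (a - c - c) + G.coord (-c) (-a) := by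
    rw [← map_add, e, map_add]
  rw [G.height_of_mem hG] at hheight
  have hle₁ := G.height_le_one hopp
  have hle₂ := G.height_le_one hna
  rw [G.coord_self _ hG,
    G.coord_of_ne _ hG _ (G.mem_of_height_eq_one hopp (by linarith)) (fun hh => h.summit_ne ?_),
    G.coord_of_ne _ hG _ (G.mem_of_height_eq_one hna (by linarith))
      fun hh => h.summit_ne (neg_injective hh.symm)] at hcoord
  · norm_num at hcoord
  · rw [← sub_eq_zero, ← sub_eq_zero.2 hh.symm]; abel

theorem partner_ne_apex_of_ne (hw : w ∈ F.verts) (hwc : w ≠ c) (hwa : w ≠ a) :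
    F.partner w ≠ c := by
  have hcard := hS.card_partner_eq_of_isDoubledApex hsum h h.mem
  rw [if_pos rfl, h.coord_apex_opp, if_neg fun hm => hS.neg_apex_notMem hsum h
    (F.mem_negLevel.1 (Finset.mem_of_mem_erase hm)).1] at hcard
  have hone : {s ∈ F.verts.erase c | F.partner s = c}.card = 1 :=
    Nat.cast_injective (R := ℝ) (by rw [Nat.cast_one]; linarith)
  intro hpc
  exact hwa (Finset.card_le_one.1 hone.le w
    (Finset.mem_filter.2 ⟨Finset.mem_erase.2 ⟨hwc, hw⟩, hpc⟩) a
    (Finset.mem_filter.2 ⟨Finset.mem_erase.2 ⟨h.summit_ne, h.summit_mem⟩, h.partner_summit⟩))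

theorem isApex_neighbor (hv : v ∈ F.verts) (hvc : v ≠ c) (hva : v ≠ a) :
    (F.neighbor v).IsApex c ∧ (F.neighbor v).opp c = F.opp c := by
  have hcN := hS.mem_neighbor F hv h.mem hvc.symm
  have haN := hS.mem_neighbor F hv h.summit_mem hva.symm
  have hh : (F.neighbor v).height (F.opp c) = -1 := by
    rw [h.opp_apex, map_sub, map_sub, height_of_mem _ hcN, height_of_mem _ haN]; norm_num
  have hopp : (F.neighbor v).opp c = F.opp c := by
    by_contra hne
    have hle := hS.height_le_jump_mul_coord _ hcN (hS.opp_mem F h.mem)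
      (notMem_of_height_ne_one _ (by rw [hh]; norm_num)) (Ne.symm hne)
    rw [hh, h.opp_apex, map_sub, map_sub, coord_self _ _ hcN,
      coord_of_ne _ _ hcN _ haN h.summit_ne.symm] at hle
    linarith [hS.one_le_jump _ hcN]
  exact ⟨hS.isApex_of_height_opp_ne_zero hsum (hS.isUnimodular_neighbor_of_height_opp
    h.isUnimodular hv (h.height_opp_of_ne v hv hvc))
    (hS.isShallow_neighbor_of_ne hsum h hv hvc hva) hcN (by rw [hopp, hh]; norm_num), hopp⟩

theorem partner_partner_of_isDoubledApex (hv : v ∈ F.verts) (hvc : v ≠ c) (hva : v ≠ a) :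
    F.partner (F.partner v) = v := by
  have partner_ne_a := (hS.neg_mem_and_partner_ne hsum h).2
  have hp := hS.partner_mem hsum h.toIsApex hv hvc
  have hpc := hS.partner_ne_apex_of_ne hsum h hv hvc hva
  have hpa := partner_ne_a v hv hvc
  have hpp := hS.partner_mem hsum h.toIsApex hp hpc
  have hppc := hS.partner_ne_apex_of_ne hsum h hp hpc hpa
  obtain ⟨hN, hopp⟩ := hS.isApex_neighbor hsum h hp hpc hpa
  refine hS.partner_partner_of_isShallow hsum h.toIsApex hv hvc hpc hppc hN ?_
  by_contra hNN
  have haN := hS.mem_neighbor F hp h.summit_mem hpa.symm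
  obtain ⟨e, -⟩ := hS.opp_apex_eq_and_partner_eq hsum hN (by
      rw [hopp, h.opp_apex, map_sub, map_sub, coord_self _ _ hN.mem,
        coord_of_ne _ _ hN.mem _ haN h.summit_ne.symm]
      norm_num)
    (hS.mem_neighbor F hp hpp (hS.partner_ne_self hsum h.toIsApex hp hpc)) hppc hNN
  rw [hopp, h.opp_apex, sub_left_inj, sub_left_inj] at e
  exact partner_ne_a _ hp hpc e.symm

theorem even_of_isDoubledApex : Even d := by
  have heven := even_card_of_involution (T := (F.verts.erase c).erase a) (τ := F.partner)
    (fun t ht => by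
      obtain ⟨ht, hta, htc⟩ := mem_erase_erase_iff.1 ht
      exact mem_erase_erase_iff.2 ⟨hS.partner_mem hsum h.toIsApex ht htc,
        (hS.neg_mem_and_partner_ne hsum h).2 t ht htc,
        hS.partner_ne_apex_of_ne hsum h ht htc hta⟩)
    (fun t ht => by
      obtain ⟨ht, hta, htc⟩ := mem_erase_erase_iff.1 ht
      exact hS.partner_partner_of_isDoubledApex hsum h ht htc hta)
    fun t ht => by
      obtain ⟨ht, -, htc⟩ := mem_erase_erase_iff.1 ht
      exact hS.partner_ne_self hsum h.toIsApex ht htc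
  rw [Finset.card_erase_of_mem (Finset.mem_erase.2 ⟨h.summit_ne, h.summit_mem⟩),
    Finset.card_erase_of_mem h.mem, F.card_verts] at heven
  have hpair : 2 ≤ d := by
    rw [← F.card_verts, ← Finset.card_pair h.summit_ne]
    exact Finset.card_le_card (by simp [Finset.insert_subset_iff, h.mem, h.summit_mem])
  rw [Nat.even_iff] at heven ⊢
  omega

omit h

theorem exists_isNormalForm_of_sum_eq_zero (hd : Odd d) :
    ∃ (F : SimplicialFacet V L d) (σ : E → E) (c : E), F.IsNormalForm σ c (-c) := by
  obtain ⟨F, c, h⟩ := hS.exists_isApex hsum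
  rcases hS.jump_coord_opp_apex hsum h with ⟨-, hc⟩ | ⟨-, hc⟩
  · exact ⟨F, F.partner, c, hS.isNormalForm_of_isApex hsum h hc⟩
  · obtain ⟨a, ha⟩ := hS.exists_isDoubledApex hsum h hc
    exact absurd (hS.even_of_isDoubledApex hsum ha) (Nat.not_even_iff_odd.2 hd)

end

theorem exists_isNormalForm (hS : FacetSystem V L d) (hd : Odd d) :
    ∃ (F : SimplicialFacet V L d) (σ : E → E) (c c' : E),
      F.IsNormalForm σ c c' ∧ (c' = -c ∨ ∃ a ∈ F.verts, a ≠ c ∧ c' = a - c) := by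
  by_cases hsum : ∑ x ∈ V, x = 0
  · obtain ⟨F, σ, c, h⟩ := hS.exists_isNormalForm_of_sum_eq_zero hsum hd
    exact ⟨F, σ, c, -c, h, Or.inl rfl⟩
  · obtain ⟨F, σ, c, a, ha, hac, h⟩ := hS.exists_isNormalForm_of_sum_ne_zero hd hsum
    exact ⟨F, σ, c, a - c, h, Or.inr ⟨a, ha, hac, rfl⟩⟩

end FacetSystem

end

/-! ### Neighbors by tilting -/

section

variable {E : Type*} [AddCommGroup E] [Module ℝ E] {V : Finset E} {L : AddSubgroup E} {d : ℕ}
  {f g : Module.Dual ℝ E} {x : E}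

theorem isExtreme_sep_apply_eq {A : Set E} {r : ℝ} (hf : ∀ y ∈ A, f y ≤ r) :
    IsExtreme ℝ A {y ∈ A | f y = r} := by
  refine ⟨fun y hy => hy.1, fun y hy z hz x hx hxyz => ⟨hy, ?_⟩⟩
  obtain ⟨a, b, ha, hb, hab, rfl⟩ := hxyz
  have hval : a * f y + b * f z = r := by simpa using hx.2
  have hbz : b * f z ≤ b * r := mul_le_mul_of_nonneg_left (hf z hz) hb.le
  have hr : a * r + b * r = r := by rw [← add_mul, hab, one_mul]
  exact (hf y hy).antisymm (le_of_mul_le_mul_left (by linarith) ha)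

theorem finrank_vectorSpan_add_one [FiniteDimensional ℝ E] {S : Set E} (hS : S.Nonempty)
    (hf : ∀ x ∈ S, f x = 1) (hspan : Submodule.span ℝ S = ⊤) :
    Module.finrank ℝ (vectorSpan ℝ S) + 1 = Module.finrank ℝ E := by
  obtain ⟨t, ht⟩ := hS
  have hker : vectorSpan ℝ S ≤ LinearMap.ker f := by
    rw [vectorSpan_def, Submodule.span_le]
    rintro _ ⟨x, hx, y, hy, rfl⟩
    simp [hf x hx, hf y hy]
  have hcompl : IsCompl (vectorSpan ℝ S) (Submodule.span ℝ {t}) := by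
    refine ⟨Submodule.disjoint_def.2 fun x hx hxt => ?_, codisjoint_iff_le_sup.2 ?_⟩
    · obtain ⟨c, rfl⟩ := Submodule.mem_span_singleton.1 hxt
      have hc : c = 0 := by simpa [hf t ht] using hker hx
      rw [hc, zero_smul]
    · rw [← hspan, Submodule.span_le]
      intro x hx
      rw [← sub_add_cancel x t]
      exact Submodule.add_mem_sup (vsub_mem_vectorSpan ℝ hx ht)
        (Submodule.mem_span_singleton_self t)
  have ht0 : t ≠ 0 := fun h => by simpa [h] using hf t ht
  rw [← Submodule.finrank_add_eq_of_isCompl hcompl, finrank_span_singleton ht0]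

/-- The polar of a finite point set, as a subset of the dual space: the functionals defining valid
inequalities `f ≤ 1`. -/
def polarSet (V : Finset E) : Set (Module.Dual ℝ E) := {f | ∀ v ∈ V, f v ≤ 1}

/-- The points of `V` on which the valid inequality `f ≤ 1` is tight. -/
def tightSet (V : Finset E) (f : Module.Dual ℝ E) : Finset E := {v ∈ V | f v = 1}

theorem mem_tightSet : x ∈ tightSet V f ↔ x ∈ V ∧ f x = 1 := by
  simp [tightSet]

theorem apply_le_of_mem_convexHull {r : ℝ} (hf : ∀ v ∈ V, f v ≤ r)
    (hx : x ∈ convexHull ℝ (V : Set E)) : f x ≤ r :=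
  convexHull_min (t := {y | f y ≤ r}) hf (convex_halfSpace_le f.isLinear r) hx

theorem exists_pos_add_smul_mem_polarSet (hf : f ∈ polarSet V)
    (hg : ∀ v ∈ tightSet V f, g v ≤ 0) : ∃ s : ℝ, 0 < s ∧ f + s • g ∈ polarSet V := by
  have key : ∀ᶠ s in nhdsWithin (0 : ℝ) (Set.Ioi 0), ∀ v ∈ V, f v + s * g v ≤ 1 := by
    rw [Filter.eventually_all_finset]
    intro v hv
    by_cases htight : f v = 1
    · filter_upwards [self_mem_nhdsWithin] with s hs
      linarith [mul_nonpos_of_nonneg_of_nonpos (le_of_lt hs) (hg v (mem_tightSet.2 ⟨hv, htight⟩))]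
    · have hlt : f v + 0 * g v < 1 := by simpa using lt_of_le_of_ne (hf v hv) htight
      have hcont : ContinuousAt (fun s : ℝ => f v + s * g v) 0 := by fun_prop
      filter_upwards [nhdsWithin_le_nhds (hcont.eventually_lt continuousAt_const hlt)] with s hs
      exact hs.le
  obtain ⟨s, hs, hpos⟩ := (key.and self_mem_nhdsWithin).exists
  exact ⟨s, hpos, by simpa [polarSet] using hs⟩

theorem span_tightSet_eq_top_of_mem_extremePoints (hf : f ∈ Set.extremePoints ℝ (polarSet V)) :
    Submodule.span ℝ (tightSet V f : Set E) = ⊤ := by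
  by_contra hspan
  obtain ⟨g, hg0, hg⟩ := Submodule.exists_le_ker_of_lt_top _ (lt_top_iff_ne_top.2 hspan)
  have hgT : ∀ v ∈ tightSet V f, g v = 0 := fun v hv => hg (Submodule.subset_span hv)
  obtain ⟨s, hs, hmem⟩ := exists_pos_add_smul_mem_polarSet (g := g) hf.1 fun v hv => (hgT v hv).le
  obtain ⟨t, ht, hmem'⟩ := exists_pos_add_smul_mem_polarSet (g := -g) hf.1 fun v hv => by
    simp [hgT v hv]
  have hopen : f ∈ openSegment ℝ (f + s • g) (f + t • -g) := by
    refine ⟨t / (s + t), s / (s + t), by positivity, by positivity, by field_simp; ring, ?_⟩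
    ext x
    simp only [LinearMap.add_apply, LinearMap.smul_apply, LinearMap.neg_apply, smul_eq_mul]
    field_simp
    ring
  have hsg : s • g = 0 := by simpa using hf.2 hmem hmem' hopen
  exact hg0 ((smul_eq_zero.1 hsg).resolve_left hs.ne')

theorem mem_extremePoints_polarSet_of_span_tightSet (hf : f ∈ polarSet V)
    (hspan : Submodule.span ℝ (tightSet V f : Set E) = ⊤) :
    f ∈ Set.extremePoints ℝ (polarSet V) := by
  refine ⟨hf, fun g hg h hh hfgh => LinearMap.ext_on hspan fun v hv => ?_⟩
  obtain ⟨hvV, hfv⟩ := mem_tightSet.1 hv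
  have hface := isExtreme_sep_apply_eq (f := Module.Dual.eval ℝ E v) (A := polarSet V) (r := 1)
    fun k hk => hk v hvV
  exact (hface.2 hg hh ⟨hf, hfv⟩ hfgh).2.trans hfv.symm

theorem extremePoints_sep_apply_eq_one (hV : Set.extremePoints ℝ (convexHull ℝ (V : Set E)) = V)
    (hf : f ∈ polarSet V) :
    Set.extremePoints ℝ {y ∈ convexHull ℝ (V : Set E) | f y = 1} = tightSet V f := by
  rw [(isExtreme_sep_apply_eq fun y hy => apply_le_of_mem_convexHull hf hy).extremePoints_eq, hV]
  ext x
  have := subset_convexHull ℝ (V : Set E)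
  simp only [Set.mem_inter_iff, Set.mem_ofPred_eq, Finset.mem_coe, mem_tightSet]
  exact ⟨fun h => ⟨h.2, h.1.2⟩, fun h => ⟨⟨this h.1, h.2⟩, h.1⟩⟩

namespace SimplicialFacet

theorem exists_verts_eq_tightSet (hd : Module.finrank ℝ E = d) (hf : f ∈ polarSet V)
    (hint : ∀ x ∈ L, f x ∈ realInt) (hspan : Submodule.span ℝ (tightSet V f : Set E) = ⊤)
    (hcard : (tightSet V f).card = d) : ∃ F : SimplicialFacet V L d, F.verts = tightSet V f := by
  set T := tightSet V f
  have hrange : Submodule.span ℝ (Set.range ((↑) : T → E)) = ⊤ := by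
    rwa [Subtype.range_coe_subtype]
  let b := Module.Basis.mk (linearIndependent_of_top_le_span_of_card_eq_finrank hrange.ge
    (by simp [hcard, hd])) hrange.ge
  have hb : ∀ t : T, b t = t := fun t => Module.Basis.mk_apply _ _ t
  let coord : E → E →ₗ[ℝ] ℝ := fun v => if h : v ∈ T then b.coord ⟨v, h⟩ else 0
  have hcoord : ∀ t : T, coord t = b.coord t := fun t => dif_pos t.2
  have hdual : ∀ s t : T, coord s t = if s = t then 1 else 0 := fun s t => by
    rw [hcoord, ← hb t, Module.Basis.coord_apply, Module.Basis.repr_self, Finsupp.single_apply]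
    simp only [eq_comm]
  have hrepr : ∀ x, ∑ v ∈ T, coord v x • v = x := fun x => by
    rw [← Finset.sum_coe_sort]
    conv_rhs => rw [← b.sum_repr x]
    exact Finset.sum_congr rfl fun t _ => by rw [hcoord, hb, Module.Basis.coord_apply]
  have hheight : ∀ x, ∑ v ∈ T, coord v x = f x := fun x => by
    conv_rhs => rw [← hrepr x, map_sum]
    exact Finset.sum_congr rfl fun v hv => by
      rw [map_smul, (mem_tightSet.1 hv).2, smul_eq_mul, mul_one]
  exact ⟨{
    verts := T
    verts_subset := Finset.filter_subset _ _
    card_verts := hcard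
    coord := coord
    coord_self := fun v hv => by simpa using hdual ⟨v, hv⟩ ⟨v, hv⟩
    coord_of_ne := fun v hv w hw hvw => by simpa [hvw] using hdual ⟨v, hv⟩ ⟨w, hw⟩
    sum_coord_smul := hrepr
    sum_coord_lt_one := fun x hx hxT => (hheight x).trans_lt <|
      lt_of_le_of_ne (hf x hx) fun h => hxT (mem_tightSet.2 ⟨hx, h⟩)
    sum_coord_mem := fun x hx => (hheight x).symm ▸ hint x hx }, rfl⟩

variable {F F' : SimplicialFacet V L d} {v v' : E}

/-- Start from the normal of `F` and tilt about the ridge opposite to `v` until the hyperplane meets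
another point of `V`; the ratio below is the amount of tilting needed to reach `x`. -/
theorem exists_tilt (hneg : ∃ x ∈ V, F.coord v x < 0) :
    ∃ t : ℝ, ∃ x ∈ V, F.coord v x < 0 ∧ (F.height - t • F.coord v) x = 1 ∧
      F.height - t • F.coord v ∈ polarSet V := by
  have hne : {x ∈ V | F.coord v x < 0}.Nonempty := by
    obtain ⟨x, hx, hx0⟩ := hneg
    exact ⟨x, Finset.mem_filter.2 ⟨hx, hx0⟩⟩
  obtain ⟨x, hx, hmin⟩ :=
    Finset.exists_min_image _ (fun x => (1 - F.height x) / (-F.coord v x)) hne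
  obtain ⟨hxV, hx0⟩ := Finset.mem_filter.1 hx
  set t := (1 - F.height x) / (-F.coord v x) with ht
  have ht0 : 0 ≤ t := div_nonneg (by linarith [F.height_le_one hxV]) (by linarith)
  refine ⟨t, x, hxV, hx0, ?_, fun w hw => ?_⟩
  · have := hx0.ne
    simp only [LinearMap.sub_apply, LinearMap.smul_apply, smul_eq_mul, ht]
    field_simp
    ring
  · have hle := F.height_le_one hw
    simp only [LinearMap.sub_apply, LinearMap.smul_apply, smul_eq_mul]
    rcases lt_or_ge (F.coord v w) 0 with h | h
    · have := (le_div_iff₀ (neg_pos.2 h)).1 (hmin w (Finset.mem_filter.2 ⟨hw, h⟩))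
      linarith
    · linarith [mul_nonneg ht0 h]

theorem eq_top_of_coord_ne_zero {M : Submodule ℝ E} (hv : v ∈ F.verts)
    (hM : ∀ w ∈ F.verts, w ≠ v → w ∈ M) (hx : x ∈ M) (hx0 : F.coord v x ≠ 0) : M = ⊤ := by
  have hvM : v ∈ M := by
    have hsum := F.sum_coord_smul x
    rw [← Finset.add_sum_erase _ _ hv] at hsum
    rw [← M.smul_mem_iff hx0, eq_sub_of_add_eq hsum]
    refine M.sub_mem hx (M.sum_mem fun w hw => M.smul_mem _ ?_)
    exact hM w (Finset.mem_of_mem_erase hw) (Finset.ne_of_mem_erase hw)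
  rw [eq_top_iff]
  rintro y -
  rw [← F.sum_coord_smul y]
  refine M.sum_mem fun w hw => M.smul_mem _ ?_
  by_cases h : w = v
  · exact h ▸ hvM
  · exact hM w hw h

theorem isNeighbor_of_subset (hv : v ∈ F.verts) (hv' : v' ∉ F.verts) (hmem : v' ∈ F'.verts)
    (hsub : ∀ w ∈ F.verts, w ≠ v → w ∈ F'.verts) : F.IsNeighbor v F' v' := by
  have hinsert : insert v' (F.verts.erase v) = F'.verts := by
    refine Finset.eq_of_subset_of_card_le (Finset.insert_subset hmem fun w hw => ?_) ?_
    · exact hsub w (Finset.mem_of_mem_erase hw) (Finset.ne_of_mem_erase hw)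
    · rw [F'.card_verts, Finset.card_insert_of_notMem fun h => hv' (Finset.mem_of_mem_erase h),
        Finset.card_erase_add_one hv, F.card_verts]
  refine ⟨hv', fun x => ?_⟩
  rw [← hinsert, Finset.mem_insert, Finset.mem_erase, and_comm]

theorem exists_isNeighbor (hv : v ∈ F.verts) (hneg : ∃ x ∈ V, F.coord v x < 0)
    (hV : ∀ f ∈ polarSet V, Submodule.span ℝ (tightSet V f : Set E) = ⊤ →
      ∃ F : SimplicialFacet V L d, F.verts = tightSet V f) :
    ∃ F' v', F.IsNeighbor v F' v' := by
  obtain ⟨t, x, hxV, hx0, htight, hmem⟩ := exists_tilt hneg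
  set f := F.height - t • F.coord v
  have hxf : x ∈ tightSet V f := mem_tightSet.2 ⟨hxV, htight⟩
  have hsub : ∀ w ∈ F.verts, w ≠ v → w ∈ tightSet V f := fun w hw hwv =>
    mem_tightSet.2 ⟨F.verts_subset hw, by
      simp [f, F.height_of_mem hw, F.coord_of_ne v hv w hw hwv.symm]⟩
  have hspan := F.eq_top_of_coord_ne_zero hv
    (fun w hw hwv => Submodule.subset_span (hsub w hw hwv)) (Submodule.subset_span hxf) hx0.ne
  obtain ⟨F', hF'⟩ := hV f hmem hspan
  have hxF : x ∉ F.verts := fun h => by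
    rw [F.coord_eq_ite hv h] at hx0
    split_ifs at hx0 <;> linarith
  exact ⟨F', x, isNeighbor_of_subset hv hxF (hF' ▸ hxf) (hF' ▸ hsub)⟩

theorem exists_range_eq_verts (F : SimplicialFacet V L d) :
    ∃ g : Fin d → E, Set.range g = F.verts :=
  ⟨(↑) ∘ (F.verts.equivFinOfCardEq F.card_verts).symm, by
    rw [EquivLike.range_comp, Subtype.range_coe_subtype, Finset.setOfPred_mem]⟩

theorem injective_of_range_eq_verts {g : Fin d → E} (hg : Set.range g = F.verts) :
    Function.Injective g := by
  have himage : Finset.univ.image g = F.verts := by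
    rw [← Finset.coe_inj, Finset.coe_image, Finset.coe_univ, Set.image_univ, hg]
  have hcard : (Finset.univ.image g).card = (Finset.univ : Finset (Fin d)).card := by
    rw [himage, F.card_verts, Finset.card_fin]
  simpa using Finset.card_image_iff.1 hcard

theorem IsNeighbor.range_update {g : Fin d → E} {i : Fin d} (hg : Set.range g = F.verts)
    (h : F.IsNeighbor (g i) F' v') : Set.range (Function.update g i v') = F'.verts := by
  ext x
  rw [Finset.mem_coe, h.2 x, ← Finset.mem_coe, ← hg]
  constructor
  · rintro ⟨j, rfl⟩
    rcases eq_or_ne j i with rfl | hj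
    · exact Or.inl (Function.update_self ..)
    · rw [Function.update_of_ne hj]
      exact Or.inr ⟨⟨j, rfl⟩, (injective_of_range_eq_verts hg).ne hj⟩
  · rintro (rfl | ⟨⟨j, rfl⟩, hj⟩)
    · exact ⟨i, Function.update_self ..⟩
    · exact ⟨j, Function.update_of_ne (fun e => hj (congrArg g e)) ..⟩

end SimplicialFacet

end

/-! ### The facet system of a reflexive polytope -/

section

variable {d : ℕ}

/-- The lattice `ℤ^d` as a subgroup of `ℝ^d`. -/
def integerLattice (d : ℕ) : AddSubgroup (Fin d → ℝ) :=
  AddSubgroup.pi Set.univ fun _ => realInt.toAddSubgroup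

theorem mem_integerLattice {x : Fin d → ℝ} : x ∈ integerLattice d ↔ IsLP x := by
  simp [integerLattice, AddSubgroup.mem_pi, IsLP, eq_comm]

/-- The vector representing a functional with respect to the standard inner product. -/
def normal : Module.Dual ℝ (Fin d → ℝ) ≃ₗ[ℝ] (Fin d → ℝ) := (dotProductEquiv ℝ (Fin d)).symm

theorem dotp_normal (f : Module.Dual ℝ (Fin d → ℝ)) (x : Fin d → ℝ) : dotp (normal f) x = f x :=
  LinearMap.congr_fun ((dotProductEquiv ℝ (Fin d)).apply_symm_apply f) x

theorem dotp_mem_realInt {x y : Fin d → ℝ} (hx : x ∈ integerLattice d) (hy : y ∈ integerLattice d) :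
    dotp x y ∈ realInt :=
  sum_mem fun i _ => mul_mem (hx i trivial) (hy i trivial)

section MinimalVolume

variable {V : Finset (Fin d → ℝ)} {L : AddSubgroup (Fin d → ℝ)} {F : SimplicialFacet V L d}
  {g : Fin d → Fin d → ℝ}

namespace SimplicialFacet

theorem sum_coord_smul_of_range_eq_verts (hg : Set.range g = F.verts) (x : Fin d → ℝ) :
    ∑ i, F.coord (g i) x • g i = x := by
  have himage : F.verts = Finset.univ.image g := by
    rw [← Finset.coe_inj, Finset.coe_image, Finset.coe_univ, Set.image_univ, hg]
  conv_rhs => rw [← F.sum_coord_smul x, himage]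
  rw [Finset.sum_image (injective_of_range_eq_verts hg).injOn]

theorem det_ne_zero_of_range_eq_verts (hg : Set.range g = F.verts) : (Matrix.of g).det ≠ 0 := by
  have hmem : ∀ i, g i ∈ F.verts := fun i => Finset.mem_coe.1 (hg ▸ Set.mem_range_self i)
  have hli : LinearIndependent ℝ g :=
    LinearIndependent.of_pairwise_dual_eq_zero_one g (fun i => F.coord (g i))
      (fun i j hij => F.coord_of_ne _ (hmem i) _ (hmem j)
        ((injective_of_range_eq_verts hg).ne hij))
      fun i => F.coord_self _ (hmem i)
  have hunit : IsUnit (Matrix.of g) := Matrix.linearIndependent_rows_iff_isUnit.1 hli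
  exact ((Matrix.isUnit_iff_isUnit_det _).1 hunit).ne_zero

theorem det_update (hg : Set.range g = F.verts) (i : Fin d) (x : Fin d → ℝ) :
    (Matrix.of (Function.update g i x)).det = F.coord (g i) x * (Matrix.of g).det := by
  have hx : ∑ k, F.coord (g k) x • Matrix.of g k = x := sum_coord_smul_of_range_eq_verts hg x
  have hdet := Matrix.det_updateRow_sum (Matrix.of g) i fun k => F.coord (g k) x
  rwa [hx, smul_eq_mul] at hdet

theorem exists_one_le_abs_coord (F : SimplicialFacet V L d) :
    ∃ F : SimplicialFacet V L d, ∀ v ∈ F.verts, ∀ F' v',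
      F.IsNeighbor v F' v' → 1 ≤ |F.coord v v'| := by
  let G : Set (Fin d → Fin d → ℝ) := {g | ∃ F : SimplicialFacet V L d, Set.range g = F.verts}
  have hfin : G.Finite := by
    refine (Set.Finite.pi' fun _ : Fin d => V.finite_toSet).subset ?_
    rintro g ⟨F, hg⟩ i
    exact F.verts_subset (Finset.mem_coe.1 (hg ▸ Set.mem_range_self i))
  obtain ⟨g₀, hg₀⟩ := F.exists_range_eq_verts
  obtain ⟨g, ⟨F, hg⟩, hmin⟩ :=
    Set.exists_min_image G (fun g => |(Matrix.of g).det|) hfin ⟨g₀, F, hg₀⟩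
  refine ⟨F, fun v hv F' v' h => ?_⟩
  obtain ⟨i, rfl⟩ : v ∈ Set.range g := hg ▸ hv
  have hle := hmin _ ⟨F', h.range_update hg⟩
  rw [det_update hg, abs_mul] at hle
  exact le_of_mul_le_mul_right (by rwa [one_mul])
    (abs_pos.2 (det_ne_zero_of_range_eq_verts hg))

end SimplicialFacet

end MinimalVolume

/-- `V` is the vertex set of a simplicial reflexive polytope. -/
structure IsSimplicialReflexive (V : Finset (Fin d → ℝ)) : Prop where
  extremePoints_eq : Set.extremePoints ℝ (convexHull ℝ (V : Set (Fin d → ℝ))) = V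
  isReflexive : IsReflexive (convexHull ℝ (V : Set (Fin d → ℝ)))
  isSimplicial : IsSimplicial (convexHull ℝ (V : Set (Fin d → ℝ)))

theorem IsReflexive.exists_isSimplicialReflexive {P : Set (Fin d → ℝ)} (hP : IsReflexive P)
    (hs : IsSimplicial P) : ∃ V : Finset (Fin d → ℝ), IsSimplicialReflexive V ∧
      P = convexHull ℝ (V : Set (Fin d → ℝ)) := by
  obtain ⟨W, -, hW⟩ := hP.1
  have hcompact : IsCompact P := hW ▸ W.finite_toSet.isCompact_convexHull ℝ
  have hconvex : Convex ℝ P := hW ▸ convex_convexHull ℝ _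
  have hfin : (Set.extremePoints ℝ P).Finite :=
    W.finite_toSet.subset (hW ▸ extremePoints_convexHull_subset)
  have hV : convexHull ℝ (hfin.toFinset : Set (Fin d → ℝ)) = P := by
    have hclosure := closure_convexHull_extremePoints hcompact hconvex
    rwa [(hfin.isClosed_convexHull ℝ).closure_eq, ← hfin.coe_toFinset] at hclosure
  exact ⟨hfin.toFinset, ⟨by rw [hV, hfin.coe_toFinset], by rwa [hV], by rwa [hV]⟩, hV.symm⟩

namespace IsSimplicialReflexive

variable {V : Finset (Fin d → ℝ)} {f : Module.Dual ℝ (Fin d → ℝ)}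

theorem dualPolytope_convexHull (V : Finset (Fin d → ℝ)) :
    dualPolytope (convexHull ℝ (V : Set (Fin d → ℝ))) = normal '' polarSet V := by
  ext u
  obtain ⟨f, rfl⟩ := normal.surjective u
  rw [normal.injective.mem_set_image]
  simp only [dualPolytope, dotp_normal, Set.mem_ofPred_eq, polarSet]
  exact ⟨fun h v hv => h v (subset_convexHull ℝ _ hv), fun h y => apply_le_of_mem_convexHull h⟩

theorem normal_mem_extremePoints_iff :
    normal f ∈ Set.extremePoints ℝ (dualPolytope (convexHull ℝ (V : Set (Fin d → ℝ)))) ↔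
      f ∈ Set.extremePoints ℝ (polarSet V) := by
  rw [dualPolytope_convexHull, ← image_extremePoints normal, normal.injective.mem_set_image]

section

variable (hV : IsSimplicialReflexive V)
include hV

theorem mem_lattice {v : Fin d → ℝ} (hv : v ∈ V) : v ∈ integerLattice d := by
  obtain ⟨W, hW, hPW⟩ := hV.isReflexive.1
  have hext : v ∈ Set.extremePoints ℝ (convexHull ℝ (V : Set (Fin d → ℝ))) := by
    rwa [hV.extremePoints_eq]
  rw [hPW] at hext
  exact mem_integerLattice.2 (hW v (extremePoints_convexHull_subset hext))

theorem apply_mem_realInt (hf : f ∈ Set.extremePoints ℝ (polarSet V)) {x : Fin d → ℝ}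
    (hx : x ∈ integerLattice d) : f x ∈ realInt := by
  obtain ⟨W, hW, hDW⟩ := hV.isReflexive.2.2
  have hext := normal_mem_extremePoints_iff.2 hf
  rw [hDW] at hext
  rw [← dotp_normal]
  exact dotp_mem_realInt (mem_integerLattice.2 (hW _ (extremePoints_convexHull_subset hext))) hx

theorem eq_zero_of_forall_nonpos (hf : ∀ v ∈ V, f v ≤ 0) : f = 0 := by
  have hmax : IsLocalMax f.toContinuousLinearMap 0 := by
    filter_upwards [mem_interior_iff_mem_nhds.1 hV.isReflexive.2.1] with y hy
    simpa using apply_le_of_mem_convexHull hf hy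
  have hzero := hmax.hasFDerivAt_eq_zero f.toContinuousLinearMap.hasFDerivAt
  ext x
  exact DFunLike.congr_fun hzero (Pi.single x 1)

theorem exists_isMaxOn_extremePoints (x : Fin d → ℝ) :
    ∃ f ∈ Set.extremePoints ℝ (polarSet V), ∀ g ∈ polarSet V, g x ≤ f x := by
  set D := dualPolytope (convexHull ℝ (V : Set (Fin d → ℝ)))
  have hcompact : IsCompact D := by
    obtain ⟨W, -, hDW⟩ := hV.isReflexive.2.2
    rw [show D = _ from hDW]
    exact W.finite_toSet.isCompact_convexHull ℝ
  have hmem : ∀ {g}, normal g ∈ D ↔ g ∈ polarSet V := fun {g} => by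
    rw [show D = _ from dualPolytope_convexHull V, normal.injective.mem_set_image]
  let l : StrongDual ℝ (Fin d → ℝ) := (dotProductEquiv ℝ (Fin d) x).toContinuousLinearMap
  have hl : ∀ g, l (normal g) = g x := fun g =>
    (dotProduct_comm x (normal g)).trans (dotp_normal g x)
  have hexposed : IsExposed ℝ D (l.toExposed D) := ContinuousLinearMap.toExposed.isExposed
  have hne : (l.toExposed D).Nonempty := by
    have h0 : normal 0 ∈ D := hmem.2 fun v _ => zero_le_one
    obtain ⟨u, hu, hmax⟩ := hcompact.exists_isMaxOn ⟨_, h0⟩ l.continuous.continuousOn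
    exact ⟨u, hu, hmax⟩
  obtain ⟨u, hu⟩ := (hexposed.isCompact hcompact).extremePoints_nonempty hne
  obtain ⟨f, rfl⟩ := normal.surjective u
  refine ⟨f, normal_mem_extremePoints_iff.1
    (hexposed.isExtreme.extremePoints_subset_extremePoints hu), fun g hg => ?_⟩
  rw [← hl, ← hl]
  exact (extremePoints_subset hu).2 _ (hmem.2 hg)

variable [NeZero d]

theorem zero_notMem : (0 : Fin d → ℝ) ∉ V := fun h =>
  Set.disjoint_left.1 (disjoint_interior_extremePoints _) hV.isReflexive.2.1
    (hV.extremePoints_eq.symm ▸ h)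

theorem card_tightSet (hf : f ∈ polarSet V)
    (hspan : Submodule.span ℝ (tightSet V f : Set (Fin d → ℝ)) = ⊤) : (tightSet V f).card = d := by
  have hne : (tightSet V f : Set (Fin d → ℝ)).Nonempty := by
    by_contra! h
    rw [h, Submodule.span_empty] at hspan
    exact bot_ne_top hspan
  set S := {y ∈ convexHull ℝ (V : Set (Fin d → ℝ)) | f y = 1}
  have hsub : (tightSet V f : Set (Fin d → ℝ)) ⊆ S := fun v hv =>
    ⟨subset_convexHull ℝ _ (mem_tightSet.1 hv).1, (mem_tightSet.1 hv).2⟩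
  have hrank := finrank_vectorSpan_add_one (hne.mono hsub) (fun x hx => hx.2)
    (top_le_iff.1 (hspan.ge.trans (Submodule.span_mono hsub)))
  rw [Module.finrank_fin_fun] at hrank
  have hfacet : IsFacet (convexHull ℝ (V : Set (Fin d → ℝ))) S := by
    refine ⟨normal f, hne.mono hsub, fun y hy => ?_, by simp only [dotp_normal, S], by omega⟩
    rw [dotp_normal]
    exact apply_le_of_mem_convexHull hf hy
  have hcard := hV.isSimplicial _ hfacet
  rwa [extremePoints_sep_apply_eq_one hV.extremePoints_eq hf, Set.ncard_coe_finset] at hcard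

theorem exists_verts_eq_tightSet (hf : f ∈ polarSet V)
    (hspan : Submodule.span ℝ (tightSet V f : Set (Fin d → ℝ)) = ⊤) :
    ∃ F : SimplicialFacet V (integerLattice d) d, F.verts = tightSet V f :=
  SimplicialFacet.exists_verts_eq_tightSet (Module.finrank_fin_fun ℝ) hf
    (fun _ => hV.apply_mem_realInt (mem_extremePoints_polarSet_of_span_tightSet hf hspan)) hspan
    (hV.card_tightSet hf hspan)

theorem exists_coord_nonneg (x : Fin d → ℝ) :
    ∃ F : SimplicialFacet V (integerLattice d) d, ∀ v ∈ F.verts, 0 ≤ F.coord v x := by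
  obtain ⟨f, hf, hmax⟩ := hV.exists_isMaxOn_extremePoints x
  obtain ⟨F, hF⟩ := hV.exists_verts_eq_tightSet hf.1 (span_tightSet_eq_top_of_mem_extremePoints hf)
  refine ⟨F, fun v hv => ?_⟩
  obtain ⟨s, hs, hmem⟩ := exists_pos_add_smul_mem_polarSet (g := -F.coord v) hf.1 fun w hw => by
    rw [LinearMap.neg_apply, F.coord_eq_ite hv (hF ▸ hw)]
    split_ifs <;> norm_num
  have hle : f x + s * -F.coord v x ≤ f x := by simpa using hmax _ hmem
  by_contra! hneg
  linarith [mul_pos hs (neg_pos.2 hneg)]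

theorem exists_isNeighbor (F : SimplicialFacet V (integerLattice d) d) {v : Fin d → ℝ}
    (hv : v ∈ F.verts) : ∃ F' v', F.IsNeighbor v F' v' := by
  refine SimplicialFacet.exists_isNeighbor hv ?_ fun f => hV.exists_verts_eq_tightSet
  by_contra! hnonneg
  have hzero := hV.eq_zero_of_forall_nonpos (f := -F.coord v) fun w hw => by
    simpa using hnonneg w hw
  have := F.coord_self v hv
  rw [neg_eq_zero.1 hzero] at this
  exact zero_ne_one this

theorem facetSystem (hcard : V.card + 1 = 3 * d) : FacetSystem V (integerLattice d) d where
  mem_lattice _ := hV.mem_lattice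
  zero_notMem := hV.zero_notMem
  card_add_one := hcard
  exists_neighbor F _ := hV.exists_isNeighbor F
  exists_coord_nonneg := hV.exists_coord_nonneg
  one_le_abs_coord := (hV.exists_coord_nonneg 0).choose.exists_one_le_abs_coord

end

end IsSimplicialReflexive

end

/-! ### The standard model -/

section

variable {E : Type*} {d : ℕ}

theorem embed2_mem_integerLattice (o : ℕ) (v : Fin 2 → ℤ) : embed2 d o v ∈ integerLattice d := by
  refine mem_integerLattice.2 fun i => ?_
  unfold embed2
  split_ifs
  exacts [⟨_, rfl⟩, ⟨_, rfl⟩, ⟨0, Int.cast_zero.symm⟩]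

theorem embed3_mem_integerLattice (v : Fin 3 → ℤ) : embed3 d v ∈ integerLattice d := by
  refine mem_integerLattice.2 fun i => ?_
  unfold embed3
  split_ifs
  exacts [⟨_, rfl⟩, ⟨_, rfl⟩, ⟨_, rfl⟩, ⟨0, Int.cast_zero.symm⟩]

theorem linearCombination_embed2 [AddCommGroup E] [Module ℝ E] {o : ℕ} (ho : o + 1 < d) (B : ℕ → E)
    (v : Fin 2 → ℤ) :
    Fintype.linearCombination ℝ (fun i : Fin d => B i) (embed2 d o v) =
      (v 0 : ℝ) • B o + (v 1 : ℝ) • B (o + 1) := by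
  have hsingle : embed2 d o v =
      Pi.single ⟨o, by omega⟩ (v 0 : ℝ) + Pi.single ⟨o + 1, ho⟩ (v 1 : ℝ) := by
    ext i
    simp only [embed2, Pi.add_apply, Pi.single_apply, Fin.ext_iff]
    split_ifs <;> first | omega | simp
  rw [hsingle, map_add, Fintype.linearCombination_apply_single,
    Fintype.linearCombination_apply_single]

theorem linearCombination_embed3 [AddCommGroup E] [Module ℝ E] (hd : 3 ≤ d) (B : ℕ → E)
    (v : Fin 3 → ℤ) :
    Fintype.linearCombination ℝ (fun i : Fin d => B i) (embed3 d v) =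
      (v 0 : ℝ) • B 0 + (v 1 : ℝ) • B 1 + (v 2 : ℝ) • B 2 := by
  have hsingle : embed3 d v = Pi.single ⟨0, by omega⟩ (v 0 : ℝ) +
      Pi.single ⟨1, by omega⟩ (v 1 : ℝ) + Pi.single ⟨2, by omega⟩ (v 2 : ℝ) := by
    ext i
    simp only [embed3, Pi.add_apply, Pi.single_apply, Fin.ext_iff]
    split_ifs <;> first | omega | simp
  simp only [hsingle, map_add, Fintype.linearCombination_apply_single]

/-- The vertices of the hexagon `V₂` in the plane `x₂ = 0`, together with the two apexes `e₂` and
`u`. -/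
def hexagonBipyramid (u : Fin 3 → ℤ) : Set (Fin 3 → ℤ) :=
  (fun v : Fin 2 → ℤ => ![v 0, v 1, 0]) '' V2v ∪ {![0, 0, 1], u}

theorem Q3v_eq_hexagonBipyramid : Q3v = hexagonBipyramid ![0, 0, -1] := by
  ext x
  simp only [Q3v, hexagonBipyramid, V2v, Set.image_insert_eq, Set.image_singleton, Set.mem_union,
    Set.mem_insert_iff, Set.mem_singleton_iff, Matrix.cons_val_zero, Matrix.cons_val_one]
  tauto

theorem Q3'v_eq_hexagonBipyramid : Q3'v = hexagonBipyramid ![1, 0, -1] := by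
  ext x
  simp only [Q3'v, hexagonBipyramid, V2v, Set.image_insert_eq, Set.image_singleton, Set.mem_union,
    Set.mem_insert_iff, Set.mem_singleton_iff, Matrix.cons_val_zero, Matrix.cons_val_one]
  tauto

theorem finite_V2v : V2v.Finite := by
  simp only [V2v, Set.finite_insert, Set.finite_singleton]

theorem ncard_V2v_le : V2v.ncard ≤ 6 := by
  rw [V2v, Set.ncard_eq_toFinset_card']
  decide

theorem finite_hexagonBipyramid (u : Fin 3 → ℤ) : (hexagonBipyramid u).Finite :=
  (finite_V2v.image _).union (Set.toFinite _)

theorem ncard_hexagonBipyramid_le (u : Fin 3 → ℤ) : (hexagonBipyramid u).ncard ≤ 8 := by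
  have hapexes : ({![0, 0, 1], u} : Set (Fin 3 → ℤ)).ncard ≤ 2 :=
    (Set.ncard_insert_le _ _).trans_eq (by rw [Set.ncard_singleton])
  exact (Set.ncard_union_le _ _).trans <| Nat.add_le_add
    ((Set.ncard_image_le finite_V2v).trans ncard_V2v_le) hapexes

/-- The vertices of the standard model `splitModel3 d Q`. -/
def splitVertices3 (d : ℕ) (Q : Set (Fin 3 → ℤ)) : Set (Fin d → ℝ) :=
  embed3 d '' Q ∪ ⋃ j ∈ Finset.range ((d - 3) / 2), embed2 d (2 * j + 3) '' V2v

section splitVertices3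

variable {Q : Set (Fin 3 → ℤ)}

theorem splitVertices3_subset : splitVertices3 d Q ⊆ integerLattice d := by
  simp only [splitVertices3, Set.union_subset_iff, Set.iUnion_subset_iff, Set.image_subset_iff]
  exact ⟨fun v _ => embed3_mem_integerLattice v, fun j _ v _ => embed2_mem_integerLattice _ v⟩

theorem finite_splitVertices3 (hQ : Q.Finite) : (splitVertices3 d Q).Finite :=
  (hQ.image _).union (Set.Finite.biUnion (Finset.finite_toSet _) fun _ _ => finite_V2v.image _)

theorem ncard_splitVertices3_le (hQ : Q.Finite) :
    (splitVertices3 d Q).ncard ≤ Q.ncard + (d - 3) / 2 * 6 := by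
  refine (Set.ncard_union_le _ _).trans (Nat.add_le_add (Set.ncard_image_le hQ) ?_)
  refine (Finset.set_ncard_biUnion_le _ _).trans ((Finset.sum_le_card_nsmul _ _ 6 fun j _ =>
    (Set.ncard_image_le finite_V2v).trans ncard_V2v_le).trans ?_)
  rw [Finset.card_range, smul_eq_mul]

theorem ncard_splitVertices3_hexagonBipyramid_add_one_le (hd : 3 ≤ d) (hdo : Odd d)
    (u : Fin 3 → ℤ) : (splitVertices3 d (hexagonBipyramid u)).ncard + 1 ≤ 3 * d := by
  have hsplit := ncard_splitVertices3_le (d := d) (finite_hexagonBipyramid u)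
  have hbipyramid := ncard_hexagonBipyramid_le u
  obtain ⟨k, rfl⟩ := hdo
  omega

end splitVertices3

/-- The first coordinate of the plane that carries the `j`-th hexagon of the standard model. -/
def planeOffset : ℕ → ℕ
  | 0 => 0
  | j + 1 => 2 * j + 3

theorem planeOffset_le (j : ℕ) : planeOffset j ≤ 2 * j + 1 := by
  cases j <;> simp only [planeOffset] <;> omega

theorem embed2_planeOffset_mem_splitVertices3 (u : Fin 3 → ℤ) {j : ℕ} (hj : 2 * j + 3 ≤ d)
    {v : Fin 2 → ℤ} (hv : v ∈ V2v) :
    embed2 d (planeOffset j) v ∈ splitVertices3 d (hexagonBipyramid u) := by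
  cases j with
  | zero =>
    refine Or.inl ⟨![v 0, v 1, 0], Or.inl ⟨v, hv, rfl⟩, ?_⟩
    ext i
    simp [embed2, embed3, planeOffset]
  | succ j =>
    have hj : j ∈ Finset.range ((d - 3) / 2) := Finset.mem_range.2 (by omega)
    exact Or.inr (Set.mem_biUnion hj ⟨v, hv, rfl⟩)

/-- The images of the standard basis vectors under the transformation that sends the basis of the
`j`-th plane of the standard model to `f j, g j`, and the remaining basis vector `e₂` to `c`. -/
def splitBasis (c : E) (f g : ℕ → E) : ℕ → E
  | 0 => f 0
  | 1 => g 0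
  | 2 => c
  | k + 3 => if k % 2 = 0 then f (k / 2 + 1) else g (k / 2 + 1)

section splitBasis

variable {c : E} {f g : ℕ → E}

theorem splitBasis_two : splitBasis c f g 2 = c := rfl

theorem splitBasis_planeOffset (j : ℕ) : splitBasis c f g (planeOffset j) = f j := by
  cases j with
  | zero => rfl
  | succ j => simp [planeOffset, splitBasis]

theorem splitBasis_planeOffset_add_one (j : ℕ) :
    splitBasis c f g (planeOffset j + 1) = g j := by
  cases j with
  | zero => rfl
  | succ j =>
    have hdiv : (2 * j + 1) / 2 = j := by omega
    simp [planeOffset, splitBasis, hdiv, Nat.add_mod]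

theorem splitBasis_mem {L : Set E} (hc : c ∈ L) (hf : ∀ j, f j ∈ L) (hg : ∀ j, g j ∈ L) :
    ∀ i, splitBasis c f g i ∈ L
  | 0 => hf 0
  | 1 => hg 0
  | 2 => hc
  | k + 3 => by
    rw [splitBasis]
    split_ifs
    exacts [hf _, hg _]

end splitBasis

theorem exists_mem_V2v [AddCommGroup E] [Module ℝ E] {s t x : E}
    (h : x = t ∨ x = -t ∨ x = s - t) :
    (∃ v ∈ V2v, x = (v 0 : ℝ) • t + (v 1 : ℝ) • (s - t)) ∧
      ∃ v ∈ V2v, x = (v 0 : ℝ) • s + (v 1 : ℝ) • (t - s) := by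
  rcases h with rfl | rfl | rfl
  · exact ⟨⟨![1, 0], by simp [V2v], by simp⟩, ⟨![1, 1], by simp [V2v], by simp⟩⟩
  · exact ⟨⟨![-1, 0], by simp [V2v], by simp⟩, ⟨![-1, -1], by simp [V2v], by simp [neg_add_eq_sub]⟩⟩
  · exact ⟨⟨![0, 1], by simp [V2v], by simp⟩, ⟨![0, -1], by simp [V2v], by simp⟩⟩

theorem sum_smul_mem_integerLattice {ι : Type*} {s : Finset ι} {r : ι → ℝ}
    {w : ι → Fin d → ℝ} (hr : ∀ i ∈ s, r i ∈ realInt) (hw : ∀ i ∈ s, w i ∈ integerLattice d) :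
    ∑ i ∈ s, r i • w i ∈ integerLattice d :=
  sum_mem fun i hi k _ => mul_mem (hr i hi) (hw i hi k trivial)

theorem exists_nat_enumeration (a : E) (R : Finset E) :
    ∃ f : ℕ → E, f 0 = a ∧ (∀ j, f j = a ∨ f j ∈ R) ∧
      ∀ t, t = a ∨ t ∈ R → ∃ j ≤ R.card, f j = t := by
  refine ⟨fun j => (a :: R.toList).getD j a, rfl, fun j => ?_, fun t ht => ?_⟩
  · rw [← Finset.mem_toList, ← List.mem_cons]
    beta_reduce
    rcases lt_or_ge j (a :: R.toList).length with hj | hj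
    · rw [List.getD_eq_getElem _ a hj]
      exact List.getElem_mem hj
    · rw [List.getD_eq_default _ a hj]
      exact List.mem_cons_self
  · rw [← Finset.mem_toList, ← List.mem_cons] at ht
    obtain ⟨j, hj, rfl⟩ := List.getElem_of_mem ht
    rw [List.length_cons, Finset.length_toList] at hj
    exact ⟨j, Nat.le_of_lt_succ hj, List.getD_eq_getElem _ _ _⟩

namespace SimplicialFacet

variable {V : Finset (Fin d → ℝ)} {F : SimplicialFacet V (integerLattice d) d}

theorem IsUnimodular.exists_unimodular (hF : F.IsUnimodular)
    {ψ : (Fin d → ℝ) →ₗ[ℝ] Fin d → ℝ} (hψ : ∀ x ∈ integerLattice d, ψ x ∈ integerLattice d)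
    {W : Set (Fin d → ℝ)} (hW : W ⊆ integerLattice d) (hWV : ψ '' W = V) :
    ∃ φ : (Fin d → ℝ) ≃ₗ[ℝ] (Fin d → ℝ), Unimodular φ ∧
      φ '' convexHull ℝ (V : Set (Fin d → ℝ)) = convexHull ℝ W := by
  have hpre : ∀ v ∈ F.verts, ∃ w ∈ W, ψ w = v := fun v hv =>
    hWV.ge (Finset.mem_coe.2 (F.verts_subset hv))
  choose! w hw hψw using hpre
  have hright : ∀ y, ψ (∑ v ∈ F.verts, F.coord v y • w v) = y := fun y => by
    conv_rhs => rw [← F.sum_coord_smul y]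
    rw [map_sum]
    exact Finset.sum_congr rfl fun v hv => by rw [map_smul, hψw v hv]
  have hsurj : Function.Surjective ψ := fun y => ⟨_, hright y⟩
  have hinj : Function.Injective ψ := LinearMap.injective_iff_surjective.2 hsurj
  let e := LinearEquiv.ofBijective ψ ⟨hinj, hsurj⟩
  have he : ∀ x, IsLP x ↔ IsLP (e x) := fun x => by
    rw [← mem_integerLattice, ← mem_integerLattice]
    refine ⟨hψ x, fun hx => ?_⟩
    rw [show x = ∑ v ∈ F.verts, F.coord v (e x) • w v from hinj (hright _).symm]
    exact sum_smul_mem_integerLattice (fun v hv => hF _ hx v hv)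
      fun v hv => hW (hw v hv)
  refine ⟨e.symm, fun y => by rw [he (e.symm y), e.apply_symm_apply], ?_⟩
  rw [← hWV, ← LinearMap.image_convexHull]
  exact e.toEquiv.symm_image_image _

end SimplicialFacet

namespace SimplicialFacet.IsNormalForm

section

variable [AddCommGroup E] [Module ℝ E] {V : Finset E} {L : AddSubgroup E}
  {F : SimplicialFacet V L d} {σ : E → E} {a c c' : E}

theorem exists_enumeration (h : F.IsNormalForm σ c c') (ha : a ∈ F.verts) (hac : a ≠ c) :
    ∃ f : ℕ → E, f 0 = a ∧ (∀ j, f j ∈ F.verts ∧ f j ≠ c) ∧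
      ∀ t ∈ F.verts, t ≠ c → ∃ j, 2 * j + 3 ≤ d ∧ (t = f j ∨ t = σ (f j)) := by
  set T := F.verts \ {a, σ a, c}
  have hT : ∀ {t}, t ∈ T ↔ t ∈ F.verts ∧ t ≠ a ∧ t ≠ σ a ∧ t ≠ c := by simp [T]
  have hcard : T.card + 3 = d := by
    have hthree : ({a, σ a, c} : Finset E).card = 3 := Finset.card_eq_three.2
      ⟨a, σ a, c, (h.map_ne_self a ha hac).symm, hac, h.map_ne a ha hac, rfl⟩
    rw [← hthree]
    refine (Finset.card_sdiff_add_card_eq_card ?_).trans F.card_verts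
    simp [Finset.insert_subset_iff, ha, h.map_mem a ha hac, h.mem]
  have hmap : ∀ t ∈ T, σ t ∈ T := fun t ht => by
    obtain ⟨htF, hta, htσ, htc⟩ := hT.1 ht
    refine hT.2 ⟨h.map_mem t htF htc, fun heq => htσ ?_, fun heq => hta ?_, h.map_ne t htF htc⟩
    · rw [← heq, h.map_map t htF htc]
    · rw [← h.map_map t htF htc, heq, h.map_map a ha hac]
  obtain ⟨R, hRT, hR, hcover⟩ := exists_transversal_of_involution hmap
    (fun t ht => h.map_map t (hT.1 ht).1 (hT.1 ht).2.2.2)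
    (fun t ht => h.map_ne_self t (hT.1 ht).1 (hT.1 ht).2.2.2)
  obtain ⟨f, hf0, hf, hindex⟩ := exists_nat_enumeration a R
  refine ⟨f, hf0, fun j => ?_, fun t ht htc => ?_⟩
  · rcases hf j with hj | hj
    · exact hj ▸ ⟨ha, hac⟩
    · exact ⟨(hT.1 (hRT hj)).1, (hT.1 (hRT hj)).2.2.2⟩
  · obtain ⟨r, hr, htr⟩ : ∃ r, (r = a ∨ r ∈ R) ∧ (t = r ∨ t = σ r) := by
      by_cases htT : t ∈ T
      · rcases hcover t htT with htR | ⟨r, hr, rfl⟩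
        · exact ⟨t, Or.inr htR, Or.inl rfl⟩
        · exact ⟨r, Or.inr hr, Or.inr rfl⟩
      · rw [hT] at htT
        exact ⟨a, Or.inl rfl, by tauto⟩
    obtain ⟨j, hj, rfl⟩ := hindex r hr
    exact ⟨j, by omega, htr⟩

theorem subset_image_splitVertices3 (hd : 3 ≤ d) (h : F.IsNormalForm σ c c') {f : ℕ → E}
    (hf : ∀ j, f j ∈ F.verts ∧ f j ≠ c)
    (hindex : ∀ t ∈ F.verts, t ≠ c → ∃ j, 2 * j + 3 ≤ d ∧ (t = f j ∨ t = σ (f j)))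
    {u : Fin 3 → ℤ}
    (hc' : c' = (u 0 : ℝ) • f 0 + (u 1 : ℝ) • (σ (f 0) - f 0) + (u 2 : ℝ) • c) :
    (V : Set E) ⊆
      Fintype.linearCombination ℝ (fun i : Fin d => splitBasis c f (fun j => σ (f j) - f j) i) ''
        splitVertices3 d (hexagonBipyramid u) := by
  intro x hx
  rcases h.eq_or_eq_or_exists x hx with rfl | rfl | ⟨t, ht, htc, hxt⟩
  · refine ⟨embed3 d ![0, 0, 1], Or.inl ⟨_, Or.inr (Or.inl rfl), rfl⟩, ?_⟩
    simp [linearCombination_embed3 hd, splitBasis_two]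
  · exact ⟨embed3 d u, Or.inl ⟨_, Or.inr (Or.inr rfl), rfl⟩,
      (linearCombination_embed3 hd _ u).trans hc'.symm⟩
  · obtain ⟨j, hj, v, hv, rfl⟩ : ∃ j, 2 * j + 3 ≤ d ∧ ∃ v ∈ V2v,
        x = (v 0 : ℝ) • f j + (v 1 : ℝ) • (σ (f j) - f j) := by
      obtain ⟨j, hj, rfl | rfl⟩ := hindex t ht htc
      · exact ⟨j, hj, (exists_mem_V2v hxt).1⟩
      · rw [h.map_map _ (hf j).1 (hf j).2] at hxt
        exact ⟨j, hj, (exists_mem_V2v hxt).2⟩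
    have hoffset := planeOffset_le j
    refine ⟨_, embed2_planeOffset_mem_splitVertices3 u hj hv, ?_⟩
    rw [linearCombination_embed2 (by omega), splitBasis_planeOffset,
      splitBasis_planeOffset_add_one]

end

variable {V : Finset (Fin d → ℝ)} {F : SimplicialFacet V (integerLattice d) d}
  {σ : (Fin d → ℝ) → Fin d → ℝ} {a c c' : Fin d → ℝ}

theorem exists_unimodular (hS : FacetSystem V (integerLattice d) d) (hd : 3 ≤ d) (hdo : Odd d)
    (h : F.IsNormalForm σ c c') (ha : a ∈ F.verts) (hac : a ≠ c) {u : Fin 3 → ℤ}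
    (hc' : c' = (u 0 : ℝ) • a + (u 1 : ℝ) • (σ a - a) + (u 2 : ℝ) • c) :
    ∃ φ : (Fin d → ℝ) ≃ₗ[ℝ] (Fin d → ℝ), Unimodular φ ∧
      φ '' convexHull ℝ (V : Set (Fin d → ℝ)) = splitModel3 d (hexagonBipyramid u) := by
  obtain ⟨f, rfl, hf, hindex⟩ := h.exists_enumeration ha hac
  have hlattice : ∀ {v}, v ∈ F.verts → v ∈ integerLattice d := fun hv =>
    hS.mem_lattice _ (F.verts_subset hv)
  have hbasis : ∀ i, splitBasis c f (fun j => σ (f j) - f j) i ∈ integerLattice d :=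
    splitBasis_mem (hlattice h.mem) (fun j => hlattice (hf j).1) fun j =>
      sub_mem (hlattice (h.map_mem _ (hf j).1 (hf j).2)) (hlattice (hf j).1)
  have hfin := finite_splitVertices3 (d := d) (finite_hexagonBipyramid u)
  have himage := Set.eq_of_subset_of_ncard_le (h.subset_image_splitVertices3 hd hf hindex hc')
    ((Set.ncard_image_le hfin).trans <| by
      rw [Set.ncard_coe_finset, ← Nat.add_le_add_iff_right (n := 1), hS.card_add_one]
      exact ncard_splitVertices3_hexagonBipyramid_add_one_le hd hdo u) (hfin.image _)
  refine h.isUnimodular.exists_unimodular (fun x hx => ?_) splitVertices3_subset himage.symm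
  rw [Fintype.linearCombination_apply]
  exact sum_smul_mem_integerLattice (fun i _ => hx i trivial) fun i _ => hbasis i

end SimplicialFacet.IsNormalForm

end

end

/-- a `d`-dimensional simplicial reflexive polytope with `3d-1` vertices,
`d ≥ 3` odd, splits into `(d-3)/2` copies of `V₂` and one copy of `Q₃` or `Q₃'`. -/
theorem stmt1 {d : ℕ} (hd : 3 ≤ d) (hdo : Odd d)
    (P : Set (Fin d → ℝ)) (hP : IsReflexive P) (hs : IsSimplicial P)
    (hcard : (Set.extremePoints ℝ P).ncard = 3 * d - 1) :
    ∃ φ : (Fin d → ℝ) ≃ₗ[ℝ] (Fin d → ℝ), Unimodular φ ∧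
      (φ '' P = splitModel3 d Q3v ∨ φ '' P = splitModel3 d Q3'v) := by
  have : NeZero d := ⟨by omega⟩
  obtain ⟨V, hV, rfl⟩ := hP.exists_isSimplicialReflexive hs
  rw [hV.extremePoints_eq, Set.ncard_coe_finset] at hcard
  have hS := hV.facetSystem (by omega)
  rw [Q3v_eq_hexagonBipyramid, Q3'v_eq_hexagonBipyramid]
  obtain ⟨F, σ, c, c', h, rfl | ⟨a, ha, hac, rfl⟩⟩ := hS.exists_isNormalForm hdo
  · obtain ⟨a, ha, hac⟩ := Finset.exists_mem_ne (by rw [F.card_verts]; omega) c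
    obtain ⟨φ, hφ, himage⟩ := h.exists_unimodular hS hd hdo ha hac (u := ![0, 0, -1]) (by simp)
    exact ⟨φ, hφ, Or.inl himage⟩
  · obtain ⟨φ, hφ, himage⟩ := h.exists_unimodular hS hd hdo ha hac (u := ![1, 0, -1])
      (by simp [sub_eq_add_neg])
    exact ⟨φ, hφ, Or.inr himage⟩
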